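/- arXiv:2109.05758 — 5 statements merged into one kernel-verified Lean document; each statement's English description precedes it below -/
import Mathlib

section
/- Let p ∈ (0,1) be fixed and set a = ⌊2·log_{1/(1−p)} n − 8·log_{1/(1−p)} ln n⌋. With high probability, in G(n,p) the following holds: for every pair of disjoint sets A ⊆ N(1) (the neighborhood of vertex 1) and B ⊆ [n]∖{1}, each of size ⌊n/ln² n⌋, there exists an induced copy of the star K_{1,a−1} in G(n,p) whose central vertex lies in A and whose remaining a−1 vertices all lie in B. -/
open MeasureTheory Filter Real

/-- The index type of potential edges of a graph on `Fin n`. -/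
abbrev EdgeType (n : ℕ) := {e : Sym2 (Fin n) // ¬ e.IsDiag}

/-- The product Bernoulli measure on edge-indicator functions: the binomial
random graph `G(n,p)`. -/
noncomputable def erMeasure (n : ℕ) (p : ℝ) : Measure (EdgeType n → Bool) :=
  Measure.pi fun _ => (PMF.bernoulli (min (Real.toNNReal p) 1) (min_le_right _ _)).toMeasure

/-- The simple graph determined by an edge-indicator function. -/
def graphOf {n : ℕ} (ω : EdgeType n → Bool) : SimpleGraph (Fin n) :=
  SimpleGraph.fromEdgeSet {e | ∃ h : ¬ e.IsDiag, ω ⟨e, h⟩ = true}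

/-- `H` contains a (not necessarily induced) copy of `F`. -/
def ContainsCopy {α β : Type*} (F : SimpleGraph α) (H : SimpleGraph β) : Prop :=
  ∃ f : α → β, Function.Injective f ∧ ∀ ⦃a b⦄, F.Adj a b → H.Adj (f a) (f b)

/-- `H` is `F`-saturated in `G`: `H` is a spanning subgraph of `G` that is `F`-free,
and adding any edge of `G` missing from `H` creates a copy of `F`. -/
def IsSaturatedIn {V : Type*} {α : Type*} (G H : SimpleGraph V) (F : SimpleGraph α) : Prop :=
  H ≤ G ∧ ¬ ContainsCopy F H ∧
    ∀ v w : V, G.Adj v w → ¬ H.Adj v w →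
      ContainsCopy F (H ⊔ SimpleGraph.fromEdgeSet {s(v, w)})

/-- The saturation number `sat(G,F)`: the minimum number of edges of an
`F`-saturated spanning subgraph of `G`. -/
noncomputable def satNum {V α : Type*} (G : SimpleGraph V) (F : SimpleGraph α) : ℕ :=
  sInf {k | ∃ H : SimpleGraph V, IsSaturatedIn G H F ∧ H.edgeSet.ncard = k}

/-- The cycle `C_m`, as a graph on `ZMod m`. -/
def cycGraph (m : ℕ) : SimpleGraph (ZMod m) :=
  SimpleGraph.fromRel (fun a b => a = b + 1)


/-- Bernoulli weight. -/
noncomputable def bwt (p : ℝ) (b : Bool) : ℝ := if b then p else 1 - p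

/-- Expectation of a function of independent Bernoulli bits, as a finite sum. -/
noncomputable def Ex {ι : Type*} [Fintype ι] [DecidableEq ι] (p : ℝ) (f : (ι → Bool) → ℝ) : ℝ :=
  ∑ ω, (∏ i, bwt p (ω i)) * f ω

section generic
variable {ι : Type*} [Fintype ι] [DecidableEq ι] {p : ℝ}

lemma bwt_nonneg (h0 : 0 ≤ p) (h1 : p ≤ 1) (b : Bool) : 0 ≤ bwt p b := by
  unfold bwt; split_ifs <;> linarith

lemma bprod_nonneg (h0 : 0 ≤ p) (h1 : p ≤ 1) (ω : ι → Bool) : 0 ≤ ∏ i, bwt p (ω i) :=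
  Finset.prod_nonneg fun i _ => bwt_nonneg h0 h1 _

lemma Ex_mono (h0 : 0 ≤ p) (h1 : p ≤ 1) {f g : (ι → Bool) → ℝ} (h : ∀ ω, f ω ≤ g ω) :
    Ex p f ≤ Ex p g :=
  Finset.sum_le_sum fun ω _ => mul_le_mul_of_nonneg_left (h ω) (bprod_nonneg h0 h1 ω)

lemma Ex_sub (f g : (ι → Bool) → ℝ) : Ex p (fun ω => f ω - g ω) = Ex p f - Ex p g := by
  simp [Ex, mul_sub, Finset.sum_sub_distrib]

lemma Ex_const_mul (c : ℝ) (f : (ι → Bool) → ℝ) : Ex p (fun ω => c * f ω) = c * Ex p f := by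
  simp only [Ex, Finset.mul_sum]
  exact Finset.sum_congr rfl fun _ _ => by ring

lemma Ex_sum {β : Type*} (s : Finset β) (f : β → (ι → Bool) → ℝ) :
    Ex p (fun ω => ∑ x ∈ s, f x ω) = ∑ x ∈ s, Ex p (f x) := by
  simp only [Ex, Finset.mul_sum]
  exact Finset.sum_comm

lemma Ex_prod (g : ι → Bool → ℝ) :
    Ex p (fun ω => ∏ i, g i (ω i)) = ∏ i, (p * g i true + (1 - p) * g i false) := by
  have h : ∀ i, p * g i true + (1 - p) * g i false = ∑ b ∈ (Finset.univ : Finset Bool), bwt p b * g i b := by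
    intro i; simp [bwt]
  simp only [h]
  rw [Finset.prod_univ_sum]
  simp only [Ex, Finset.prod_mul_distrib, Fintype.piFinset_univ]

lemma Ex_box (F : Finset ι) (c : Bool) [∀ ω : ι → Bool, Decidable (∀ i ∈ F, ω i = c)] :
    Ex p (fun ω => if ∀ i ∈ F, ω i = c then 1 else 0) = (bwt p c) ^ F.card := by
  have h : ∀ ω : ι → Bool, (if ∀ i ∈ F, ω i = c then (1:ℝ) else 0)
      = ∏ i, (if i ∈ F then (if ω i = c then (1:ℝ) else 0) else 1) := by
    intro ω
    split_ifs with h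
    · symm; apply Finset.prod_eq_one; intro i _; split_ifs <;> simp_all
    · push Not at h
      obtain ⟨i, hi, hc⟩ := h
      symm; apply Finset.prod_eq_zero (Finset.mem_univ i); simp [hi, hc]
  simp only [h]
  rw [Ex_prod (fun i b => if i ∈ F then (if b = c then (1:ℝ) else 0) else 1)]
  have : ∀ i, (p * (if i ∈ F then (if true = c then (1:ℝ) else 0) else 1)
     + (1-p) * (if i ∈ F then (if false = c then (1:ℝ) else 0) else 1)) = if i ∈ F then bwt p c else 1 := by
    intro i
    by_cases hi : i ∈ F <;> cases c <;> simp [hi, bwt]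
  simp only [this]
  rw [Finset.prod_ite_mem]; simp

lemma Ex_const (c : ℝ) : Ex (ι := ι) p (fun _ => c) = c := by
  have := Ex_box (p := p) (∅ : Finset ι) true
  simp at this
  have h2 := Ex_const_mul (ι := ι) (p := p) c (fun _ => 1)
  simpa [this] using h2

lemma Ex_exists_ge (h0 : 0 ≤ p) (h1 : p ≤ 1) (f : (ι → Bool) → ℝ) : ∃ ω, Ex p f ≤ f ω := by
  by_contra! h
  obtain ⟨ω₀, -, hω⟩ := Finset.exists_max_image (Finset.univ : Finset (ι → Bool)) f Finset.univ_nonempty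
  have := Ex_mono h0 h1 (fun ω => hω ω (Finset.mem_univ _))
  rw [Ex_const] at this
  exact absurd (h ω₀) (not_lt.mpr this)

lemma Ex_equiv {κ : Type*} [Fintype κ] [DecidableEq κ] (e : ι ≃ κ) (f : (ι → Bool) → ℝ) :
    Ex p f = Ex p (fun ω : κ → Bool => f (fun i => ω (e i))) := by
  unfold Ex
  refine Fintype.sum_equiv (e.arrowCongr (Equiv.refl Bool)) _ _ fun ω => ?_
  congr 1
  · refine Fintype.prod_equiv e _ _ fun i => ?_
    simp
  · congr 1; ext i; simp

/-- `f` changes by at most one when a single bit is changed. -/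
def Lip (f : (ι → Bool) → ℝ) : Prop :=
  ∀ ω ω' : ι → Bool, ∀ e, (∀ i, i ≠ e → ω i = ω' i) → f ω ≤ f ω' + 1

lemma Ex_succ {N : ℕ} (f : (Fin (N+1) → Bool) → ℝ) :
    Ex p f = p * Ex p (fun ω => f (Fin.cons true ω)) + (1-p) * Ex p (fun ω => f (Fin.cons false ω)) := by
  unfold Ex
  rw [← (Fin.consEquiv (fun _ : Fin (N+1) => Bool)).sum_comp, Fintype.sum_prod_type]
  simp [Fin.consEquiv, Fin.prod_univ_succ, bwt, Finset.mul_sum, mul_assoc]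

lemma two_point (h0 : 0 ≤ p) (h1 : p ≤ 1) {s x y : ℝ} (hs : |s| ≤ 1) (hxy : |x - y| ≤ 1) :
    p * exp (s * x) + (1 - p) * exp (s * y) ≤ exp (s * (p * x + (1-p) * y) + s^2) := by
  have hq : 0 ≤ 1 - p := by linarith
  set m := p * x + (1-p) * y with hm
  have e1 : s * x = s * m + s * ((1-p) * (x - y)) := by rw [hm]; ring
  have e2 : s * y = s * m + s * (-(p * (x - y))) := by rw [hm]; ring
  have key : ∀ u : ℝ, |u| ≤ 1 → exp (s * u) ≤ 1 + s * u + s ^ 2 := by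
    intro u hu
    have h2 : |s * u| ≤ 1 := by rw [abs_mul]; exact mul_le_one₀ hs (abs_nonneg _) hu
    have h3 := (abs_le.mp (Real.abs_exp_sub_one_sub_id_le h2)).2
    have h4 : (s * u)^2 ≤ s^2 := by
      rw [mul_pow]
      have : u^2 ≤ 1 := by rw [← sq_abs]; exact pow_le_one₀ (abs_nonneg _) hu
      nlinarith [sq_nonneg s]
    linarith
  have k1 := key ((1-p)*(x-y)) (by
    rw [abs_mul, abs_of_nonneg hq]; exact mul_le_one₀ (by linarith) (abs_nonneg _) hxy)
  have k2 := key (-(p*(x-y))) (by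
    rw [abs_neg, abs_mul, abs_of_nonneg h0]; exact mul_le_one₀ (by linarith) (abs_nonneg _) hxy)
  rw [e1, e2, exp_add, exp_add, exp_add]
  have k3 : 1 + s^2 ≤ exp (s^2) := by have := add_one_le_exp (s^2); linarith
  have hE := exp_pos (s*m)
  have : p * exp (s * ((1-p)*(x-y))) + (1-p) * exp (s * (-(p*(x-y)))) ≤ exp (s^2) := by
    refine le_trans ?_ k3
    nlinarith [mul_le_mul_of_nonneg_left k1 h0, mul_le_mul_of_nonneg_left k2 hq]
  nlinarith [mul_le_mul_of_nonneg_left this hE.le]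

lemma mgf_fin (h0 : 0 ≤ p) (h1 : p ≤ 1) {s : ℝ} (hs : |s| ≤ 1) (N : ℕ) :
    ∀ f : (Fin N → Bool) → ℝ, Lip f → Ex p (fun ω => exp (s * f ω)) ≤ exp (s * Ex p f + N * s^2) := by
  induction N with
  | zero =>
    intro f _
    simp [Ex]
  | succ N ih =>
    intro f hf
    have hq : 0 ≤ 1 - p := by linarith
    have hl : ∀ b, Lip (fun ω : Fin N → Bool => f (Fin.cons b ω)) := by
      intro b ω ω' e h
      apply hf _ _ e.succ
      intro i hi
      rcases Fin.eq_zero_or_eq_succ i with rfl | ⟨j, rfl⟩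
      · simp
      · simp only [Fin.cons_succ]
        apply h
        rintro rfl
        exact hi rfl
    have hb : ∀ b c, Ex p (fun ω : Fin N → Bool => f (Fin.cons b ω)) ≤ Ex p (fun ω => f (Fin.cons c ω)) + 1 := by
      intro b c
      have : Ex p (fun ω : Fin N → Bool => f (Fin.cons b ω) - f (Fin.cons c ω)) ≤ Ex (ι := Fin N) p (fun _ => 1) := by
        apply Ex_mono h0 h1
        intro ω
        have := hf (Fin.cons b ω) (Fin.cons c ω) 0 (by
          intro i hi
          obtain ⟨j, rfl⟩ := Fin.exists_succ_eq.mpr hi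
          simp)
        linarith
      rw [Ex_sub, Ex_const] at this
      linarith
    rw [Ex_succ, Ex_succ f]
    have h2 := two_point h0 h1 hs (x := Ex p (fun ω : Fin N → Bool => f (Fin.cons true ω)))
      (y := Ex p (fun ω : Fin N → Bool => f (Fin.cons false ω)))
      (abs_le.mpr ⟨by linarith [hb false true], by linarith [hb true false]⟩)
    have i1 := ih _ (hl true)
    have i2 := ih _ (hl false)
    rw [exp_add] at i1 i2
    have hE := exp_pos (N * s^2)
    calc _ ≤ p * (exp (s * Ex p (fun ω : Fin N → Bool => f (Fin.cons true ω))) * exp (N * s^2))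
          + (1-p) * (exp (s * Ex p (fun ω : Fin N → Bool => f (Fin.cons false ω))) * exp (N * s^2)) := by
            gcongr
      _ = exp (N * s^2) * (p * exp (s * Ex p (fun ω : Fin N → Bool => f (Fin.cons true ω)))
          + (1-p) * exp (s * Ex p (fun ω : Fin N → Bool => f (Fin.cons false ω)))) := by ring
      _ ≤ _ := by
        refine (mul_le_mul_of_nonneg_left h2 hE.le).trans ?_
        rw [← exp_add]
        apply le_of_eq; congr 1; push_cast; ring

lemma mgf (h0 : 0 ≤ p) (h1 : p ≤ 1) {s : ℝ} (hs : |s| ≤ 1)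
    (f : (ι → Bool) → ℝ) (hf : Lip f) :
    Ex p (fun ω => exp (s * f ω)) ≤ exp (s * Ex p f + Fintype.card ι * s^2) := by
  have e := Fintype.equivFin ι
  rw [Ex_equiv e, Ex_equiv e f]
  apply mgf_fin h0 h1 hs
  intro ω ω' j h
  apply hf _ _ (e.symm j)
  intro i hi
  apply h
  rintro rfl
  simp at hi

open Classical in
lemma lower_tail (h0 : 0 ≤ p) (h1 : p ≤ 1) {s : ℝ} (hs0 : 0 ≤ s) (hs : s ≤ 1)
    (f : (ι → Bool) → ℝ) (hf : Lip f) (x t : ℝ) (hx : x + t ≤ Ex p f) :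
    Ex p (fun ω => if f ω ≤ x then 1 else 0) ≤ exp (Fintype.card ι * s^2 - s * t) := by
  have h := mgf h0 h1 (s := -s) (by rwa [abs_neg, abs_of_nonneg hs0]) f hf
  have h2 : Ex p (fun ω => if f ω ≤ x then (1:ℝ) else 0) ≤ Ex p (fun ω => exp (s * x) * exp (-s * f ω)) := by
    apply Ex_mono h0 h1
    intro ω
    split_ifs with hh
    · rw [← exp_add]; apply one_le_exp; nlinarith
    · positivity
  rw [Ex_const_mul] at h2
  refine h2.trans ((mul_le_mul_of_nonneg_left h (exp_pos _).le).trans ?_)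
  rw [← exp_add]
  apply exp_le_exp.mpr
  nlinarith

/-- Packing number. -/
noncomputable def packNum {α : Type*} [DecidableEq α] (R : Finset α) (ed : α → Finset ι) (ω : ι → Bool) : ℕ := by
  classical
  exact (R.powerset.filter fun F => (∀ S ∈ F, ∀ i ∈ ed S, ω i = false) ∧
    ∀ S ∈ F, ∀ T ∈ F, S ≠ T → Disjoint (ed S) (ed T)).sup Finset.card

lemma le_packNum {α : Type*} [DecidableEq α] {R : Finset α} {ed : α → Finset ι} {ω : ι → Bool}
    {F : Finset α} (h1 : F ⊆ R) (h2 : ∀ S ∈ F, ∀ i ∈ ed S, ω i = false)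
    (h3 : ∀ S ∈ F, ∀ T ∈ F, S ≠ T → Disjoint (ed S) (ed T)) : F.card ≤ packNum R ed ω := by
  classical
  unfold packNum
  exact Finset.le_sup (f := Finset.card) (by simp only [Finset.mem_filter, Finset.mem_powerset]; exact ⟨h1, h2, h3⟩)

lemma exists_packNum {α : Type*} [DecidableEq α] (R : Finset α) (ed : α → Finset ι) (ω : ι → Bool) :
    ∃ F ⊆ R, (∀ S ∈ F, ∀ i ∈ ed S, ω i = false) ∧
    (∀ S ∈ F, ∀ T ∈ F, S ≠ T → Disjoint (ed S) (ed T)) ∧ F.card = packNum R ed ω := by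
  classical
  have := Finset.exists_mem_eq_sup (R.powerset.filter fun F => (∀ S ∈ F, ∀ i ∈ ed S, ω i = false) ∧
    ∀ S ∈ F, ∀ T ∈ F, S ≠ T → Disjoint (ed S) (ed T)) ⟨∅, by simp⟩ Finset.card
  obtain ⟨F, hF, h⟩ := this
  simp only [Finset.mem_filter, Finset.mem_powerset] at hF
  refine ⟨F, hF.1, hF.2.1, hF.2.2, ?_⟩
  unfold packNum
  rw [← h]

lemma packNum_lip {α : Type*} [DecidableEq α] (R : Finset α) (ed : α → Finset ι) :
    Lip (fun ω => (packNum R ed ω : ℝ)) := by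
  intro ω ω' e h
  obtain ⟨F, hR, h1, h2, h3⟩ := exists_packNum R ed ω
  have a1 : (F.filter fun S => e ∉ ed S).card ≤ packNum R ed ω' := by
    apply le_packNum ((Finset.filter_subset _ _).trans hR)
    · intro S hS i hi
      rw [Finset.mem_filter] at hS
      rw [← h i (by rintro rfl; exact hS.2 hi)]
      exact h1 S hS.1 i hi
    · intro S hS T hT
      exact h2 S (Finset.mem_filter.mp hS).1 T (Finset.mem_filter.mp hT).1
  have a2 : (F.filter fun S => ¬ e ∉ ed S).card ≤ 1 := by
    rw [Finset.card_le_one]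
    intro S hS T hT
    simp only [Finset.mem_filter, not_not] at hS hT
    by_contra hne
    exact Finset.disjoint_left.mp (h2 S hS.1 T hT.1 hne) hS.2 hT.2
  have a3 := Finset.card_filter_add_card_filter_not (s := F) (fun S => e ∉ ed S)
  have : packNum R ed ω ≤ packNum R ed ω' + 1 := by omega
  show (packNum R ed ω : ℝ) ≤ (packNum R ed ω' : ℝ) + 1
  exact_mod_cast this

open Classical in
lemma packNum_ge {α : Type*} [DecidableEq α] (R : Finset α) (ed : α → Finset ι) (ω : ι → Bool) :
    (∑ S ∈ R, if ∀ i ∈ ed S, ω i = false then (1:ℝ) else 0)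
      - ∑ P ∈ (R ×ˢ R).filter (fun P => P.1 ≠ P.2 ∧ ¬ Disjoint (ed P.1) (ed P.2)),
        (if ∀ i ∈ ed P.1 ∪ ed P.2, ω i = false then (1:ℝ) else 0) ≤ packNum R ed ω := by
  set F := R.filter fun S => ∀ i ∈ ed S, ω i = false with hF
  set Q := ((R ×ˢ R).filter (fun P => P.1 ≠ P.2 ∧ ¬ Disjoint (ed P.1) (ed P.2))).filter
     (fun P => ∀ i ∈ ed P.1 ∪ ed P.2, ω i = false) with hQ
  rw [Finset.sum_boole, Finset.sum_boole]
  set G := F.filter fun S => ∀ T ∈ F, S ≠ T → Disjoint (ed S) (ed T) with hG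
  have h1 : G.card ≤ packNum R ed ω := by
    apply le_packNum
    · exact (Finset.filter_subset _ _).trans (Finset.filter_subset _ _)
    · intro S hS
      exact (Finset.mem_filter.mp (Finset.mem_filter.mp hS).1).2
    · intro S hS T hT
      exact (Finset.mem_filter.mp hS).2 T (Finset.mem_filter.mp hT).1
  have h2 : (F \ G).card ≤ Q.card := by
    refine le_trans (Finset.card_le_card ?_) (Finset.card_image_le (s := Q) (f := Prod.fst))
    intro S hS
    rw [Finset.mem_sdiff] at hS
    obtain ⟨hS, hT⟩ := hS
    rw [hG, Finset.mem_filter, not_and] at hT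
    have hT := hT hS
    push Not at hT
    obtain ⟨T, hT, hne, hd⟩ := hT
    rw [Finset.mem_image]
    rw [hF, Finset.mem_filter] at hS hT
    refine ⟨(S, T), ?_, rfl⟩
    simp only [hQ, Finset.mem_filter, Finset.mem_product, Finset.mem_union]
    refine ⟨⟨⟨hS.1, hT.1⟩, hne, hd⟩, ?_⟩
    rintro i (hi | hi)
    · exact hS.2 i hi
    · exact hT.2 i hi
  have h3 := Finset.card_sdiff_add_card_eq_card (Finset.filter_subset (fun S => ∀ T ∈ F, S ≠ T → Disjoint (ed S) (ed T)) F)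
  rw [← hG] at h3
  have : (F.card : ℝ) ≤ packNum R ed ω + Q.card := by
    have : F.card ≤ packNum R ed ω + Q.card := by omega
    exact_mod_cast this
  linarith

open Classical in
/-- A substitute for Janson's inequality. -/
lemma janson_like (h0 : 0 ≤ p) (h1 : p ≤ 1) {s : ℝ} (hs0 : 0 ≤ s) (hs : s ≤ 1)
    {α : Type*} [Fintype α] [DecidableEq α] (R : Finset α) (ed : α → Finset ι) (θ t : ℝ)
    (hθ0 : 0 ≤ θ) (hθ1 : θ ≤ 1)
    (ht : t ≤ θ * (∑ S ∈ R, (1-p)^(ed S).card)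
      - θ^2 * ∑ P ∈ (R ×ˢ R).filter (fun P => ¬ Disjoint (ed P.1) (ed P.2)), (1-p)^(ed P.1 ∪ ed P.2).card) :
    Ex p (fun ω => if ∀ S ∈ R, ∃ i ∈ ed S, ω i = true then 1 else 0) ≤
      exp (Fintype.card ι * s^2 - s * t) := by
  have hq : 0 ≤ 1 - p := by linarith
  -- choose a good subfamily
  set D := (R ×ˢ R).filter (fun P : α × α => P.1 ≠ P.2 ∧ ¬ Disjoint (ed P.1) (ed P.2)) with hD
  obtain ⟨c, hc⟩ := Ex_exists_ge hθ0 hθ1 (fun c : α → Bool =>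
    (∑ S ∈ R, (1-p)^(ed S).card * (if ∀ i ∈ ({S} : Finset α), c i = true then 1 else 0)) -
    ∑ P ∈ D, (1-p)^(ed P.1 ∪ ed P.2).card * (if ∀ i ∈ ({P.1, P.2} : Finset α), c i = true then 1 else 0))
  rw [Ex_sub, Ex_sum, Ex_sum] at hc
  simp only [Ex_const_mul, Ex_box] at hc
  have e1 : ∑ P ∈ D, (1-p)^(ed P.1 ∪ ed P.2).card * bwt θ true ^ ({P.1, P.2} : Finset α).card
     = θ^2 * ∑ P ∈ D, (1-p)^(ed P.1 ∪ ed P.2).card := by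
    rw [Finset.mul_sum]
    refine Finset.sum_congr rfl fun P hP => ?_
    rw [hD, Finset.mem_filter] at hP
    rw [Finset.card_pair hP.2.1]; simp [bwt]; ring
  have e2 : ∑ S ∈ R, (1-p)^(ed S).card * bwt θ true ^ ({S} : Finset α).card = θ * ∑ S ∈ R, (1-p)^(ed S).card := by
    rw [Finset.mul_sum]
    refine Finset.sum_congr rfl fun P hP => ?_
    simp [bwt]; ring
  rw [e1, e2] at hc
  have e3 : ∑ P ∈ D, (1-p)^(ed P.1 ∪ ed P.2).card ≤
      ∑ P ∈ (R ×ˢ R).filter (fun P => ¬ Disjoint (ed P.1) (ed P.2)), (1-p)^(ed P.1 ∪ ed P.2).card := by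
    apply Finset.sum_le_sum_of_subset_of_nonneg
    · intro P hP
      rw [hD, Finset.mem_filter] at hP
      rw [Finset.mem_filter]; exact ⟨hP.1, hP.2.2⟩
    · intros; positivity
  have e4 := mul_le_mul_of_nonneg_left e3 (sq_nonneg θ)
  set R' := R.filter fun S => c S = true with hR'
  have hE : t ≤ Ex p (fun ω => (packNum R' ed ω : ℝ)) := by
    refine le_trans ?_ (Ex_mono h0 h1 (packNum_ge R' ed))
    rw [Ex_sub, Ex_sum, Ex_sum]
    simp only [Ex_box]
    refine (ht.trans (by linarith)).trans (hc.trans (le_of_eq ?_))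
    congr 1
    · rw [hR', Finset.sum_filter]
      refine Finset.sum_congr rfl fun S _ => ?_
      simp [bwt]
    · have : (R' ×ˢ R').filter (fun P : α × α => P.1 ≠ P.2 ∧ ¬ Disjoint (ed P.1) (ed P.2))
          = D.filter fun P => c P.1 = true ∧ c P.2 = true := by
        ext P; simp only [hR', hD, Finset.mem_filter, Finset.mem_product]; tauto
      rw [this]; conv_rhs => rw [Finset.sum_filter]
      refine Finset.sum_congr rfl fun S _ => ?_
      simp [bwt]
  refine le_trans (Ex_mono h0 h1 (fun ω => ?_)) (lower_tail h0 h1 hs0 hs _ (packNum_lip R' ed) 0 t (by linarith))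
  by_cases h : ∀ S ∈ R, ∃ i ∈ ed S, ω i = true
  · rw [if_pos h, if_pos]
    obtain ⟨F, hR, h1, h2, h3⟩ := exists_packNum R' ed ω
    rw [← h3]
    have : F = ∅ := by
      rw [Finset.eq_empty_iff_forall_notMem]
      intro S hS
      obtain ⟨i, hi, hω⟩ := h S (Finset.mem_filter.mp (hR hS)).1
      simp [h1 S hS i hi] at hω
    simp [this]
  · rw [if_neg h]; split_ifs <;> norm_num

end generic

open Classical in
lemma er_eq {n : ℕ} {p : ℝ} (h0 : 0 ≤ p) (h1 : p ≤ 1) (S : Set (EdgeType n → Bool)) :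
    erMeasure n p S = ENNReal.ofReal (Ex p (fun ω => if ω ∈ S then 1 else 0)) := by
  have hs : ∀ ω : EdgeType n → Bool, erMeasure n p {ω} = ENNReal.ofReal (∏ i, bwt p (ω i)) := by
    intro ω
    unfold erMeasure
    rw [Measure.pi_singleton, ENNReal.ofReal_prod_of_nonneg (fun i _ => bwt_nonneg h0 h1 _)]
    refine Finset.prod_congr rfl fun i _ => ?_
    rw [PMF.toMeasure_apply_singleton _ _ (MeasurableSet.singleton _)]
    have hm : min (Real.toNNReal p) 1 = Real.toNNReal p := by
      apply min_eq_left; simpa using h1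
    have hq : Real.toNNReal (1 - p) = 1 - Real.toNNReal p := by
      ext
      rw [NNReal.coe_sub (by simpa using h1)]
      simp [h0, h1]
    cases ω i <;> simp [bwt, PMF.bernoulli_apply, hm, ENNReal.ofReal, hq]
  have h2 : S = ((Finset.univ.filter fun ω => ω ∈ S : Finset (EdgeType n → Bool)) : Set (EdgeType n → Bool)) := by
    ext; simp
  conv_lhs => rw [h2]
  rw [← sum_measure_singleton]
  simp only [hs]
  rw [← ENNReal.ofReal_sum_of_nonneg (fun i _ => bprod_nonneg h0 h1 _), Finset.sum_filter]
  simp [Ex]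

/-- potential edges inside `S` -/
def ed {n : ℕ} (S : Finset (Fin n)) : Finset (EdgeType n) :=
  Finset.univ.filter fun e => e.1 ∈ S.sym2

lemma ed_inter {n : ℕ} (S T : Finset (Fin n)) : ed S ∩ ed T = ed (S ∩ T) := by
  ext ⟨e, he⟩
  simp only [ed, Finset.mem_inter, Finset.mem_filter, Finset.mem_univ, true_and, Finset.mem_sym2_iff]
  grind

lemma ed_card {n : ℕ} (S : Finset (Fin n)) : (ed S).card = S.card.choose 2 := by
  rw [← Sym2.card_image_offDiag, ← Finset.card_map ⟨Subtype.val, Subtype.val_injective⟩]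
  congr 1
  ext e
  induction e with | _ x y
  simp only [ed, Finset.mem_map, Finset.mem_filter, Finset.mem_univ, true_and, Finset.mem_image, Finset.mem_offDiag,
    Function.Embedding.coeFn_mk, Subtype.exists, Prod.exists]
  constructor
  · rintro ⟨e, he, h, rfl⟩
    simp at he h
    exact ⟨x, y, ⟨h.1, h.2, he⟩, rfl⟩
  · rintro ⟨a, b, ⟨h1, h2, h3⟩, h⟩
    refine ⟨s(x,y), ?_, ?_, rfl⟩
    · rw [← h]; simpa using h3
    · rw [← h]; simp [h1, h2]

lemma count_super {n : ℕ} (M S : Finset (Fin n)) (hS : S ⊆ M) (k i : ℕ) (hk : S.card = k) :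
    ((M.powersetCard k).filter fun T => (S ∩ T).card = i).card ≤ k.choose i * (M.card - i).choose (k - i) := by
  classical
  have : ((M.powersetCard k).filter fun T => (S ∩ T).card = i) ⊆
     (S.powersetCard i).biUnion fun I => ((M \ I).powersetCard (k - i)).image (fun U => I ∪ U) := by
    intro T hT
    simp only [Finset.mem_filter, Finset.mem_powersetCard] at hT
    obtain ⟨⟨h1, h2⟩, h3⟩ := hT
    simp only [Finset.mem_biUnion, Finset.mem_image, Finset.mem_powersetCard]
    refine ⟨S ∩ T, ⟨Finset.inter_subset_left, h3⟩, T \ (S ∩ T), ⟨Finset.sdiff_subset_sdiff h1 le_rfl, ?_⟩, ?_⟩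
    · rw [Finset.card_sdiff_of_subset Finset.inter_subset_right, h2, h3]
    · exact Finset.union_sdiff_of_subset Finset.inter_subset_right
  refine (Finset.card_le_card this).trans (Finset.card_biUnion_le.trans ?_)
  rw [← hk, ← Finset.card_powersetCard, ← smul_eq_mul]
  apply Finset.sum_le_card_nsmul
  intro I hI
  rw [Finset.mem_powersetCard] at hI
  refine Finset.card_image_le.trans ?_
  rw [Finset.card_powersetCard, Finset.card_sdiff_of_subset (hI.1.trans hS), hI.2]

open Classical in
lemma indep_bound {n : ℕ} {p : ℝ} (h0 : 0 < p) (h1 : p < 1) (M : Finset (Fin n)) (k : ℕ) (hk : 2 ≤ k)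
    (hkm : k ≤ M.card) (ρ t s : ℝ) (ht : 0 ≤ t) (hs0 : 0 ≤ s) (hs1 : s ≤ 1)
    (hρ : ∑ i ∈ Finset.Icc 2 k, (k.choose i : ℝ) * ((k.choose i : ℝ) / (M.card.choose i)) * (1 / (1-p)) ^ (i.choose 2) ≤ ρ)
    (hρt : 4 * ρ * t ≤ 1) :
    Ex p (fun ω : EdgeType n → Bool => if ∀ S ∈ M.powersetCard k, ∃ i ∈ ed S, ω i = true then 1 else 0) ≤
      exp (Fintype.card (EdgeType n) * s^2 - s * t) := by
  have hq : 0 < 1 - p := by linarith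
  set q := 1 - p with hqd
  set m := M.card with hm
  set c := k.choose 2 with hc
  set μ := ∑ S ∈ M.powersetCard k, q ^ (ed S).card with hμ
  set Δ := ∑ P ∈ (M.powersetCard k ×ˢ M.powersetCard k).filter (fun P => ¬ Disjoint (ed P.1) (ed P.2)),
      q ^ (ed P.1 ∪ ed P.2).card with hΔ
  have hμ1 : μ = m.choose k * q ^ c := by
    rw [hμ, Finset.sum_congr rfl (g := fun _ => q ^ c)]
    · simp [Finset.card_powersetCard, hm]
    · intro S hS; rw [ed_card, (Finset.mem_powersetCard.mp hS).2]
  have hmk : (0:ℝ) < m.choose k := by exact_mod_cast Nat.choose_pos hkm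
  have hμ0 : 0 < μ := by rw [hμ1]; positivity
  have hμΔ : μ ≤ Δ := by
    have : (M.powersetCard k).image (fun S => (S, S)) ⊆
       (M.powersetCard k ×ˢ M.powersetCard k).filter (fun P => ¬ Disjoint (ed P.1) (ed P.2)) := by
      intro P hP
      obtain ⟨S, hS, rfl⟩ := Finset.mem_image.mp hP
      simp only [Finset.mem_filter, Finset.mem_product]
      refine ⟨⟨hS, hS⟩, ?_⟩
      rw [Finset.disjoint_self_iff_empty, ← Finset.card_eq_zero, ed_card, (Finset.mem_powersetCard.mp hS).2]
      exact (Nat.choose_pos hk).ne'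
    refine le_trans ?_ (Finset.sum_le_sum_of_subset_of_nonneg this (fun _ _ _ => by positivity))
    rw [Finset.sum_image (by intro a _ b _ h; exact (Prod.mk.inj h).1)]
    simp [hμ]
  have hΔ1 : Δ ≤ μ^2 * ρ := by
    have hS : ∀ S ∈ M.powersetCard k, ∑ T ∈ M.powersetCard k,
        (if ¬ Disjoint (ed S) (ed T) then q ^ (ed S ∪ ed T).card else 0) ≤
        q ^ c * (q ^ c * (m.choose k * ρ)) := by
      intro S hS
      rw [Finset.mem_powersetCard] at hS
      have hT : ∀ T ∈ M.powersetCard k,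
          (if ¬ Disjoint (ed S) (ed T) then q ^ (ed S ∪ ed T).card else 0) ≤
          q ^ c * q ^ c * ∑ i ∈ Finset.Icc 2 k, (if (S ∩ T).card = i then (1/q) ^ (i.choose 2) else 0) := by
        intro T hT
        rw [Finset.mem_powersetCard] at hT
        by_cases hd : ¬ Disjoint (ed S) (ed T)
        · rw [if_pos hd]
          have h2 : 2 ≤ (S ∩ T).card := by
            by_contra hlt
            apply hd
            rw [Finset.disjoint_iff_inter_eq_empty, ed_inter, ← Finset.card_eq_zero, ed_card]
            exact Nat.choose_eq_zero_of_lt (by omega)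
          have h3 : (S ∩ T).card ≤ k := by rw [← hS.2]; exact Finset.card_le_card Finset.inter_subset_left
          rw [Finset.sum_ite_eq, if_pos (Finset.mem_Icc.mpr ⟨h2, h3⟩)]
          have h4 := Finset.card_union_add_card_inter (ed S) (ed T)
          rw [ed_inter, ed_card, ed_card, ed_card, hS.2, hT.2] at h4
          rw [one_div, inv_pow, ← div_eq_mul_inv, le_div_iff₀ (by positivity), ← pow_add, ← pow_add, h4]
        · rw [if_neg hd]
          have : 0 ≤ ∑ i ∈ Finset.Icc 2 k, (if (S ∩ T).card = i then (1/q) ^ (i.choose 2) else 0) :=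
            Finset.sum_nonneg fun i _ => by split_ifs <;> positivity
          positivity
      refine (Finset.sum_le_sum hT).trans ?_
      rw [← Finset.mul_sum, ← mul_assoc]
      apply mul_le_mul_of_nonneg_left _ (by positivity)
      rw [Finset.sum_comm]
      refine le_trans ?_ (mul_le_mul_of_nonneg_left hρ hmk.le)
      rw [Finset.mul_sum]
      refine Finset.sum_le_sum fun i hi => ?_
      rw [Finset.mem_Icc] at hi
      rw [← Finset.sum_filter, Finset.sum_const, nsmul_eq_mul, ← mul_assoc]
      apply mul_le_mul_of_nonneg_right _ (by positivity)
      have hcs := count_super M S hS.1 k i hS.2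
      have hch := Nat.choose_mul (n := m) hi.2
      have hmi : (0:ℝ) < m.choose i := by exact_mod_cast Nat.choose_pos (hi.2.trans hkm)
      have e1 : (m.choose k : ℝ) * ((k.choose i : ℝ) * ((k.choose i : ℝ) / (m.choose i)))
         = (k.choose i * (m - i).choose (k - i) : ℕ) := by
        have : (m.choose k : ℝ) * k.choose i = m.choose i * (m - i).choose (k - i) := by exact_mod_cast hch
        push_cast
        field_simp
        linear_combination (k.choose i : ℝ) * this
      rw [e1]
      exact_mod_cast hcs
    rw [hΔ, Finset.sum_filter, Finset.sum_product]
    refine (Finset.sum_le_sum hS).trans (le_of_eq ?_)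
    rw [Finset.sum_const, Finset.card_powersetCard, hμ1, nsmul_eq_mul]
    ring
  have hρμ : 1 ≤ μ * ρ := by
    have : μ * 1 ≤ μ * (μ * ρ) := by nlinarith
    exact le_of_mul_le_mul_left this hμ0
  have hρ0 : 0 < ρ := by
    by_contra hneg
    nlinarith
  have hθ : 2 * t ≤ μ := by
    nlinarith
  apply janson_like h0.le h1.le hs0 hs1 (M.powersetCard k) ed (2 * t / μ) t (by positivity)
    ((div_le_one hμ0).mpr hθ)
  show t ≤ 2 * t / μ * μ - (2 * t / μ)^2 * Δ
  have a1 : (2 * t / μ)^2 * Δ ≤ (2 * t / μ)^2 * (μ^2 * ρ) := mul_le_mul_of_nonneg_left hΔ1 (by positivity)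
  have a2 : (2 * t / μ)^2 * (μ^2 * ρ) = 4 * ρ * t * t := by field_simp; ring
  have a3 : 2 * t / μ * μ = 2 * t := by field_simp
  nlinarith

lemma adj_iff {n : ℕ} (ω : EdgeType n → Bool) (x y : Fin n) :
    (graphOf ω).Adj x y ↔ ∃ h : ¬ (s(x,y)).IsDiag, ω ⟨s(x,y), h⟩ = true := by
  unfold graphOf
  rw [SimpleGraph.fromEdgeSet_adj]
  constructor
  · rintro ⟨h, -⟩; exact h
  · rintro ⟨h, h2⟩; exact ⟨⟨h, h2⟩, by simpa using h⟩

/-- potential edges between `A` and `B` -/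
def crossE {n : ℕ} (A B : Finset (Fin n)) : Finset (EdgeType n) :=
  Finset.univ.filter fun e => e.1 ∈ (A ×ˢ B).image (Function.uncurry Sym2.mk)

lemma crossE_card {n : ℕ} (A B : Finset (Fin n)) (h : Disjoint A B) :
    (crossE A B).card = A.card * B.card := by
  have hi : Set.InjOn (Function.uncurry Sym2.mk) ((A ×ˢ B : Finset (Fin n × Fin n)) : Set (Fin n × Fin n)) := by
    rintro ⟨a, b⟩ hab ⟨c, d⟩ hcd he
    simp only [Finset.coe_product, Set.mem_prod, Finset.mem_coe] at hab hcd
    simp only [Function.uncurry, Sym2.eq_iff] at he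
    rcases he with ⟨rfl, rfl⟩ | ⟨rfl, rfl⟩
    · rfl
    · exact absurd hcd.2 (Finset.disjoint_left.mp h hab.1)
  rw [← Finset.card_product, ← Finset.card_image_of_injOn hi,
    ← Finset.card_map ⟨Subtype.val, Subtype.val_injective⟩]
  congr 1
  ext e
  simp only [crossE, Finset.mem_map, Finset.mem_filter, Finset.mem_univ, true_and,
    Function.Embedding.coeFn_mk]
  constructor
  · rintro ⟨e, he, rfl⟩; exact he
  · intro he
    refine ⟨⟨e, ?_⟩, he, rfl⟩
    simp only [Finset.mem_image, Finset.mem_product] at he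
    obtain ⟨⟨a, b⟩, hab, rfl⟩ := he
    simp only [Function.uncurry, Sym2.mk_isDiag_iff]
    rintro rfl
    exact Finset.disjoint_left.mp h hab.1 hab.2

/-- number of present edges between `A` and `B` -/
noncomputable def crossN {n : ℕ} (A B : Finset (Fin n)) (ω : EdgeType n → Bool) : ℝ :=
  ∑ e ∈ crossE A B, if ∀ i ∈ ({e} : Finset (EdgeType n)), ω i = true then 1 else 0

lemma crossN_Ex {n : ℕ} {p : ℝ} (A B : Finset (Fin n)) (h : Disjoint A B) :
    Ex p (crossN A B) = p * (A.card * B.card) := by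
  unfold crossN
  rw [Ex_sum]
  simp only [Ex_box]
  simp [bwt, crossE_card A B h]
  ring

lemma crossN_lip {n : ℕ} (A B : Finset (Fin n)) : Lip (crossN A B) := by
  intro ω ω' e h
  unfold crossN
  have : ∀ x ∈ crossE A B, (if ∀ i ∈ ({x} : Finset (EdgeType n)), ω i = true then (1:ℝ) else 0)
     ≤ (if ∀ i ∈ ({x} : Finset (EdgeType n)), ω' i = true then (1:ℝ) else 0) + if x = e then 1 else 0 := by
    intro x _
    by_cases hx : x = e
    · simp only [hx, if_true]
      split_ifs <;> norm_num
    · simp [h x hx, hx]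
  refine (Finset.sum_le_sum this).trans ?_
  rw [Finset.sum_add_distrib, Finset.sum_ite_eq']
  gcongr
  split_ifs <;> norm_num

open Classical in
lemma crossN_le {n : ℕ} (A B : Finset (Fin n)) (ω : EdgeType n → Bool) (m : ℕ)
    (h : ∀ z ∈ A, (B.filter fun x => (graphOf ω).Adj z x).card ≤ m) :
    crossN A B ω ≤ A.card * m := by
  unfold crossN
  rw [Finset.sum_boole]
  have h1 : ((crossE A B).filter fun e => ∀ i ∈ ({e} : Finset (EdgeType n)), ω i = true).card ≤
      (A.biUnion fun z => (B.filter fun x => (graphOf ω).Adj z x).image fun x => s(z, x)).card := by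
    rw [← Finset.card_map ⟨Subtype.val, Subtype.val_injective⟩]
    apply Finset.card_le_card
    intro e he
    simp only [crossE, Finset.mem_map, Finset.mem_filter, Finset.mem_univ, true_and, Finset.mem_singleton, forall_eq,
      Function.Embedding.coeFn_mk, Finset.mem_image, Finset.mem_product] at he
    obtain ⟨⟨e, hd⟩, ⟨⟨⟨a, b⟩, hab, rfl⟩, hω⟩, rfl⟩ := he
    simp only [Finset.mem_biUnion, Finset.mem_image, Finset.mem_filter]
    exact ⟨a, hab.1, b, ⟨hab.2, (adj_iff ω a b).mpr ⟨hd, hω⟩⟩, rfl⟩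
  have h2 : (A.biUnion fun z => (B.filter fun x => (graphOf ω).Adj z x).image fun x => s(z, x)).card ≤ A.card * m := by
    refine Finset.card_biUnion_le_card_mul _ _ _ fun z hz => Finset.card_image_le.trans (h z hz)
  exact_mod_cast h1.trans h2

/-- The good event (without the irrelevant adjacency to the first vertex). -/
def goodSet (n N k : ℕ) : Set (EdgeType n → Bool) :=
  {ω | ∀ A B : Finset (Fin n), Disjoint A B → A.card = N → B.card = N →
    ∃ z ∈ A, ∃ L ⊆ B, L.card = k ∧ (∀ x ∈ L, (graphOf ω).Adj z x) ∧
            ((L : Set (Fin n)).Pairwise fun x y => ¬ (graphOf ω).Adj x y)}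

open Classical in
lemma good_of {n N m k : ℕ} (ω : EdgeType n → Bool)
    (h1 : ∀ A B : Finset (Fin n), Disjoint A B → A.card = N → B.card = N → ¬ crossN A B ω ≤ N * m)
    (h2 : ∀ M : Finset (Fin n), M.card = m → ¬ ∀ S ∈ M.powersetCard k, ∃ i ∈ ed S, ω i = true) :
    ω ∈ goodSet n N k := by
  intro A B hd hA hB
  have : ∃ z ∈ A, m < (B.filter fun x => (graphOf ω).Adj z x).card := by
    by_contra! hc
    have := crossN_le A B ω m hc
    rw [hA] at this
    exact h1 A B hd hA hB this
  obtain ⟨z, hz, hm⟩ := this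
  obtain ⟨M, hM, hMc⟩ := Finset.exists_subset_card_eq hm.le
  have := h2 M hMc
  push Not at this
  obtain ⟨S, hS, hi⟩ := this
  rw [Finset.mem_powersetCard] at hS
  refine ⟨z, hz, S, hS.1.trans (hM.trans (Finset.filter_subset _ _)), hS.2, ?_, ?_⟩
  · intro x hx
    exact (Finset.mem_filter.mp (hM (hS.1 hx))).2
  · intro x hx y hy hxy hadj
    obtain ⟨h, hω⟩ := (adj_iff ω x y).mp hadj
    apply hi ⟨s(x,y), h⟩ _ hω
    simp only [ed, Finset.mem_filter, Finset.mem_univ, true_and, Finset.mk_mem_sym2_iff]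
    exact ⟨hx, hy⟩

open Classical in
lemma union_bound {n N m k : ℕ} {p : ℝ} (h0 : 0 ≤ p) (hp1 : p ≤ 1) (ε : ℝ) (hε : 0 ≤ ε)
    (h1 : ∀ A B : Finset (Fin n), Disjoint A B → A.card = N → B.card = N →
      Ex p (fun ω => if crossN A B ω ≤ N * m then 1 else 0) ≤ ε)
    (h2 : ∀ M : Finset (Fin n), M.card = m →
      Ex p (fun ω : EdgeType n → Bool => if ∀ S ∈ M.powersetCard k, ∃ i ∈ ed S, ω i = true then 1 else 0) ≤ ε) :
    1 - 2 * 4 ^ n * ε ≤ Ex p (fun ω => if ω ∈ goodSet n N k then 1 else 0) := by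
  set P := (Finset.univ : Finset (Finset (Fin n) × Finset (Fin n))).filter
    (fun P => Disjoint P.1 P.2 ∧ P.1.card = N ∧ P.2.card = N) with hP
  set Q := (Finset.univ : Finset (Finset (Fin n))).filter (fun M => M.card = m) with hQ
  have key : ∀ ω : EdgeType n → Bool, 1 - (∑ x ∈ P, (if crossN x.1 x.2 ω ≤ N * m then (1:ℝ) else 0)) -
      ∑ M ∈ Q, (if ∀ S ∈ M.powersetCard k, ∃ i ∈ ed S, ω i = true then (1:ℝ) else 0) ≤
      if ω ∈ goodSet n N k then 1 else 0 := by
    intro ω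
    have n1 : ∀ x ∈ P, (0:ℝ) ≤ (if crossN x.1 x.2 ω ≤ N * m then (1:ℝ) else 0) := by
      intros; split_ifs <;> norm_num
    have n2 : ∀ M ∈ Q, (0:ℝ) ≤ (if ∀ S ∈ M.powersetCard k, ∃ i ∈ ed S, ω i = true then (1:ℝ) else 0) := by
      intros; split_ifs <;> norm_num
    have s1 := Finset.sum_nonneg n1
    have s2 := Finset.sum_nonneg n2
    by_cases a1 : ∃ x ∈ P, crossN x.1 x.2 ω ≤ N * m
    · obtain ⟨x, hx, hc⟩ := a1
      have := Finset.single_le_sum n1 hx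
      rw [if_pos hc] at this
      have : (0:ℝ) ≤ if ω ∈ goodSet n N k then 1 else 0 := by split_ifs <;> norm_num
      linarith
    by_cases a2 : ∃ M ∈ Q, ∀ S ∈ M.powersetCard k, ∃ i ∈ ed S, ω i = true
    · obtain ⟨x, hx, hc⟩ := a2
      have := Finset.single_le_sum n2 hx
      rw [if_pos hc] at this
      have : (0:ℝ) ≤ if ω ∈ goodSet n N k then 1 else 0 := by split_ifs <;> norm_num
      linarith
    rw [if_pos]
    · linarith
    apply good_of (m := m)
    · intro A B hd hA hB hc
      exact a1 ⟨(A, B), by simp [hP, hd, hA, hB], hc⟩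
    · intro M hM hc
      exact a2 ⟨M, by simp [hQ, hM], hc⟩
  refine le_trans ?_ (Ex_mono h0 hp1 key)
  rw [Ex_sub, Ex_sub, Ex_sum, Ex_sum, Ex_const]
  have b1 : ∑ x ∈ P, Ex p (fun ω => if crossN x.1 x.2 ω ≤ N * m then (1:ℝ) else 0) ≤ 4^n * ε := by
    refine (Finset.sum_le_card_nsmul P _ ε ?_).trans ?_
    · intro x hx
      simp only [hP, Finset.mem_filter, Finset.mem_univ, true_and] at hx
      exact h1 x.1 x.2 hx.1 hx.2.1 hx.2.2
    · rw [nsmul_eq_mul]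
      apply mul_le_mul_of_nonneg_right _ hε
      have : P.card ≤ 4 ^ n := by
        refine (Finset.card_le_univ P).trans ?_
        rw [Fintype.card_prod, Fintype.card_finset, Fintype.card_fin, ← mul_pow]; norm_num
      exact_mod_cast this
  have b2 : ∑ M ∈ Q, Ex p (fun ω : EdgeType n → Bool =>
      if ∀ S ∈ M.powersetCard k, ∃ i ∈ ed S, ω i = true then (1:ℝ) else 0) ≤ 4^n * ε := by
    refine (Finset.sum_le_card_nsmul Q _ ε ?_).trans ?_
    · intro x hx
      simp only [hQ, Finset.mem_filter, Finset.mem_univ, true_and] at hx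
      exact h2 x hx
    · rw [nsmul_eq_mul]
      apply mul_le_mul_of_nonneg_right _ hε
      have : Q.card ≤ 4 ^ n := by
        refine (Finset.card_le_univ Q).trans ?_
        rw [Fintype.card_finset, Fintype.card_fin]
        exact Nat.pow_le_pow_left (by norm_num) n
      exact_mod_cast this
  linarith

lemma card_edge_le (n : ℕ) : (Fintype.card (EdgeType n) : ℝ) ≤ n^2 := by
  have : Fintype.card (EdgeType n) = n.choose 2 := by
    rw [Sym2.card_subtype_not_diag, Fintype.card_fin]
  rw [this]
  exact_mod_cast Nat.choose_le_pow n 2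

/-- Numerical condition implies a bound on the probability of the good event. -/
lemma good_bound {n N m k : ℕ} {p : ℝ} (h0 : 0 < p) (hp1 : p < 1) (hk : 2 ≤ k) (hkm : k ≤ m) (hn : 1 ≤ n)
    (hN : (N : ℝ) * m + (n:ℝ)^(7/4 : ℝ) ≤ p * (N * N))
    (hρ : 4 * (∑ i ∈ Finset.Icc 2 k, (k.choose i : ℝ) * ((k.choose i : ℝ) / (m.choose i)) * (1 / (1-p)) ^ (i.choose 2))
      * (n:ℝ)^(7/4 : ℝ) ≤ 1) :
    ENNReal.ofReal (1 - 2 * 4 ^ n * exp (n - (n:ℝ)^(5/4 : ℝ))) ≤ erMeasure n p (goodSet n N k) := by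
  classical
  rw [er_eq h0.le hp1.le]
  apply ENNReal.ofReal_le_ofReal
  have hn0 : (0:ℝ) < n := by exact_mod_cast hn
  have hn1 : (1:ℝ) ≤ n := by exact_mod_cast hn
  set s : ℝ := (n:ℝ)^(-(1/2) : ℝ) with hs
  have hs0 : 0 ≤ s := by positivity
  have hs1 : s ≤ 1 := Real.rpow_le_one_of_one_le_of_nonpos hn1 (by norm_num)
  have hs2 : (n:ℝ)^2 * s^2 = n := by
    rw [hs, ← Real.rpow_natCast, ← Real.rpow_natCast, ← Real.rpow_mul hn0.le, ← Real.rpow_add hn0]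
    norm_num
  have hst : s * (n:ℝ)^(7/4 : ℝ) = (n:ℝ)^(5/4 : ℝ) := by
    rw [hs, ← Real.rpow_add hn0]; norm_num
  have hE : exp (Fintype.card (EdgeType n) * s^2 - s * (n:ℝ)^(7/4 : ℝ)) ≤ exp (n - (n:ℝ)^(5/4 : ℝ)) := by
    apply exp_le_exp.mpr
    rw [hst]
    have := mul_le_mul_of_nonneg_right (card_edge_le n) (sq_nonneg s)
    linarith
  apply union_bound (m := m) h0.le hp1.le _ (exp_pos _).le
  · intro A B hd hA hB
    refine le_trans ?_ hE
    apply lower_tail h0.le hp1.le hs0 hs1 _ (crossN_lip A B)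
    rw [crossN_Ex A B hd, hA, hB]
    exact hN
  · intro M hM
    refine le_trans ?_ hE
    subst hM
    exact indep_bound h0 hp1 M k hk hkm _ _ s (by positivity) hs0 hs1 le_rfl hρ

lemma choose_ratio {k m : ℕ} (i : ℕ) (hkm : k ≤ m) (hik : i ≤ k) (hm : 0 < m) :
    (k.choose i : ℝ) / (m.choose i) ≤ ((k:ℝ) / m) ^ i := by
  have hmi : (0:ℝ) < m.choose i := by exact_mod_cast Nat.choose_pos (hik.trans hkm)
  have hm' : (0:ℝ) < m := by exact_mod_cast hm
  rw [div_pow, div_le_div_iff₀ hmi (by positivity)]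
  have key : ∀ j, j ≤ k → k.descFactorial j * m ^ j ≤ k ^ j * m.descFactorial j := by
    intro j
    induction j with
    | zero => simp
    | succ j ih =>
      intro hj
      have h1 := ih (by omega)
      rw [Nat.descFactorial_succ, Nat.descFactorial_succ, pow_succ, pow_succ]
      have h2 : (k - j) * m ≤ k * (m - j) := by
        rw [Nat.sub_mul, Nat.mul_sub]
        have : k * j ≤ j * m := by rw [mul_comm]; exact Nat.mul_le_mul_left j hkm
        omega
      calc (k - j) * k.descFactorial j * (m ^ j * m) = ((k - j) * m) * (k.descFactorial j * m^j) := by ring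
        _ ≤ (k * (m - j)) * (k ^ j * m.descFactorial j) := Nat.mul_le_mul h2 h1
        _ = _ := by ring
  have h := key i hik
  rw [Nat.descFactorial_eq_factorial_mul_choose, Nat.descFactorial_eq_factorial_mul_choose] at h
  have h3 : k.choose i * m ^ i ≤ k ^ i * m.choose i := by
    apply Nat.le_of_mul_le_mul_left _ (Nat.factorial_pos i)
    calc _ = i.factorial * k.choose i * m ^ i := by ring
      _ ≤ _ := h
      _ = _ := by ring
  exact_mod_cast h3

lemma term_bound {b β x K : ℝ} {k m i : ℕ} (hβ1 : 1 ≤ β) (hβ : β ^ 2 = b) (hx : 1 ≤ x)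
    (hkm : k ≤ m) (hm : 0 < m) (hi2 : 2 ≤ i) (hik : i ≤ k)
    (H1 : (k:ℝ)^2 / m * β ^ 20 ≤ x ^ (-(19/20) : ℝ))
    (H2 : (k:ℝ)^2 / m * x ^ (3/4 : ℝ) ≤ x ^ (-(1/5) : ℝ))
    (H3 : β ^ k ≤ x)
    (H4 : 4 * ((k:ℝ) / m) * β ^ k ≤ exp (-K)) (hK : 0 ≤ K) (H5 : 2 * log x ≤ K * (k / 2)) :
    (k.choose i : ℝ) * ((k.choose i : ℝ) / (m.choose i)) * b ^ (i.choose 2) ≤ x ^ (-(19/10) : ℝ) := by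
  have hx0 : 0 < x := by linarith
  have hm' : (0:ℝ) < m := by exact_mod_cast hm
  have hβ0 : 0 < β := by linarith
  have hbi : b ^ (i.choose 2) = (β ^ (i-1)) ^ i := by
    have hev : 2 ∣ i * (i - 1) := (Nat.even_mul_pred_self i).two_dvd
    rw [← hβ, ← pow_mul, ← pow_mul, Nat.choose_two_right, Nat.mul_div_cancel' hev, mul_comm]
  have hbase : (k.choose i : ℝ) * ((k.choose i : ℝ) / (m.choose i)) * b ^ (i.choose 2)
      ≤ k.choose i * (((k:ℝ)/m) * β ^ i) ^ i := by
    rw [hbi, mul_pow, ← mul_assoc]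
    have := choose_ratio i hkm hik hm
    have : β ^ (i-1) ≤ β ^ i := pow_le_pow_right₀ hβ1 (by omega)
    gcongr
  have hbase2 : (k.choose i : ℝ) * (((k:ℝ)/m) * β ^ i) ^ i ≤ ((k:ℝ)^2/m * β ^ i) ^ i := by
    have h1 : (k.choose i : ℝ) ≤ (k:ℝ)^i := by exact_mod_cast Nat.choose_le_pow k i
    calc _ ≤ (k:ℝ)^i * (((k:ℝ)/m) * β ^ i) ^ i := by gcongr
      _ = _ := by rw [← mul_pow]; congr 1; ring
  refine hbase.trans ?_
  have i2 : (2:ℝ) ≤ i := by exact_mod_cast hi2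
  by_cases c1 : i ≤ 20
  · refine hbase2.trans ?_
    have : (k:ℝ)^2/m * β ^ i ≤ x ^ (-(19/20) : ℝ) := by
      refine le_trans ?_ H1
      have : β ^ i ≤ β ^ 20 := pow_le_pow_right₀ hβ1 c1
      gcongr
    refine (pow_le_pow_left₀ (by positivity) this i).trans ?_
    rw [← Real.rpow_natCast, ← Real.rpow_mul hx0.le]
    apply Real.rpow_le_rpow_of_exponent_le hx
    linarith
  push Not at c1
  have i20 : (20:ℝ) ≤ i := by exact_mod_cast c1.le
  by_cases c2 : 4 * i ≤ 3 * k
  · refine hbase2.trans ?_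
    have hb4 : β ^ i ≤ x ^ (3/4 : ℝ) := by
      have h4 : (β ^ i)^4 ≤ (x ^ (3/4 : ℝ))^4 := by
        rw [← Real.rpow_natCast (x ^ (3/4:ℝ)), ← Real.rpow_mul hx0.le]
        norm_num
        calc (β^i)^4 = β^(4*i) := by rw [← pow_mul, mul_comm]
          _ ≤ β^(3*k) := pow_le_pow_right₀ hβ1 c2
          _ = (β^k)^3 := by rw [← pow_mul, mul_comm]
          _ ≤ x^3 := by gcongr
      exact le_of_pow_le_pow_left₀ (by norm_num) (by positivity) h4
    have : (k:ℝ)^2/m * β ^ i ≤ x ^ (-(1/5) : ℝ) := by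
      refine le_trans ?_ H2
      gcongr
    refine (pow_le_pow_left₀ (by positivity) this i).trans ?_
    rw [← Real.rpow_natCast, ← Real.rpow_mul hx0.le]
    apply Real.rpow_le_rpow_of_exponent_le hx
    linarith
  · have hki : k ≤ 2 * i := by omega
    have h1 : (k.choose i : ℝ) ≤ 4 ^ i := by
      have : k.choose i ≤ 4 ^ i := by
        calc k.choose i ≤ 2 ^ k := Nat.choose_le_two_pow k i
          _ ≤ 2 ^ (2 * i) := Nat.pow_le_pow_right (by norm_num) hki
          _ = 4 ^ i := by rw [pow_mul]; norm_num
      exact_mod_cast this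
    have hb : β ^ i ≤ β ^ k := pow_le_pow_right₀ hβ1 hik
    calc (k.choose i : ℝ) * (((k:ℝ)/m) * β ^ i) ^ i ≤ 4 ^ i * (((k:ℝ)/m) * β ^ k) ^ i := by gcongr
      _ = (4 * ((k:ℝ)/m) * β ^ k) ^ i := by rw [← mul_pow]; congr 1; ring
      _ ≤ (exp (-K)) ^ i := by gcongr
      _ = exp (- (K * i)) := by rw [← Real.exp_nat_mul]; congr 1; ring
      _ ≤ _ := by
        rw [Real.rpow_def_of_pos hx0]
        apply exp_le_exp.mpr
        have : (k:ℝ)/2 ≤ i := by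
          have : (k:ℝ) ≤ 2 * i := by exact_mod_cast hki
          linarith
        have h6 := mul_le_mul_of_nonneg_left this hK
        have := Real.log_nonneg hx
        linarith

lemma ev_log_pow (C : ℝ) (j : ℕ) (ε : ℝ) (hε : 0 < ε) :
    ∀ᶠ n : ℕ in atTop, C * (log n) ^ j ≤ (n:ℝ) ^ ε := by
  have h : (fun x : ℝ => (log x) ^ (j:ℝ)) =o[atTop] fun x => x ^ ε := isLittleO_log_rpow_rpow_atTop j hε
  have h2 := (h.comp_tendsto tendsto_natCast_atTop_atTop).const_mul_left C
  have h3 := h2.bound (c := 1) (by norm_num)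
  filter_upwards [h3] with n hn
  simp only [Function.comp, Real.rpow_natCast, one_mul] at hn
  refine (le_abs_self _).trans (hn.trans (le_of_eq ?_))
  rw [Real.norm_eq_abs, abs_of_nonneg]
  positivity

lemma ev_log (C : ℝ) : ∀ᶠ n : ℕ in atTop, C ≤ log n :=
  (Real.tendsto_log_atTop.comp tendsto_natCast_atTop_atTop).eventually_ge_atTop C

lemma final_lim : Tendsto (fun n : ℕ => ENNReal.ofReal (1 - 2 * 4 ^ n * exp (n - (n:ℝ)^(5/4 : ℝ)))) atTop (nhds 1) := by
  have h : Tendsto (fun n : ℕ => 2 * 4 ^ n * exp (n - (n:ℝ)^(5/4 : ℝ))) atTop (nhds 0) := by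
    have h1 : Tendsto (fun n : ℕ => 2 * exp (-(n:ℝ))) atTop (nhds 0) := by
      have : Tendsto (fun n : ℕ => exp (-(n:ℝ))) atTop (nhds 0) :=
        Real.tendsto_exp_neg_atTop_nhds_zero.comp tendsto_natCast_atTop_atTop
      simpa using this.const_mul 2
    refine squeeze_zero' (Eventually.of_forall fun n => by positivity) ?_ h1
    have h2 : ∀ᶠ n : ℕ in atTop, (4:ℝ) ≤ (n:ℝ)^(1/4 : ℝ) :=
      ((tendsto_rpow_atTop (by norm_num : (0:ℝ) < 1/4)).comp tendsto_natCast_atTop_atTop).eventually_ge_atTop 4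
    filter_upwards [h2, eventually_gt_atTop 0] with n hn hn0
    have hn0 : (0:ℝ) < n := by exact_mod_cast hn0
    have e4 : (4:ℝ) ^ n ≤ exp (2 * n) := by
      have : (4:ℝ) ≤ exp 2 := by
        have h1 := Real.add_one_le_exp (1:ℝ)
        have : exp 2 = exp 1 * exp 1 := by rw [← exp_add]; norm_num
        nlinarith
      calc (4:ℝ)^n ≤ (exp 2)^n := by gcongr
        _ = _ := by rw [← Real.exp_nat_mul]; congr 1; ring
    have e5 : (n:ℝ)^(5/4:ℝ) = n * (n:ℝ)^(1/4:ℝ) := by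
      nth_rewrite 2 [← Real.rpow_one (n:ℝ)]
      rw [← Real.rpow_add hn0]; norm_num
    rw [mul_assoc]
    gcongr
    calc _ ≤ exp (2*n) * exp (n - (n:ℝ)^(5/4:ℝ)) := by gcongr
      _ ≤ _ := by
        rw [← exp_add]; apply exp_le_exp.mpr
        rw [e5]; nlinarith
  have := (ENNReal.continuous_ofReal.tendsto _).comp (h.const_sub 1)
  simpa [Function.comp_def] using this

lemma numerics (p : ℝ) (hp0 : 0 < p) (hp1 : p < 1) : ∀ᶠ n : ℕ in atTop, ∀ N m k : ℕ,
    N = ⌊(n : ℝ) / (Real.log n) ^ 2⌋₊ → m = ⌊p * N / 2⌋₊ →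
    k = ⌊2 * Real.logb (1 / (1 - p)) n - 8 * Real.logb (1 / (1 - p)) (Real.log n)⌋₊ - 1 →
    2 ≤ k ∧ k ≤ m ∧ (N : ℝ) * m + (n:ℝ)^(7/4 : ℝ) ≤ p * (N * N) ∧
    4 * (∑ i ∈ Finset.Icc 2 k, (k.choose i : ℝ) * ((k.choose i : ℝ) / (m.choose i)) * (1 / (1-p)) ^ (i.choose 2))
      * (n:ℝ)^(7/4 : ℝ) ≤ 1 := by
  have hq : 0 < 1 - p := by linarith
  set b := 1 / (1 - p) with hb
  have hb1 : 1 < b := by rw [hb, lt_div_iff₀ hq]; linarith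
  set β := √b with hβd
  have hβ : β ^ 2 = b := Real.sq_sqrt (by linarith)
  have hβ1 : 1 ≤ β := by rw [hβd]; exact Real.one_le_sqrt.mpr hb1.le
  set g := log b with hg
  have hg0 : 0 < g := Real.log_pos hb1
  set C := 2 / g with hC
  have hC0 : 0 < C := by positivity
  set c := p / 8 with hc
  have hc0 : 0 < c := by positivity
  set K := 4 * g with hKd
  have hK0 : 0 < K := by positivity
  have evloglog : ∀ᶠ n : ℕ in atTop, 16 * log (log n) ≤ log n := by
    have := (Real.isLittleO_log_id_atTop.comp_tendsto
      (Real.tendsto_log_atTop.comp tendsto_natCast_atTop_atTop)).bound (c := 1/16) (by norm_num)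
    filter_upwards [this, ev_log 0] with n hn h0
    simp only [Function.comp, id, Real.norm_eq_abs] at hn
    rw [abs_of_nonneg h0] at hn
    have := le_abs_self (log (log (n:ℝ)))
    linarith
  filter_upwards [eventually_ge_atTop 1, evloglog, ev_log 1, ev_log (4 * g), ev_log (2 * g),
    ev_log (4 * C / c * exp K),
    ev_log_pow (C^2 * β^20 / c) 4 (1/20) (by norm_num),
    ev_log_pow (C^2 / c) 4 (1/20) (by norm_num),
    ev_log_pow (C / c) 3 1 (by norm_num),
    ev_log_pow (1 / c) 2 1 (by norm_num),
    ev_log_pow 2 2 1 (by norm_num),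
    ev_log_pow (8 / p) 4 (1/4) (by norm_num),
    ev_log_pow (4 * C) 1 (3/20) (by norm_num)] with n hn hll h1 h4g h2g hE hP1 hP2 hP3 hP4 hP5 hP6 hP7
  intro N m k hN hm hk
  have hx1 : (1:ℝ) ≤ n := by exact_mod_cast hn
  have hx0 : (0:ℝ) < n := by linarith
  set x : ℝ := (n : ℝ) with hx
  set l := log x with hl
  have hl0 : 0 < l := by linarith
  rw [Real.rpow_one] at hP3 hP4 hP5
  have hN1 : x / l^2 ≤ 2 * N := by
    have a1 : x / l^2 < N + 1 := by rw [hN]; exact Nat.lt_floor_add_one _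
    have a2 : 2 ≤ x / l^2 := by rw [le_div_iff₀ (by positivity)]; exact hP5
    linarith
  have hm1 : c * (x / l^2) ≤ m := by
    have a1 : p * N / 2 < m + 1 := by rw [hm]; exact Nat.lt_floor_add_one _
    have a2 : 1 ≤ c * (x / l^2) := by
      rw [← mul_div_assoc, le_div_iff₀ (by positivity)]
      rw [div_mul_eq_mul_div, div_le_iff₀ hc0] at hP4
      linarith
    have a3 : p * (x / l^2) ≤ p * (2 * N) := by gcongr
    rw [hc] at a2 ⊢
    linarith
  have hmp : (0:ℝ) < m := lt_of_lt_of_le (by positivity) hm1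
  have hm0 : 0 < m := by exact_mod_cast hmp
  -- bounds on k
  set y := 2 * Real.logb b x - 8 * Real.logb b l with hy
  have hyg : y * g = 2 * l - 8 * log l := by
    rw [hy, Real.logb, Real.logb, ← hg, ← hl]; field_simp
  have hll0 : 0 ≤ log l := Real.log_nonneg h1
  have hy0 : 0 ≤ y := by
    by_contra hneg
    push Not at hneg
    have := mul_neg_of_neg_of_pos hneg hg0
    linarith
  have hyk : y < k + 2 := by
    have := Nat.lt_floor_add_one y
    have h3 : ⌊y⌋₊ ≤ k + 1 := by omega
    have : (⌊y⌋₊ : ℝ) ≤ k + 1 := by exact_mod_cast h3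
    linarith
  have hky : (k:ℝ) ≤ y := by
    have h3 : k ≤ ⌊y⌋₊ := by omega
    have : (k:ℝ) ≤ ⌊y⌋₊ := by exact_mod_cast h3
    exact this.trans (Nat.floor_le hy0)
  have hkg1 : k * g ≤ 2 * l - 8 * log l := by
    rw [← hyg]; gcongr
  have hkg2 : l ≤ k * g := by
    have : y * g ≤ (k + 2) * g := by gcongr
    linarith
  have hkC : (k:ℝ) ≤ C * l := by
    rw [hC, div_mul_eq_mul_div, le_div_iff₀ hg0]; linarith
  have hk2 : 2 ≤ k := by
    have : 2 * g ≤ k * g := h2g.trans hkg2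
    have : (2:ℝ) ≤ k := le_of_mul_le_mul_right this hg0
    exact_mod_cast this
  have hβk : β ^ k ≤ x / l ^ 4 := by
    have e1 : β = exp (g / 2) := by
      rw [hβd, hg, Real.sqrt_eq_rpow, Real.rpow_def_of_pos (by linarith)]; congr 1; ring
    have e2 : x / l^4 = exp (l - 4 * log l) := by
      rw [exp_sub, hl, Real.exp_log hx0, ← hl, show 4 * log l = log (l^4) by rw [Real.log_pow]; norm_num,
        Real.exp_log (by positivity)]
    rw [e1, e2, ← Real.exp_nat_mul]
    apply exp_le_exp.mpr
    linarith
  have hβx : β ^ k ≤ x := hβk.trans (div_le_self hx0.le (one_le_pow₀ h1))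
  have hkm : k ≤ m := by
    have : (k:ℝ) ≤ m := by
      refine hkC.trans (le_trans ?_ hm1)
      rw [← mul_div_assoc, le_div_iff₀ (by positivity)]
      rw [div_mul_eq_mul_div, div_le_iff₀ hc0] at hP3
      linarith
    exact_mod_cast this
  have hkm1 : (k:ℝ) / m ≤ C * l / (c * (x / l^2)) := by gcongr
  have hkm2 : (k:ℝ)^2 / m ≤ (C^2 / c * l^4) / x := by
    calc (k:ℝ)^2 / m ≤ (C * l)^2 / (c * (x / l^2)) := by gcongr
      _ = _ := by field_simp
  refine ⟨hk2, hkm, ?_, ?_⟩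
  · have a1 : (m:ℝ) ≤ p * N / 2 := by rw [hm]; exact Nat.floor_le (by positivity)
    have a2 : (N:ℝ) * m ≤ N * (p * N / 2) := by gcongr
    have a3 : x^(7/4 : ℝ) * x^(1/4:ℝ) = x^2 := by
      rw [← Real.rpow_add hx0, ← Real.rpow_natCast]; norm_num
    have a4 : x^2 ≤ 4 * l^4 * (N*N) := by
      rw [div_le_iff₀ (by positivity)] at hN1
      calc x^2 ≤ (2 * N * l^2)^2 := by gcongr
        _ = _ := by ring
    have a5 : x^(7/4 : ℝ) * (8 / p * l^4) ≤ 4 * l^4 * (N*N) := by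
      refine le_trans ?_ a4
      rw [← a3]; gcongr
    have a6 : x^(7/4 : ℝ) * 8 * l^4 ≤ (4 * (N*N) * p) * l^4 := by
      have := mul_le_mul_of_nonneg_right a5 hp0.le
      have e : x^(7/4 : ℝ) * (8 / p * l^4) * p = x^(7/4 : ℝ) * 8 * l^4 := by field_simp
      rw [e] at this
      linarith
    have a7 := le_of_mul_le_mul_right a6 (by positivity)
    linarith
  · have hterm : ∀ i ∈ Finset.Icc 2 k,
        (k.choose i : ℝ) * ((k.choose i : ℝ) / (m.choose i)) * b ^ (i.choose 2) ≤ x ^ (-(19/10) : ℝ) := by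
      intro i hi
      rw [Finset.mem_Icc] at hi
      refine term_bound (K := K) hβ1 hβ hx1 hkm hm0 hi.1 hi.2 ?_ ?_ hβx ?_ hK0.le ?_
      · calc (k:ℝ)^2 / m * β^20 ≤ (C^2 / c * l^4) / x * β^20 := by gcongr
          _ = (C^2 * β^20 / c * l^4) / x := by ring
          _ ≤ x ^ (1/20 : ℝ) / x := by gcongr
          _ = _ := by nth_rewrite 2 [← Real.rpow_one x]; rw [← Real.rpow_sub hx0]; norm_num
      · calc (k:ℝ)^2 / m * x^(3/4:ℝ) ≤ (C^2 / c * l^4) / x * x^(3/4:ℝ) := by gcongr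
          _ ≤ x ^ (1/20 : ℝ) / x * x^(3/4:ℝ) := by gcongr
          _ = _ := by nth_rewrite 2 [← Real.rpow_one x]; rw [← Real.rpow_sub hx0, ← Real.rpow_add hx0]; norm_num
      · calc 4 * ((k:ℝ)/m) * β^k ≤ 4 * (C * l / (c * (x / l^2))) * (x / l^4) := by gcongr
          _ = 4 * C / c / l := by field_simp
          _ ≤ exp (-K) := by
            rw [div_le_iff₀ hl0, exp_neg, ← div_eq_inv_mul, le_div_iff₀ (exp_pos _)]
            exact hE
      · have : K * (k / 2) = 2 * (k * g) := by rw [hKd]; ring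
        rw [this]; linarith
    have hsum := Finset.sum_le_card_nsmul _ _ _ hterm
    rw [nsmul_eq_mul, Nat.card_Icc] at hsum
    have hcard : ((k + 1 - 2 : ℕ) : ℝ) ≤ k := by exact_mod_cast (by omega : k + 1 - 2 ≤ k)
    rw [pow_one] at hP7
    calc _ ≤ 4 * ((C * l) * x ^ (-(19/10) : ℝ)) * x^(7/4:ℝ) := by
          gcongr
          refine hsum.trans ?_
          gcongr
          exact hcard.trans hkC
      _ = (4 * C * l) * (x ^ (-(19/10) : ℝ) * x^(7/4:ℝ)) := by ring
      _ ≤ x^(3/20:ℝ) * (x ^ (-(19/10) : ℝ) * x^(7/4:ℝ)) := by gcongr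
      _ = 1 := by rw [← Real.rpow_add hx0, ← Real.rpow_add hx0]; norm_num

/-- For fixed `p ∈ (0,1)` and
`a = ⌊2·log_{1/(1−p)} n − 8·log_{1/(1−p)} ln n⌋`, whp: for all disjoint sets
`A ⊆ N(1)` and `B ⊆ [n]∖{1}` of size `⌊n/ln² n⌋` each, there is an induced copy
of `K_{1,a−1}` with center in `A` and all leaves in `B`.
(Vertex `1` is `⟨0, _⟩ : Fin n`.) -/
theorem induced_star_between_sets (p : ℝ) (hp0 : 0 < p) (hp1 : p < 1) :
    Tendsto (fun n : ℕ =>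
      erMeasure n p {ω | ∀ hn : 0 < n,
        ∀ A B : Finset (Fin n), Disjoint A B →
          (∀ x ∈ A, (graphOf ω).Adj ⟨0, hn⟩ x) →
          (⟨0, hn⟩ : Fin n) ∉ B →
          A.card = ⌊(n : ℝ) / (Real.log n) ^ 2⌋₊ →
          B.card = ⌊(n : ℝ) / (Real.log n) ^ 2⌋₊ →
          ∃ z ∈ A, ∃ L ⊆ B,
            L.card = ⌊2 * Real.logb (1 / (1 - p)) n
                        - 8 * Real.logb (1 / (1 - p)) (Real.log n)⌋₊ - 1 ∧
            (∀ x ∈ L, (graphOf ω).Adj z x) ∧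
            ((L : Set (Fin n)).Pairwise fun x y => ¬ (graphOf ω).Adj x y)})
      atTop (nhds 1) := by
  refine tendsto_of_tendsto_of_tendsto_of_le_of_le' final_lim tendsto_const_nhds ?_ ?_
  · filter_upwards [numerics p hp0 hp1, eventually_ge_atTop 1] with n hnum hn
    obtain ⟨hk, hkm, hN, hρ⟩ := hnum _ _ _ rfl rfl rfl
    refine (good_bound hp0 hp1 hk hkm hn hN hρ).trans (measure_mono ?_)
    intro ω hω hn A B hd _ _ hA hB
    exact hω A B hd hA hB
  · refine Eventually.of_forall fun n => ?_
    unfold erMeasure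
    exact prob_le_one
end

section
/- Let Γ be a graph on the vertex set [n] containing a spanning r-flower A (with associated sets V^1,…,V^{r+1}). Then A is C_4-saturated in Γ, and |E(A)| = |E(A[V^{r+1}])| + (3/2)·(n − |V^{r+1}| − r) + 3·(|V^2| + … + |V^{r+1}|). -/
open MeasureTheory Filter Real

/-- The edges of `A` with one endpoint in `S` and the other in `T` form a perfect
matching between `S` and `T`. -/
def MatchingBetween {α : Type*} (A : SimpleGraph α) (S T : Set α) : Prop :=
  (∀ x ∈ S, ∃! y, y ∈ T ∧ A.Adj x y) ∧ (∀ y ∈ T, ∃! x, x ∈ S ∧ A.Adj x y)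

/-- The edges of `A` inside `S` form a perfect matching on `S`. -/
def MatchingOn {α : Type*} (A : SimpleGraph α) (S : Set α) : Prop :=
  ∀ x ∈ S, ∃! y, y ∈ S ∧ A.Adj x y

/-- The number of edges of `A` with both endpoints in `S`. -/
noncomputable def edgeCountIn {α : Type*} (A : SimpleGraph α) (S : Set α) : ℕ :=
  {e ∈ A.edgeSet | ∀ x ∈ e, x ∈ S}.ncard

/-- `A[S]` is an inclusion-maximal `C₄`-free graph. -/
def MaxC4FreeOn {α : Type*} (A : SimpleGraph α) (S : Set α) : Prop :=
  ¬ ContainsCopy (cycGraph 4) (A.induce S) ∧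
  ∀ x y : S, x ≠ y → ¬ (A.induce S).Adj x y →
    ContainsCopy (cycGraph 4) ((A.induce S) ⊔ SimpleGraph.fromEdgeSet {s(x, y)})

/-- `A` is an `r`-flower with associated sets `V 1 ⊇ … ⊇ V (r+1)`: there are
vertices `v i j`, triangles `R i = {v i 0, v i 1, v i 2}`, sets
`VP i j = N_{A[Vⁱ]}(v i j) ∖ R i` partitioned as `W i j ⊔ U i j ⊔ Y i j`, so that
each `Vⁱ` (for `i ∈ [r]`) is the disjoint union of `V (i+1)`, `R i` and the
`VP i j`, `V 1 = [n]`, the matching conditions (4.1)–(4.3) hold, `A[V^{r+1}]` is a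
maximal `C₄`-free graph, and `A` has no other edges. -/
def IsRFlower {n : ℕ} (A : SimpleGraph (Fin n)) (r : ℕ) (V : ℕ → Set (Fin n)) : Prop :=
  ∃ (v : ℕ → Fin 3 → Fin n) (R : ℕ → Set (Fin n))
    (VP W U Y : ℕ → Fin 3 → Set (Fin n)),
    -- (1) the decomposition
    V 1 = Set.univ ∧
    (∀ i, 1 ≤ i → i ≤ r →
      V i = V (i + 1) ∪ R i ∪ VP i 0 ∪ VP i 1 ∪ VP i 2 ∧
      (Set.univ : Set (Fin 5)).PairwiseDisjoint
        ![V (i + 1), R i, VP i 0, VP i 1, VP i 2]) ∧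
    -- (2) the triangles
    (∀ i, 1 ≤ i → i ≤ r →
      R i = {v i 0, v i 1, v i 2} ∧
      ∀ j k : Fin 3, j ≠ k → A.Adj (v i j) (v i k)) ∧
    -- (3) the petals
    (∀ i, 1 ≤ i → i ≤ r → ∀ j : Fin 3,
      VP i j = {x ∈ V i | A.Adj (v i j) x} \ R i) ∧
    -- (4) the partitions and matchings
    (∀ i, 1 ≤ i → i ≤ r → ∀ j : Fin 3,
      VP i j = W i j ∪ U i j ∪ Y i j ∧
      Disjoint (W i j) (U i j) ∧ Disjoint (W i j) (Y i j) ∧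
      Disjoint (U i j) (Y i j) ∧
      MatchingBetween A (W i j) (V (i + 1)) ∧
      MatchingBetween A (W i j) (U i j) ∧
      MatchingOn A (Y i j)) ∧
    -- (5) the core
    MaxC4FreeOn A (V (r + 1)) ∧
    -- (6) no other edges
    (∀ x y : Fin n, A.Adj x y →
      (x ∈ V (r + 1) ∧ y ∈ V (r + 1)) ∨
      ∃ i, 1 ≤ i ∧ i ≤ r ∧
        ((x ∈ R i ∧ y ∈ R i) ∨
         ∃ j : Fin 3,
           (x = v i j ∧ y ∈ VP i j) ∨ (y = v i j ∧ x ∈ VP i j) ∨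
           (x ∈ W i j ∧ y ∈ V (i + 1)) ∨ (y ∈ W i j ∧ x ∈ V (i + 1)) ∨
           (x ∈ W i j ∧ y ∈ U i j) ∨ (y ∈ W i j ∧ x ∈ U i j) ∨
           (x ∈ Y i j ∧ y ∈ Y i j)))

theorem copy_iff {β : Type*} (H : SimpleGraph β) :
    ContainsCopy (cycGraph 4) H ↔ ∃ a x b y : β, a ≠ b ∧ x ≠ y ∧
      H.Adj a x ∧ H.Adj x b ∧ H.Adj b y ∧ H.Adj y a := by
  constructor
  · rintro ⟨f, hf, h⟩
    have key : ∀ p q : ZMod 4, p ≠ q → (p = q + 1 ∨ q = p + 1) → H.Adj (f p) (f q) := by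
      intro p q hpq h1
      apply h
      simp [cycGraph, hpq, h1]
    refine ⟨f 0, f 1, f 2, f 3, hf.ne (by decide), hf.ne (by decide), ?_, ?_, ?_, ?_⟩ <;>
      exact key _ _ (by decide) (by decide)
  · rintro ⟨a, x, b, y, hab, hxy, h1, h2, h3, h4⟩
    have e1 := h1.ne
    have e2 := h2.ne
    have e3 := h3.ne
    have e4 := h4.ne
    refine ⟨(![a, x, b, y] : Fin 4 → β), ?_, ?_⟩
    · intro p q hpq
      change Fin 4 at p q
      fin_cases p <;> fin_cases q <;> first | rfl | (exfalso; simp_all)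
    · intro p q hpq
      have hpq' : p ≠ q ∧ (p = q + 1 ∨ q = p + 1) := by
        simpa [cycGraph] using hpq
      have enum : ∀ p q : ZMod 4, p ≠ q ∧ (p = q + 1 ∨ q = p + 1) →
          (p = 0 ∧ q = 1) ∨ (p = 1 ∧ q = 2) ∨ (p = 2 ∧ q = 3) ∨ (p = 3 ∧ q = 0) ∨
          (p = 1 ∧ q = 0) ∨ (p = 2 ∧ q = 1) ∨ (p = 3 ∧ q = 2) ∨ (p = 0 ∧ q = 3) := by decide
      rcases enum p q hpq' with ⟨rfl, rfl⟩ | ⟨rfl, rfl⟩ | ⟨rfl, rfl⟩ | ⟨rfl, rfl⟩ |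
        ⟨rfl, rfl⟩ | ⟨rfl, rfl⟩ | ⟨rfl, rfl⟩ | ⟨rfl, rfl⟩
      · exact h1
      · exact h2
      · exact h3
      · exact h4
      · exact h1.symm
      · exact h2.symm
      · exact h3.symm
      · exact h4.symm

theorem add_edge_adj {β : Type*} (H : SimpleGraph β) (x y u w : β) :
    (H ⊔ SimpleGraph.fromEdgeSet {s(x, y)}).Adj u w ↔
      H.Adj u w ∨ (((u = x ∧ w = y) ∨ (u = y ∧ w = x)) ∧ u ≠ w) := by
  simp [SimpleGraph.sup_adj]

theorem path_of_copy {β : Type*} (H : SimpleGraph β) (x y : β) (hxy : x ≠ y)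
    (hn : ¬ ContainsCopy (cycGraph 4) H)
    (hc : ContainsCopy (cycGraph 4) (H ⊔ SimpleGraph.fromEdgeSet {s(x, y)})) :
    ∃ a b, H.Adj x a ∧ H.Adj a b ∧ H.Adj b y := by
  rw [copy_iff] at hn hc
  obtain ⟨a, p, b, q, hab, hpq, h1, h2, h3, h4⟩ := hc
  have e1 := h1.ne
  have e2 := h2.ne
  have e3 := h3.ne
  have e4 := h4.ne
  rw [add_edge_adj] at h1 h2 h3 h4
  have sym : ∀ u w, H.Adj u w → H.Adj w u := fun _ _ h => h.symm
  by_contra hno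
  have hno' : ∀ a b, H.Adj x a → H.Adj a b → H.Adj b y → False := by
    intro a b h1 h2 h3; exact hno ⟨a, b, h1, h2, h3⟩
  have hn' : ∀ a x b y, a ≠ b → x ≠ y → H.Adj a x → H.Adj x b → H.Adj b y → H.Adj y a → False := by
    intro a x b y h1 h2 h3 h4 h5 h6; exact hn ⟨a, x, b, y, h1, h2, h3, h4, h5, h6⟩
  have hn2 := hn' a p b q hab hpq
  clear hn hno hn'
  grind

theorem copy_of_path {β : Type*} (H : SimpleGraph β) (x y : β) (hxy : x ≠ y)
    (hn : ¬ H.Adj x y) (hp : ∃ a b, H.Adj x a ∧ H.Adj a b ∧ H.Adj b y) :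
    ContainsCopy (cycGraph 4) (H ⊔ SimpleGraph.fromEdgeSet {s(x, y)}) := by
  obtain ⟨a, b, h1, h2, h3⟩ := hp
  rw [copy_iff]
  refine ⟨x, a, b, y, ?_, ?_, ?_, ?_, ?_, ?_⟩
  · rintro rfl; exact hn h3
  · rintro rfl; exact hn h1
  all_goals rw [add_edge_adj]
  · exact Or.inl h1
  · exact Or.inl h2
  · exact Or.inl h3
  · right; exact ⟨Or.inr ⟨rfl, rfl⟩, hxy.symm⟩

/-- No 4-cycle inside `P`. -/
def NoC4 {α : Type*} (A : SimpleGraph α) (P : Set α) : Prop :=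
  ∀ a x b y, a ∈ P → x ∈ P → b ∈ P → y ∈ P → a ≠ b → x ≠ y →
    A.Adj a x → A.Adj x b → A.Adj b y → A.Adj y a → False

/-- Nonadjacent distinct vertices of `P` are joined by a path of length three. -/
def Path3 {α : Type*} (A : SimpleGraph α) (P : Set α) : Prop :=
  ∀ x y, x ∈ P → y ∈ P → x ≠ y → ¬ A.Adj x y →
    ∃ a b, A.Adj x a ∧ A.Adj a b ∧ A.Adj b y

theorem core_facts {α : Type*} (A : SimpleGraph α) (S : Set α) (h : MaxC4FreeOn A S) :
    NoC4 A S ∧ Path3 A S := by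
  obtain ⟨h1, h2⟩ := h
  constructor
  · intro a x b y ha hx hb hy hab hxy e1 e2 e3 e4
    apply h1
    rw [copy_iff]
    exact ⟨⟨a, ha⟩, ⟨x, hx⟩, ⟨b, hb⟩, ⟨y, hy⟩, by simpa using hab, by simpa using hxy,
      by simpa using e1, by simpa using e2, by simpa using e3, by simpa using e4⟩
  · intro x y hx hy hxy hn
    have hne : (⟨x, hx⟩ : S) ≠ ⟨y, hy⟩ := by simpa using hxy
    obtain ⟨a, b, e1, e2, e3⟩ := path_of_copy _ _ _ hne h1
      (h2 ⟨x, hx⟩ ⟨y, hy⟩ hne (by simpa using hn))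
    exact ⟨a, b, by simpa using e1, by simpa using e2, by simpa using e3⟩

/-- One layer of a flower: `P` is the layer with everything inside, `S` the next one. -/
structure FlowerStep {α : Type*} (A : SimpleGraph α) (P S : Set α) (v : Fin 3 → α)
    (Q W : Fin 3 → Set α) : Prop where
  cover : ∀ x, x ∈ P ↔ x ∈ S ∨ (∃ j, x = v j) ∨ ∃ j, x ∈ Q j
  v_inj : Function.Injective v
  v_S : ∀ j, v j ∉ S
  v_Q : ∀ j k, v j ∉ Q k
  Q_S : ∀ j x, x ∈ Q j → x ∉ S
  Q_Q : ∀ j k x, x ∈ Q j → x ∈ Q k → j = k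
  W_Q : ∀ j x, x ∈ W j → x ∈ Q j
  tri : ∀ j k, j ≠ k → A.Adj (v j) (v k)
  petal : ∀ j x, x ∈ Q j → A.Adj (v j) x
  mate : ∀ j x, x ∈ Q j → ∃ m, m ∈ Q j ∧ A.Adj x m ∧ (x ∈ W j → m ∉ W j) ∧
    ∀ y, y ∈ Q j → A.Adj x y → y = m
  match_W : ∀ j x, x ∈ W j → ∃ s, s ∈ S ∧ A.Adj x s ∧ ∀ y, y ∈ S → A.Adj x y → y = s
  match_S : ∀ j s, s ∈ S → ∃ w, w ∈ W j ∧ A.Adj s w ∧ ∀ y, y ∈ W j → A.Adj s y → y = w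
  adj_v : ∀ j y, y ∈ P → A.Adj (v j) y → (∃ k, k ≠ j ∧ y = v k) ∨ y ∈ Q j
  adj_Q : ∀ j x y, x ∈ Q j → y ∈ P → A.Adj x y → y = v j ∨ y ∈ Q j ∨ (x ∈ W j ∧ y ∈ S)
  adj_S : ∀ x y, x ∈ S → y ∈ P → A.Adj x y → y ∈ S ∨ ∃ j, y ∈ W j

namespace FlowerStep

variable {α : Type*} {A : SimpleGraph α} {P S : Set α} {v : Fin 3 → α} {Q W : Fin 3 → Set α}

theorem path3 (h : FlowerStep A P S v Q W) (hS : Path3 A S) : Path3 A P := by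
  have third : ∀ j k : Fin 3, j ≠ k → ∃ l, l ≠ j ∧ l ≠ k := by decide
  have other : ∀ j : Fin 3, ∃ k, k ≠ j := by decide
  -- the cases up to symmetry
  have c1 : ∀ j x, x ∈ S → ∃ a b, A.Adj x a ∧ A.Adj a b ∧ A.Adj b (v j) := by
    intro j x hx
    obtain ⟨k, hk⟩ := other j
    obtain ⟨w, hw, hxw, -⟩ := h.match_S k x hx
    exact ⟨w, v k, hxw, (h.petal k w (h.W_Q k w hw)).symm, h.tri k j hk⟩
  have c2 : ∀ j x y, x ∈ S → y ∈ Q j → ∃ a b, A.Adj x a ∧ A.Adj a b ∧ A.Adj b y := by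
    intro j x y hx hy
    obtain ⟨w, hw, hxw, -⟩ := h.match_S j x hx
    exact ⟨w, v j, hxw, (h.petal j w (h.W_Q j w hw)).symm, h.petal j y hy⟩
  have c3 : ∀ j k y, y ∈ Q k → j ≠ k → ∃ a b, A.Adj (v j) a ∧ A.Adj a b ∧ A.Adj b y := by
    intro j k y hy hjk
    obtain ⟨l, hl1, hl2⟩ := third j k hjk
    exact ⟨v l, v k, h.tri _ _ hl1.symm, h.tri _ _ hl2, h.petal k y hy⟩
  have sym : ∀ x y, (∃ a b, A.Adj x a ∧ A.Adj a b ∧ A.Adj b y) →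
      ∃ a b, A.Adj y a ∧ A.Adj a b ∧ A.Adj b x := by
    rintro x y ⟨a, b, h1, h2, h3⟩
    exact ⟨b, a, h3.symm, h2.symm, h1.symm⟩
  intro x y hx hy hxy hn
  rw [h.cover] at hx hy
  rcases hx with hx | ⟨j, rfl⟩ | ⟨j, hx⟩ <;> rcases hy with hy | ⟨k, rfl⟩ | ⟨k, hy⟩
  · exact hS x y hx hy hxy hn
  · exact c1 k x hx
  · exact c2 k x y hx hy
  · exact sym _ _ (c1 j y hy)
  · exact absurd (h.tri j k (fun e => hxy (by rw [e]))) hn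
  · by_cases e : j = k
    · subst e; exact absurd (h.petal j y hy) hn
    · exact c3 j k y hy e
  · exact sym _ _ (c2 j y x hy hx)
  · by_cases e : k = j
    · subst e; exact absurd (h.petal k x hx).symm hn
    · exact sym _ _ (c3 k j x hx e)
  · by_cases e : j = k
    · subst e
      obtain ⟨m, hm, hxm, -⟩ := h.mate j x hx
      exact ⟨m, v j, hxm, (h.petal j m hm).symm, h.petal j y hy⟩
    · exact ⟨v j, v k, (h.petal j x hx).symm, h.tri j k e, h.petal k y hy⟩

theorem noC4 (h : FlowerStep A P S v Q W) (hS : NoC4 A S) : NoC4 A P := by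
  -- two vertices of `Q j` with a common neighbour besides `v j`
  have inj : ∀ j a b y, a ∈ Q j → b ∈ Q j → y ∈ P → A.Adj a y → A.Adj b y → y ≠ v j → a = b := by
    intro j a b y ha hb hy h1 h2 hne
    rcases h.adj_Q j a y ha hy h1 with e | e | ⟨e1, e2⟩
    · exact absurd e hne
    · obtain ⟨m, -, -, -, hm⟩ := h.mate j y e
      rw [hm a ha h1.symm, hm b hb h2.symm]
    · rcases h.adj_Q j b y hb hy h2 with f | f | ⟨f1, f2⟩
      · exact absurd f hne
      · exact absurd e2 (h.Q_S j y f)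
      · obtain ⟨m, -, -, hm⟩ := h.match_S j y e2
        rw [hm a e1 h1.symm, hm b f1 h2.symm]
  have mixed : ∀ j k b y, k ≠ j → b ∈ Q j → y ∈ P → A.Adj (v k) y → A.Adj b y → y = v j := by
    intro j k b y hkj hb hy h1 h2
    rcases h.adj_Q j b y hb hy h2 with e | e | ⟨e1, e2⟩
    · exact e
    · rcases h.adj_v k y hy h1 with ⟨l, hl, rfl⟩ | f
      · exact absurd e (h.v_Q _ _)
      · exact absurd (h.Q_Q _ _ _ e f) hkj.symm
    · rcases h.adj_v k y hy h1 with ⟨l, hl, rfl⟩ | f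
      · exact absurd e2 (h.v_S _)
      · exact absurd e2 (h.Q_S _ _ f)
  -- no 4-cycle through a centre
  have nov : ∀ j a b y, a ∈ P → b ∈ P → y ∈ P → a ≠ b → v j ≠ y → A.Adj a (v j) →
      A.Adj (v j) b → A.Adj b y → A.Adj y a → False := by
    intro j a b y ha hb hy hab hjy h1 h2 h3 h4
    rcases h.adj_v j a ha h1.symm with ⟨k, hk, rfl⟩ | ha'
    · rcases h.adj_v j b hb h2 with ⟨l, hl, rfl⟩ | hb'
      · have hkl : k ≠ l := fun e => hab (by rw [e])
        rcases h.adj_v k y hy h4.symm with ⟨p, hp, rfl⟩ | hy'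
        · have hpl : p ≠ l := fun e => h3.ne (by rw [e])
          have hpj : p ≠ j := fun e => hjy (by rw [e])
          omega
        · rcases h.adj_v l y hy h3 with ⟨p, hp, rfl⟩ | hy''
          · exact h.v_Q _ _ hy'
          · exact hkl (h.Q_Q _ _ _ hy' hy'')
      · exact hjy (mixed j k b y hk hb' hy h4.symm h3).symm
    · rcases h.adj_v j b hb h2 with ⟨l, hl, rfl⟩ | hb'
      · exact hjy (mixed j l a y hl ha' hy h3 h4.symm).symm
      · exact hab (inj j a b y ha' hb' hy h4.symm h3 hjy.symm)
  -- no 4-cycle through a petal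
  have noq : ∀ j a x b y, x ∈ Q j → a ∈ P → x ∈ P → b ∈ P → y ∈ P → a ≠ b → x ≠ y → A.Adj a x →
      A.Adj x b → A.Adj b y → A.Adj y a → False := by
    have aux : ∀ j a x b y, x ∈ Q j → a ∈ P → x ∈ P → b ∈ P → y ∈ P → a ≠ b → x ≠ y → A.Adj a x →
      A.Adj x b → A.Adj b y → A.Adj y a → a ∈ Q j → x ∈ W j → b ∈ S → False := by
      intro j a x b y hx ha hx' hb hy hab hxy h1 h2 h3 h4 haQ hxW hbS
      obtain ⟨m, hm, hxm, hmW, hmu⟩ := h.mate j x hx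
      have : a = m := hmu a haQ h1.symm
      subst this
      have haW := hmW hxW
      rcases h.adj_Q j a y haQ hy h4.symm with e | e | ⟨e, -⟩
      · subst e
        exact nov j b a x hb ha hx' hab.symm hxy.symm h3 h4 h1 h2
      · obtain ⟨m', -, -, -, hu⟩ := h.mate j a haQ
        exact hxy (by rw [hu x hx h1, hu y e h4.symm])
      · exact haW e
    intro j a x b y hx ha hx' hb hy hab hxy h1 h2 h3 h4
    rcases h.adj_Q j x a hx ha h1.symm with rfl | e | ⟨e1, e2⟩
    · exact nov j y x b hy hx' hb hxy.symm hab h4 h1 h2 h3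
    · rcases h.adj_Q j x b hx hb h2 with rfl | f | ⟨f1, f2⟩
      · exact nov j x y a hx' hy ha hxy hab.symm h2 h3 h4 h1
      · obtain ⟨m, -, -, -, hu⟩ := h.mate j x hx
        exact hab (by rw [hu a e h1.symm, hu b f h2])
      · exact aux j a x b y hx ha hx' hb hy hab hxy h1 h2 h3 h4 e f1 f2
    · rcases h.adj_Q j x b hx hb h2 with rfl | f | ⟨f1, f2⟩
      · exact nov j x y a hx' hy ha hxy hab.symm h2 h3 h4 h1
      · exact aux j b x a y hx hb hx' ha hy hab.symm hxy h2.symm h1.symm h4.symm h3.symm f e1 e2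
      · obtain ⟨m, -, -, hu⟩ := h.match_W j x e1
        exact hab (by rw [hu a e2 h1.symm, hu b f2 h2])
  have hin : ∀ a x b y, a ∈ P → x ∈ P → b ∈ P → y ∈ P → a ≠ b → x ≠ y →
    A.Adj a x → A.Adj x b → A.Adj b y → A.Adj y a → x ∈ S := by
    intro a x b y ha hx hb hy hab hxy h1 h2 h3 h4
    rcases (h.cover x).1 hx with e | ⟨j, rfl⟩ | ⟨j, e⟩
    · exact e
    · exact (nov j a b y ha hb hy hab hxy h1 h2 h3 h4).elim
    · exact (noq j a x b y e ha hx hb hy hab hxy h1 h2 h3 h4).elim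
  intro a x b y ha hx hb hy hab hxy h1 h2 h3 h4
  exact hS a x b y (hin y a x b hy ha hx hb hxy.symm hab h4 h1 h2 h3)
    (hin a x b y ha hx hb hy hab hxy h1 h2 h3 h4)
    (hin x b y a hx hb hy ha hxy hab.symm h2 h3 h4 h1)
    (hin b y a x hb hy ha hx hab.symm hxy.symm h3 h4 h1 h2) hab hxy h1 h2 h3 h4

end FlowerStep

open Classical in
/-- Sum of the degrees in the induced subgraph `A[S]`. -/
noncomputable def degSum {α : Type*} [Fintype α] (A : SimpleGraph α) (S : Set α) : ℕ :=
  ∑ x ∈ Finset.univ.filter (· ∈ S), (Finset.univ.filter (fun y => y ∈ S ∧ A.Adj x y)).card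

open Classical in
theorem two_edgeCountIn {α : Type*} [Fintype α] (A : SimpleGraph α) (S : Set α) :
    2 * edgeCountIn A S = degSum A S := by
  let B : SimpleGraph α :=
    { Adj := fun x y => x ∈ S ∧ y ∈ S ∧ A.Adj x y
      symm := ⟨fun x y h => ⟨h.2.1, h.1, h.2.2.symm⟩⟩
      loopless := ⟨fun x h => A.loopless.irrefl x h.2.2⟩ }
  have hB : {e ∈ A.edgeSet | ∀ x ∈ e, x ∈ S} = B.edgeSet := by
    ext e
    induction e using Sym2.ind with
    | _ x y =>
      simp only [Set.mem_ofPred_eq, SimpleGraph.mem_edgeSet, Sym2.mem_iff, forall_eq_or_imp,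
        forall_eq, B]
      tauto
  have h1 : edgeCountIn A S = B.edgeFinset.card := by
    unfold edgeCountIn
    rw [hB, ← SimpleGraph.coe_edgeFinset, Set.ncard_coe_finset]
  rw [h1, ← SimpleGraph.sum_degrees_eq_twice_card_edges]
  unfold degSum
  rw [Finset.sum_filter]
  apply Finset.sum_congr rfl
  intro x _
  rw [← SimpleGraph.card_neighborFinset_eq_degree]
  split_ifs with hx
  · congr 1
    ext y
    simp [B, hx]
  · rw [Finset.card_eq_zero]
    ext y
    simp [B, hx]

open Classical in
theorem FlowerStep.count {α : Type*} [Fintype α] {A : SimpleGraph α} {P S : Set α}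
    {v : Fin 3 → α} {Q W : Fin 3 → Set α} (h : FlowerStep A P S v Q W) :
    degSum A P + 3 = degSum A S + 3 * P.ncard + 3 * S.ncard := by
  have cardS : ∀ T : Set α, T.ncard = (Finset.univ.filter (· ∈ T)).card := by
    intro T
    rw [← Set.ncard_coe_finset]
    congr 1
    ext; simp
  set fS : Finset α := Finset.univ.filter (· ∈ S) with hfS
  set fQ : Fin 3 → Finset α := fun j => Finset.univ.filter (· ∈ Q j) with hfQ
  set fW : Fin 3 → Finset α := fun j => Finset.univ.filter (· ∈ W j) with hfW
  have SP : ∀ x, x ∈ S → x ∈ P := fun x hx => (h.cover x).2 (Or.inl hx)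
  have vP : ∀ j, v j ∈ P := fun j => (h.cover _).2 (Or.inr (Or.inl ⟨j, rfl⟩))
  have QP : ∀ j x, x ∈ Q j → x ∈ P := fun j x hx => (h.cover x).2 (Or.inr (Or.inr ⟨j, hx⟩))
  -- summation over the layer
  have split : ∀ g : α → ℕ, ∑ x ∈ Finset.univ.filter (· ∈ P), g x =
      ∑ x ∈ fS, g x + ∑ j, g (v j) + ∑ j, ∑ x ∈ fQ j, g x := by
    intro g
    have e : Finset.univ.filter (· ∈ P) =
        (fS ∪ Finset.univ.image v) ∪ Finset.univ.biUnion fQ := by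
      ext x
      simp only [Finset.mem_filter, Finset.mem_univ, true_and, h.cover, Finset.mem_union,
        Finset.mem_image, Finset.mem_biUnion, hfS, hfQ, or_assoc, eq_comm]
    rw [e, Finset.sum_union, Finset.sum_union, Finset.sum_image, Finset.sum_biUnion]
    · intro j _ k _ hjk
      simp only [Function.onFun, Finset.disjoint_left, hfQ, Finset.mem_filter, Finset.mem_univ,
        true_and]
      intro x hx hx'
      exact hjk (h.Q_Q _ _ _ hx hx')
    · intro j _ k _ hjk
      exact h.v_inj hjk
    · rw [Finset.disjoint_left]
      intro x hx hx'
      simp only [Finset.mem_image, Finset.mem_univ, true_and] at hx'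
      obtain ⟨j, rfl⟩ := hx'
      exact h.v_S j (by simpa [hfS] using hx)
    · rw [Finset.disjoint_left]
      intro x hx hx'
      simp only [Finset.mem_biUnion, Finset.mem_univ, true_and, hfQ, Finset.mem_filter] at hx'
      obtain ⟨j, hj⟩ := hx'
      simp only [Finset.mem_union, Finset.mem_image, Finset.mem_univ, true_and, hfS,
        Finset.mem_filter] at hx
      rcases hx with hx | ⟨k, rfl⟩
      · exact h.Q_S _ _ hj hx
      · exact h.v_Q _ _ hj
  have hP : P.ncard = fS.card + 3 + ∑ j, (fQ j).card := by
    rw [cardS]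
    have := split (fun _ => 1)
    simpa using this
  have hW : ∀ j, (fW j).card = fS.card := by
    intro j
    choose! w hw1 hw2 hw3 using h.match_S j
    choose! s hs1 hs2 hs3 using h.match_W j
    apply Finset.card_bij' (fun x _ => s x) (fun x _ => w x)
    · intro x hx
      simp only [hfS, hfW, Finset.mem_filter, Finset.mem_univ, true_and] at hx ⊢
      exact hs1 x hx
    · intro x hx
      simp only [hfS, hfW, Finset.mem_filter, Finset.mem_univ, true_and] at hx ⊢
      exact hw1 x hx
    · intro x hx
      simp only [hfW, Finset.mem_filter, Finset.mem_univ, true_and] at hx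
      exact (hw3 (s x) (hs1 x hx) x hx (hs2 x hx).symm).symm
    · intro x hx
      simp only [hfS, Finset.mem_filter, Finset.mem_univ, true_and] at hx
      exact (hs3 (w x) (hw1 x hx) x hx (hw2 x hx).symm).symm
  -- the degrees
  have dS : ∀ x ∈ fS, (Finset.univ.filter (fun y => y ∈ P ∧ A.Adj x y)).card =
      (Finset.univ.filter (fun y => y ∈ S ∧ A.Adj x y)).card + 3 := by
    intro x hx
    simp only [hfS, Finset.mem_filter, Finset.mem_univ, true_and] at hx
    choose w hw1 hw2 hw3 using fun j => h.match_S j x hx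
    have winj : Function.Injective w := by
      intro j k hjk
      exact h.Q_Q j k (w j) (h.W_Q _ _ (hw1 j)) (hjk ▸ h.W_Q _ _ (hw1 k))
    have e : Finset.univ.filter (fun y => y ∈ P ∧ A.Adj x y) =
        Finset.univ.filter (fun y => y ∈ S ∧ A.Adj x y) ∪ Finset.univ.image w := by
      ext y
      simp only [Finset.mem_filter, Finset.mem_univ, true_and, Finset.mem_union,
        Finset.mem_image]
      constructor
      · rintro ⟨hy, hxy⟩
        rcases h.adj_S x y hx hy hxy with e | ⟨j, e⟩
        · exact Or.inl ⟨e, hxy⟩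
        · exact Or.inr ⟨j, (hw3 j y e hxy).symm⟩
      · rintro (⟨hy, hxy⟩ | ⟨j, rfl⟩)
        · exact ⟨SP _ hy, hxy⟩
        · exact ⟨QP j _ (h.W_Q _ _ (hw1 j)), hw2 j⟩
    rw [e, Finset.card_union_of_disjoint, Finset.card_image_of_injective _ winj]
    · simp
    · rw [Finset.disjoint_left]
      intro y hy hy'
      simp only [Finset.mem_filter, Finset.mem_univ, true_and, Finset.mem_image] at hy hy'
      obtain ⟨j, rfl⟩ := hy'
      exact h.Q_S j _ (h.W_Q _ _ (hw1 j)) hy.1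
  have dv : ∀ j, (Finset.univ.filter (fun y => y ∈ P ∧ A.Adj (v j) y)).card =
      2 + (fQ j).card := by
    intro j
    have e : Finset.univ.filter (fun y => y ∈ P ∧ A.Adj (v j) y) =
        (Finset.univ.erase j).image v ∪ fQ j := by
      ext y
      simp only [Finset.mem_filter, Finset.mem_univ, true_and, Finset.mem_union,
        Finset.mem_image, Finset.mem_erase, hfQ, and_true]
      constructor
      · rintro ⟨hy, hxy⟩
        rcases h.adj_v j y hy hxy with ⟨k, hk, rfl⟩ | e
        · exact Or.inl ⟨k, hk, rfl⟩
        · exact Or.inr e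
      · rintro (⟨k, hk, rfl⟩ | e)
        · exact ⟨vP k, h.tri _ _ hk.symm⟩
        · exact ⟨QP j y e, h.petal j y e⟩
    rw [e, Finset.card_union_of_disjoint, Finset.card_image_of_injective _ h.v_inj]
    · simp
    · rw [Finset.disjoint_left]
      intro y hy hy'
      simp only [Finset.mem_image, hfQ, Finset.mem_filter, Finset.mem_univ, true_and] at hy hy'
      obtain ⟨k, -, rfl⟩ := hy
      exact h.v_Q _ _ hy'
  have dQ : ∀ j, ∀ x ∈ fQ j, (Finset.univ.filter (fun y => y ∈ P ∧ A.Adj x y)).card =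
      2 + if x ∈ W j then 1 else 0 := by
    intro j x hx
    simp only [hfQ, Finset.mem_filter, Finset.mem_univ, true_and] at hx
    obtain ⟨m, hm, hxm, -, hmu⟩ := h.mate j x hx
    have hvm : v j ≠ m := fun e => h.v_Q j j (e ▸ hm)
    split_ifs with hxW
    · obtain ⟨s, hs, hxs, hsu⟩ := h.match_W j x hxW
      have e : Finset.univ.filter (fun y => y ∈ P ∧ A.Adj x y) = {v j, m, s} := by
        ext y
        simp only [Finset.mem_filter, Finset.mem_univ, true_and, Finset.mem_insert,
          Finset.mem_singleton]
        constructor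
        · rintro ⟨hy, hxy⟩
          rcases h.adj_Q j x y hx hy hxy with e | e | ⟨-, e⟩
          · exact Or.inl e
          · exact Or.inr (Or.inl (hmu y e hxy))
          · exact Or.inr (Or.inr (hsu y e hxy))
        · rintro (rfl | rfl | rfl)
          · exact ⟨vP j, (h.petal j x hx).symm⟩
          · exact ⟨QP j _ hm, hxm⟩
          · exact ⟨SP _ hs, hxs⟩
      have hvs : v j ≠ s := fun e => h.v_S j (e ▸ hs)
      have hms : m ≠ s := fun e => h.Q_S j m hm (e ▸ hs)
      rw [e, Finset.card_insert_of_notMem (by simp [hvm, hvs]), Finset.card_pair hms]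
    · have e : Finset.univ.filter (fun y => y ∈ P ∧ A.Adj x y) = {v j, m} := by
        ext y
        simp only [Finset.mem_filter, Finset.mem_univ, true_and, Finset.mem_insert,
          Finset.mem_singleton]
        constructor
        · rintro ⟨hy, hxy⟩
          rcases h.adj_Q j x y hx hy hxy with e | e | ⟨e, -⟩
          · exact Or.inl e
          · exact Or.inr (hmu y e hxy)
          · exact absurd e hxW
        · rintro (rfl | rfl)
          · exact ⟨vP j, (h.petal j x hx).symm⟩
          · exact ⟨QP j _ hm, hxm⟩
      rw [e, Finset.card_pair hvm]
  have sQ : ∀ j, ∑ x ∈ fQ j, (Finset.univ.filter (fun y => y ∈ P ∧ A.Adj x y)).card =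
      2 * (fQ j).card + fS.card := by
    intro j
    rw [Finset.sum_congr rfl (dQ j), Finset.sum_add_distrib, ← hW j]
    congr 1
    · simp [mul_comm]
    · rw [Finset.sum_boole]
      simp only [Nat.cast_id]
      congr 1
      ext x
      simp only [hfQ, hfW, Finset.mem_filter, Finset.mem_univ, true_and]
      exact ⟨fun e => e.2, fun e => ⟨h.W_Q _ _ e, e⟩⟩
  have sS : ∑ x ∈ fS, (Finset.univ.filter (fun y => y ∈ P ∧ A.Adj x y)).card =
      degSum A S + 3 * fS.card := by
    rw [Finset.sum_congr rfl dS, Finset.sum_add_distrib]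
    simp [degSum, hfS, mul_comm]
  have total : degSum A P = degSum A S + 3 * fS.card + ∑ j, (2 + (fQ j).card) +
      ∑ j, (2 * (fQ j).card + fS.card) := by
    conv_lhs => unfold degSum
    rw [split, sS]
    simp only [dv, sQ]
  have hSc : S.ncard = fS.card := cardS S
  rw [total, hP, hSc]
  simp only [Fin.sum_univ_three]
  omega

/-- Extracting the layers of a flower. -/
theorem flower_steps {n r : ℕ} {A : SimpleGraph (Fin n)} {V : ℕ → Set (Fin n)}
    (hf : IsRFlower A r V) :
    V 1 = Set.univ ∧ MaxC4FreeOn A (V (r + 1)) ∧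
    ∀ i, 1 ≤ i → i ≤ r → ∃ v Q W, FlowerStep A (V i) (V (i + 1)) v Q W := by
  obtain ⟨v, R, VP, W, U, Y, h1, hdec, htri, hpet, hpart, hcore, hedge⟩ := hf
  refine ⟨h1, hcore, ?_⟩
  have cover : ∀ i, 1 ≤ i → i ≤ r → ∀ x,
      x ∈ V i ↔ x ∈ V (i + 1) ∨ (∃ j, x = v i j) ∨ ∃ j, x ∈ VP i j := by
    intro i hi hir x
    rw [(hdec i hi hir).1, (htri i hi hir).1]
    simp only [Set.mem_union, Set.mem_insert_iff, Set.mem_singleton_iff, Fin.exists_fin_succ,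
      Fin.exists_fin_zero]
    simp
    tauto
  have RV : ∀ i, 1 ≤ i → i ≤ r → ∀ x, x ∈ R i ↔ ∃ j, x = v i j := by
    intro i hi hir x
    rw [(htri i hi hir).1]
    simp [Fin.exists_fin_succ]
  have vS : ∀ i, 1 ≤ i → i ≤ r → ∀ j, v i j ∉ V (i + 1) := by
    intro i hi hir j hj
    have hd := (hdec i hi hir).2 (Set.mem_univ 0) (Set.mem_univ 1) (by decide)
    exact Set.disjoint_left.1 hd hj ((RV i hi hir _).2 ⟨j, rfl⟩)
  have vQ : ∀ i, 1 ≤ i → i ≤ r → ∀ j k, v i j ∉ VP i k := by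
    intro i hi hir j k hj
    rw [hpet i hi hir k] at hj
    exact hj.2 ((RV i hi hir _).2 ⟨j, rfl⟩)
  have QS : ∀ i, 1 ≤ i → i ≤ r → ∀ j x, x ∈ VP i j → x ∉ V (i + 1) := by
    intro i hi hir j x hj hx
    have d := (hdec i hi hir).2
    fin_cases j
    · exact Set.disjoint_left.1 (d (Set.mem_univ 0) (Set.mem_univ 2) (by decide)) hx hj
    · exact Set.disjoint_left.1 (d (Set.mem_univ 0) (Set.mem_univ 3) (by decide)) hx hj
    · exact Set.disjoint_left.1 (d (Set.mem_univ 0) (Set.mem_univ 4) (by decide)) hx hj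
  have QQ : ∀ i, 1 ≤ i → i ≤ r → ∀ j k x, x ∈ VP i j → x ∈ VP i k → j = k := by
    intro i hi hir j k x hj hk
    by_contra hjk
    have d := (hdec i hi hir).2
    have d01 := Set.disjoint_left.1 (d (Set.mem_univ 2) (Set.mem_univ 3) (by decide))
    have d02 := Set.disjoint_left.1 (d (Set.mem_univ 2) (Set.mem_univ 4) (by decide))
    have d12 := Set.disjoint_left.1 (d (Set.mem_univ 3) (Set.mem_univ 4) (by decide))
    fin_cases j <;> fin_cases k <;>
      first
      | exact hjk rfl
      | exact d01 hj hk
      | exact d02 hj hk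
      | exact d12 hj hk
      | exact d01 hk hj
      | exact d02 hk hj
      | exact d12 hk hj
  have WQ : ∀ i, 1 ≤ i → i ≤ r → ∀ j x, x ∈ W i j → x ∈ VP i j := by
    intro i hi hir j x hx
    rw [(hpart i hi hir j).1]; exact Or.inl (Or.inl hx)
  have UQ : ∀ i, 1 ≤ i → i ≤ r → ∀ j x, x ∈ U i j → x ∈ VP i j := by
    intro i hi hir j x hx
    rw [(hpart i hi hir j).1]; exact Or.inl (Or.inr hx)
  have YQ : ∀ i, 1 ≤ i → i ≤ r → ∀ j x, x ∈ Y i j → x ∈ VP i j := by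
    intro i hi hir j x hx
    rw [(hpart i hi hir j).1]; exact Or.inr hx
  have anti : ∀ i k, 1 ≤ i → i ≤ k → k ≤ r + 1 → V k ⊆ V i := by
    intro i k hi hik
    induction k, hik using Nat.le_induction with
    | base => intro _; exact subset_rfl
    | succ k hk ih =>
      intro hkr x hx
      exact ih (by omega) ((cover k (by omega) (by omega) x).2 (Or.inl hx))
  -- the edges inside a layer
  have edges : ∀ i, 1 ≤ i → i ≤ r → ∀ x y, x ∈ V i → y ∈ V i → A.Adj x y →
      (x ∈ V (i + 1) ∧ y ∈ V (i + 1)) ∨ (x ∈ R i ∧ y ∈ R i) ∨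
         ∃ j : Fin 3,
           (x = v i j ∧ y ∈ VP i j) ∨ (y = v i j ∧ x ∈ VP i j) ∨
           (x ∈ W i j ∧ y ∈ V (i + 1)) ∨ (y ∈ W i j ∧ x ∈ V (i + 1)) ∨
           (x ∈ W i j ∧ y ∈ U i j) ∨ (y ∈ W i j ∧ x ∈ U i j) ∨
           (x ∈ Y i j ∧ y ∈ Y i j) := by
    intro i hi hir x y hx hy hxy
    rcases hedge x y hxy with ⟨ex, ey⟩ | ⟨k, hk, hkr, hc⟩
    · exact Or.inl ⟨anti (i + 1) (r + 1) (by omega) (by omega) le_rfl ex,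
        anti (i + 1) (r + 1) (by omega) (by omega) le_rfl ey⟩
    rcases lt_trichotomy k i with hki | rfl | hki
    · exfalso
      have sub := anti (k + 1) i (by omega) (by omega) (by omega)
      have hx' := sub hx
      have hy' := sub hy
      have nR : ∀ z, z ∈ R k → z ∉ V (k + 1) := by
        intro z hz
        obtain ⟨j, rfl⟩ := (RV k hk hkr z).1 hz
        exact vS k hk hkr j
      rcases hc with ⟨c, -⟩ | ⟨j, ⟨-, c⟩ | ⟨-, c⟩ | ⟨c, -⟩ | ⟨c, -⟩ | ⟨c, -⟩ | ⟨c, -⟩ | ⟨c, -⟩⟩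
      · exact nR x c hx'
      · exact QS k hk hkr j y c hy'
      · exact QS k hk hkr j x c hx'
      · exact QS k hk hkr j x (WQ k hk hkr j x c) hx'
      · exact QS k hk hkr j y (WQ k hk hkr j y c) hy'
      · exact QS k hk hkr j x (WQ k hk hkr j x c) hx'
      · exact QS k hk hkr j y (WQ k hk hkr j y c) hy'
      · exact QS k hk hkr j x (YQ k hk hkr j x c) hx'
    · exact Or.inr hc
    · left
      have sub := anti (i + 1) k (by omega) (by omega) (by omega)
      have cS : ∀ z, z ∈ V (k + 1) → z ∈ V (i + 1) :=
        fun z hz => sub ((cover k hk hkr z).2 (Or.inl hz))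
      have cv : ∀ j, v k j ∈ V (i + 1) :=
        fun j => sub ((cover k hk hkr _).2 (Or.inr (Or.inl ⟨j, rfl⟩)))
      have cQ : ∀ j z, z ∈ VP k j → z ∈ V (i + 1) :=
        fun j z hz => sub ((cover k hk hkr z).2 (Or.inr (Or.inr ⟨j, hz⟩)))
      have cR : ∀ z, z ∈ R k → z ∈ V (i + 1) := by
        intro z hz
        obtain ⟨j, rfl⟩ := (RV k hk hkr z).1 hz
        exact cv j
      have cW := fun j z hz => cQ j z (WQ k hk hkr j z hz)
      have cU := fun j z hz => cQ j z (UQ k hk hkr j z hz)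
      have cY := fun j z hz => cQ j z (YQ k hk hkr j z hz)
      rcases hc with ⟨c, d⟩ | ⟨j, ⟨c, d⟩ | ⟨c, d⟩ | ⟨c, d⟩ | ⟨c, d⟩ | ⟨c, d⟩ | ⟨c, d⟩ | ⟨c, d⟩⟩
      · exact ⟨cR x c, cR y d⟩
      · exact ⟨c ▸ cv j, cQ j y d⟩
      · exact ⟨cQ j x d, c ▸ cv j⟩
      · exact ⟨cW j x c, cS y d⟩
      · exact ⟨cS x d, cW j y c⟩
      · exact ⟨cW j x c, cU j y d⟩
      · exact ⟨cU j x d, cW j y c⟩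
      · exact ⟨cY j x c, cY j y d⟩
  intro i hi hir
  have tri := (htri i hi hir).2
  have cover := cover i hi hir
  have RV := RV i hi hir
  have vS := vS i hi hir
  have vQ := vQ i hi hir
  have QS := QS i hi hir
  have QQ := QQ i hi hir
  have WQ := WQ i hi hir
  have UQ := UQ i hi hir
  have YQ := YQ i hi hir
  have edges := edges i hi hir
  have SP : ∀ x, x ∈ V (i + 1) → x ∈ V i := fun x hx => (cover x).2 (Or.inl hx)
  have vP : ∀ j, v i j ∈ V i := fun j => (cover _).2 (Or.inr (Or.inl ⟨j, rfl⟩))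
  have QP : ∀ j x, x ∈ VP i j → x ∈ V i := fun j x hx => (cover x).2 (Or.inr (Or.inr ⟨j, hx⟩))
  have vinj : Function.Injective (v i) := by
    intro j k hjk
    by_contra hne
    exact (tri j k hne).ne hjk
  -- edges at a petal vertex
  have adjQ : ∀ j x y, x ∈ VP i j → y ∈ V i → A.Adj x y → y = v i j ∨
      (x ∈ W i j ∧ y ∈ V (i + 1)) ∨ (x ∈ W i j ∧ y ∈ U i j) ∨ (y ∈ W i j ∧ x ∈ U i j) ∨
      (x ∈ Y i j ∧ y ∈ Y i j) := by
    intro j x y hx hy hxy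
    rcases edges x y (QP j x hx) hy hxy with ⟨c, d⟩ | ⟨c, d⟩ |
      ⟨k, ⟨c, d⟩ | ⟨c, d⟩ | ⟨c, d⟩ | ⟨c, d⟩ | ⟨c, d⟩ | ⟨c, d⟩ | ⟨c, d⟩⟩
    · exact absurd c (QS j x hx)
    · obtain ⟨k, rfl⟩ := (RV x).1 c
      exact absurd hx (vQ _ _)
    · subst c; exact absurd hx (vQ _ _)
    · obtain rfl := QQ j k x hx d
      exact Or.inl c
    · obtain rfl := QQ j k x hx (WQ k x c)
      exact Or.inr (Or.inl ⟨c, d⟩)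
    · exact absurd d (QS j x hx)
    · obtain rfl := QQ j k x hx (WQ k x c)
      exact Or.inr (Or.inr (Or.inl ⟨c, d⟩))
    · obtain rfl := QQ j k x hx (UQ k x d)
      exact Or.inr (Or.inr (Or.inr (Or.inl ⟨c, d⟩)))
    · obtain rfl := QQ j k x hx (YQ k x c)
      exact Or.inr (Or.inr (Or.inr (Or.inr ⟨c, d⟩)))
  refine ⟨v i, VP i, W i, ?_⟩
  constructor
  · exact cover
  · exact vinj
  · exact vS
  · exact vQ
  · exact QS
  · exact QQ
  · exact WQ
  · exact tri
  · intro j x hx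
    rw [hpet i hi hir j] at hx
    exact hx.1.2
  · intro j x hx
    obtain ⟨hun, dWU, dWY, dUY, mS, mU, mY⟩ := hpart i hi hir j
    have dWU := Set.disjoint_left.1 dWU
    have dWY := Set.disjoint_left.1 dWY
    have dUY := Set.disjoint_left.1 dUY
    have hx' := hx
    rw [hun] at hx'
    rcases hx' with (hxW | hxU) | hxY
    · obtain ⟨m, ⟨hm, hxm⟩, hu⟩ := mU.1 x hxW
      refine ⟨m, UQ j m hm, hxm, fun _ e => dWU e hm, ?_⟩
      intro y hy hxy
      rcases adjQ j x y hx (QP j y hy) hxy with c | ⟨c, d⟩ | ⟨c, d⟩ | ⟨c, d⟩ | ⟨c, d⟩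
      · subst c; exact absurd hy (vQ _ _)
      · exact absurd d (QS j y hy)
      · exact hu y ⟨d, hxy⟩
      · exact absurd d (dWU hxW)
      · exact absurd c (dWY hxW)
    · obtain ⟨m, ⟨hm, hxm⟩, hu⟩ := mU.2 x hxU
      refine ⟨m, WQ j m hm, hxm.symm, fun e => absurd hxU (dWU e), ?_⟩
      intro y hy hxy
      rcases adjQ j x y hx (QP j y hy) hxy with c | ⟨c, d⟩ | ⟨c, d⟩ | ⟨c, d⟩ | ⟨c, d⟩
      · subst c; exact absurd hy (vQ _ _)
      · exact absurd d (QS j y hy)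
      · exact absurd hxU (dWU c)
      · exact hu y ⟨c, hxy.symm⟩
      · exact absurd c (dUY hxU)
    · obtain ⟨m, ⟨hm, hxm⟩, hu⟩ := mY x hxY
      refine ⟨m, YQ j m hm, hxm, fun e => absurd hxY (dWY e), ?_⟩
      intro y hy hxy
      rcases adjQ j x y hx (QP j y hy) hxy with c | ⟨c, d⟩ | ⟨c, d⟩ | ⟨c, d⟩ | ⟨c, d⟩
      · subst c; exact absurd hy (vQ _ _)
      · exact absurd d (QS j y hy)
      · exact absurd hxY (dWY c)
      · exact absurd hxY (dUY d)
      · exact hu y ⟨d, hxy⟩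
  · intro j x hx
    obtain ⟨s, ⟨hs, hxs⟩, hu⟩ := (hpart i hi hir j).2.2.2.2.1.1 x hx
    exact ⟨s, hs, hxs, fun y hy hxy => hu y ⟨hy, hxy⟩⟩
  · intro j s hs
    obtain ⟨w, ⟨hw, hsw⟩, hu⟩ := (hpart i hi hir j).2.2.2.2.1.2 s hs
    exact ⟨w, hw, hsw.symm, fun y hy hxy => hu y ⟨hy, hxy.symm⟩⟩
  · intro j y hy hxy
    by_cases hyR : y ∈ R i
    · obtain ⟨k, rfl⟩ := (RV y).1 hyR
      refine Or.inl ⟨k, ?_, rfl⟩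
      rintro rfl
      exact hxy.ne rfl
    · right
      rw [hpet i hi hir j]
      exact ⟨⟨hy, hxy⟩, hyR⟩
  · intro j x y hx hy hxy
    rcases adjQ j x y hx hy hxy with c | ⟨c, d⟩ | ⟨c, d⟩ | ⟨c, d⟩ | ⟨c, d⟩
    · exact Or.inl c
    · exact Or.inr (Or.inr ⟨c, d⟩)
    · exact Or.inr (Or.inl (UQ j y d))
    · exact Or.inr (Or.inl (WQ j y c))
    · exact Or.inr (Or.inl (YQ j y d))
  · intro x y hx hy hxy
    rcases (cover y).1 hy with e | ⟨j, rfl⟩ | ⟨j, e⟩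
    · exact Or.inl e
    · exfalso
      have : x ∈ VP i j := by
        rw [hpet i hi hir j]
        refine ⟨⟨SP x hx, hxy.symm⟩, fun hR => ?_⟩
        obtain ⟨k, rfl⟩ := (RV x).1 hR
        exact vS _ hx
      exact QS j x this hx
    · right
      rcases adjQ j y x e (SP x hx) hxy.symm with c | ⟨c, d⟩ | ⟨c, d⟩ | ⟨c, d⟩ | ⟨c, d⟩
      · subst c; exact absurd hx (vS _)
      · exact ⟨j, c⟩
      · exact ⟨j, c⟩
      · exact absurd hx (QS j x (WQ j x c))
      · exact absurd hx (QS j x (YQ j x d))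

/-- If a graph `Γ` on `[n]` contains a spanning `r`-flower `A`
with associated sets `V 1, …, V (r+1)`, then `A` is `C₄`-saturated in `Γ` and
`|E(A)| = |E(A[V^{r+1}])| + (3/2)(n − |V^{r+1}| − r) + 3(|V²| + … + |V^{r+1}|)`. -/
theorem rflower_saturated_and_count {n r : ℕ} (hr : 1 ≤ r)
    (Γ A : SimpleGraph (Fin n)) (V : ℕ → Set (Fin n))
    (hflower : IsRFlower A r V) (hsub : A ≤ Γ) :
    IsSaturatedIn Γ A (cycGraph 4) ∧
    (A.edgeSet.ncard : ℝ)
      = (edgeCountIn A (V (r + 1)) : ℝ)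
        + (3 / 2) * ((n : ℝ) - ((V (r + 1)).ncard : ℝ) - (r : ℝ))
        + 3 * ∑ i ∈ Finset.Icc 2 (r + 1), ((V i).ncard : ℝ) := by
  obtain ⟨h1, hcore, hstep⟩ := flower_steps hflower
  obtain ⟨c1, c2⟩ := core_facts A _ hcore
  have down : ∀ k, k ≤ r → NoC4 A (V (r + 1 - k)) ∧ Path3 A (V (r + 1 - k)) ∧
      2 * (edgeCountIn A (V (r + 1 - k)) : ℝ) = 2 * (edgeCountIn A (V (r + 1)) : ℝ)
        + 3 * ((V (r + 1 - k)).ncard - ((V (r + 1)).ncard : ℝ) - k)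
        + 6 * ∑ i ∈ Finset.Icc (r + 1 - k + 1) (r + 1), ((V i).ncard : ℝ) := by
    intro k
    induction k with
    | zero =>
      intro _
      refine ⟨c1, c2, ?_⟩
      simp
    | succ k ih =>
      intro hk
      obtain ⟨d1, d2, d3⟩ := ih (by omega)
      obtain ⟨v, Q, W, hs⟩ := hstep (r + 1 - (k + 1)) (by omega) (by omega)
      have e : r + 1 - (k + 1) + 1 = r + 1 - k := by omega
      rw [e] at hs ⊢
      refine ⟨hs.noC4 d1, hs.path3 d2, ?_⟩
      have hc := hs.count
      rw [← two_edgeCountIn, ← two_edgeCountIn] at hc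
      have hc' : 2 * (edgeCountIn A (V (r + 1 - (k + 1))) : ℝ) + 3 =
          2 * (edgeCountIn A (V (r + 1 - k)) : ℝ) + 3 * ((V (r + 1 - (k + 1))).ncard : ℝ)
            + 3 * ((V (r + 1 - k)).ncard : ℝ) := by exact_mod_cast hc
      have hsum : ∑ i ∈ Finset.Icc (r + 1 - k) (r + 1), ((V i).ncard : ℝ) =
          ((V (r + 1 - k)).ncard : ℝ) +
            ∑ i ∈ Finset.Icc (r + 1 - k + 1) (r + 1), ((V i).ncard : ℝ) := by
        rw [← Finset.insert_Icc_add_one_left_eq_Icc (by omega : r + 1 - k ≤ r + 1),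
          Finset.sum_insert (by simp)]
      rw [hsum, Nat.cast_succ]
      linarith
  obtain ⟨f1, f2, f3⟩ := down r le_rfl
  have e : r + 1 - r = 1 := by omega
  rw [e, h1] at f1 f2 f3
  refine ⟨⟨hsub, ?_, ?_⟩, ?_⟩
  · rw [copy_iff]
    rintro ⟨a, x, b, y, hab, hxy, g1, g2, g3, g4⟩
    exact f1 a x b y trivial trivial trivial trivial hab hxy g1 g2 g3 g4
  · intro x y hxy hn
    exact copy_of_path A x y hxy.ne hn (f2 x y trivial trivial hxy.ne hn)
  · have hE : edgeCountIn A Set.univ = A.edgeSet.ncard := by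
      unfold edgeCountIn
      congr 1
      ext e
      simp
    rw [hE, Set.ncard_univ, Nat.card_fin] at f3
    linarith
end

section
/- Let p ∈ (0,1) be fixed and C a fixed positive integer. There exist constants c₀ > 0 and n₀ (depending only on p and C) such that the following holds for all n ≥ n₀: for every set ℰ ⊆ [n]×[n] with the property that every i ∈ [n] occurs as the first coordinate of at most C pairs of ℰ and as the second coordinate of at most C pairs of ℰ, the probability that the bipartite random graph G(n,n,p) contains a perfect matching none of whose edges corresponds to a pair in ℰ is at least 1 − e^{−c₀·n}. -/
open MeasureTheory Filter Real

/-- The product Bernoulli measure on edge indicators of the complete bipartite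
graph `K_{n,n}`: the bipartite binomial random graph `G(n,n,p)`. -/
noncomputable def bipMeasure (n : ℕ) (p : ℝ) : Measure (Fin n × Fin n → Bool) :=
  Measure.pi fun _ => (PMF.bernoulli (min (Real.toNNReal p) 1) (min_le_right _ _)).toMeasure

lemma bip_prob (n : ℕ) (p : ℝ) (hp0 : 0 < p) (hp1 : p < 1) (F : Finset (Fin n × Fin n)) :
    bipMeasure n p {ω | ∀ e ∈ F, ω e = false} = ENNReal.ofReal ((1 - p) ^ F.card) := by
  classical
  have hset : {ω : Fin n × Fin n → Bool | ∀ e ∈ F, ω e = false} =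
      Set.pi Set.univ (fun e => if e ∈ F then {false} else Set.univ) := by
    ext ω
    simp only [Set.mem_setOf_eq, Set.mem_pi, Set.mem_univ, true_imp_iff]
    refine forall_congr' fun e => ?_
    by_cases h : e ∈ F <;> simp [h]
  have hq : (PMF.bernoulli (min (Real.toNNReal p) 1) (min_le_right _ _)).toMeasure {false}
      = ENNReal.ofReal (1 - p) := by
    rw [PMF.toMeasure_apply_singleton _ _ (by measurability)]
    have hm : min (Real.toNNReal p) 1 = Real.toNNReal p := by
      apply min_eq_left
      simpa using hp1.le
    simp only [PMF.bernoulli_apply, hm, cond_false]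
    rw [ENNReal.ofReal_sub _ hp0.le]
    simp [ENNReal.ofReal]
  rw [hset, bipMeasure, Measure.pi_pi]
  have : ∀ e : Fin n × Fin n,
      (PMF.bernoulli (min (Real.toNNReal p) 1) (min_le_right _ _)).toMeasure
        (if e ∈ F then {false} else Set.univ) =
      if e ∈ F then ENNReal.ofReal (1 - p) else 1 := by
    intro e
    by_cases h : e ∈ F
    · simp only [h, if_true, hq]
    · simp only [h, if_false, measure_univ]
  simp only [this]
  rw [Finset.prod_ite_mem, Finset.univ_inter, Finset.prod_const,
    ENNReal.ofReal_pow (by linarith)]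

lemma hall_fail (n : ℕ) (H : Fin n → Finset (Fin n))
    (h : ¬ ∃ σ : Equiv.Perm (Fin n), ∀ i, σ i ∈ H i) :
    ∃ a ∈ Finset.Icc 1 n, ∃ S ∈ Finset.powersetCard a (Finset.univ : Finset (Fin n)),
      ∃ T ∈ Finset.powersetCard (n + 1 - a) (Finset.univ : Finset (Fin n)),
        ∀ i ∈ S, ∀ j ∈ T, j ∉ H i := by
  classical
  have h1 : ¬ ∀ s : Finset (Fin n), s.card ≤ (s.biUnion H).card := by
    intro hs
    obtain ⟨f, hf, hfm⟩ := (Finset.all_card_le_biUnion_card_iff_exists_injective H).1 hs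
    exact h ⟨Equiv.ofBijective f (Finite.injective_iff_bijective.1 hf), hfm⟩
  push Not at h1
  obtain ⟨S, hS⟩ := h1
  have hSn : S.card ≤ n := by simpa using Finset.card_le_univ S
  have hc : n + 1 - S.card ≤ ((S.biUnion H)ᶜ).card := by
    rw [Finset.card_compl, Fintype.card_fin]; omega
  obtain ⟨T, hT, hTc⟩ := Finset.exists_subset_card_eq hc
  refine ⟨S.card, Finset.mem_Icc.2 ⟨by omega, hSn⟩, S, by simp [Finset.mem_powersetCard],
    T, by simp [Finset.mem_powersetCard, hTc], ?_⟩
  intro i hi j hj hij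
  have := hT hj
  rw [Finset.mem_compl] at this
  exact this (Finset.mem_biUnion.2 ⟨i, hi, hij⟩)

open Classical in
lemma card_avoid (n C : ℕ) (E : Set (Fin n × Fin n))
    (hE : ∀ i : Fin n, {j : Fin n | (i, j) ∈ E}.ncard ≤ C ∧ {j : Fin n | (j, i) ∈ E}.ncard ≤ C)
    (S T : Finset (Fin n)) :
    S.card * (T.card - C) ≤ ((S ×ˢ T).filter (fun e => e ∉ E)).card ∧
    T.card * (S.card - C) ≤ ((S ×ˢ T).filter (fun e => e ∉ E)).card := by
  have key : ∀ (U : Finset (Fin n)) (P : Fin n → Prop), {j | P j}.ncard ≤ C →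
      U.card - C ≤ (U.filter (fun j => ¬ P j)).card := by
    intro U P hP
    have h1 := Finset.card_filter_add_card_filter_not (s := U) P
    have h2 : (U.filter P).card ≤ {j | P j}.ncard := by
      rw [← Set.ncard_coe_finset]
      apply Set.ncard_le_ncard _ (Set.toFinite _)
      intro x hx
      simpa using (Finset.mem_filter.1 hx).2
    omega
  constructor
  · rw [Finset.card_filter, Finset.sum_product, ← smul_eq_mul]
    apply Finset.card_nsmul_le_sum
    intro i _
    rw [← Finset.card_filter]
    exact key T (fun j => (i, j) ∈ E) (hE i).1
  · rw [Finset.card_filter, Finset.sum_product_right, ← smul_eq_mul]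
    apply Finset.card_nsmul_le_sum
    intro i _
    rw [← Finset.card_filter]
    exact key S (fun j => (j, i) ∈ E) (hE i).2

lemma term_bound_s15 (n a : ℕ) (ha : 1 ≤ a) (han : a ≤ n) (q : ℝ) (hq0 : 0 < q)
    (hx : (n : ℝ) ^ 2 * q ^ (n / 4) ≤ 1) :
    (n.choose a : ℝ) * (n.choose (n + 1 - a)) * q ^ (min a (n + 1 - a) * (n / 4))
      ≤ (n : ℝ) ^ 2 * q ^ (n / 4) := by
  have hn : (1 : ℝ) ≤ n := by exact_mod_cast ha.trans han
  have hch : ∀ m, m ≤ n → 1 ≤ m →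
      (n.choose m : ℝ) ≤ n ^ m ∧ (n.choose (n + 1 - m) : ℝ) ≤ n ^ m := by
    intro m hm hm1
    have h1 : ∀ k, (n.choose k : ℝ) ≤ n ^ k := fun k => by exact_mod_cast Nat.choose_le_pow n k
    refine ⟨h1 m, ?_⟩
    have : n.choose (n + 1 - m) = n.choose (m - 1) := by
      rw [← Nat.choose_symm (show m - 1 ≤ n by omega)]
      congr 1; omega
    rw [this]
    exact (h1 _).trans (pow_le_pow_right₀ hn (by omega))
  set m := min a (n + 1 - a) with hm
  have hm1 : 1 ≤ m := by omega
  have hb : (n.choose a : ℝ) ≤ n ^ m ∧ (n.choose (n + 1 - a) : ℝ) ≤ n ^ m := by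
    rcases le_total a (n + 1 - a) with h | h
    · have : m = a := by omega
      rw [this]; exact hch a han ha
    · have h2 : m = n + 1 - a := by omega
      have h3 := hch (n + 1 - a) (by omega) (by omega)
      rw [show n + 1 - (n + 1 - a) = a by omega] at h3
      rw [h2]; exact ⟨h3.2, h3.1⟩
  calc (n.choose a : ℝ) * (n.choose (n + 1 - a)) * q ^ (m * (n / 4))
      ≤ (n ^ m : ℝ) * n ^ m * q ^ (m * (n / 4)) := by
        gcongr
        · exact hb.1
        · exact hb.2
    _ = ((n : ℝ) ^ 2 * q ^ (n / 4)) ^ m := by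
        rw [mul_pow, ← pow_mul, ← pow_mul, mul_comm (n / 4) m, ← pow_add]
        congr 2; omega
    _ ≤ (n : ℝ) ^ 2 * q ^ (n / 4) := by
        apply pow_le_of_le_one (by positivity) hx (by omega)

lemma asymp (q : ℝ) (hq0 : 0 < q) (hq1 : q < 1) :
    ∃ c₀ > (0 : ℝ), ∃ n₀ : ℕ, ∀ n ≥ n₀, (n : ℝ) * ((n : ℝ) ^ 2 * q ^ (n / 4)) ≤ Real.exp (-c₀ * n) := by
  have hl : Real.log q < 0 := Real.log_neg hq0 hq1
  refine ⟨-Real.log q / 8, by linarith, ?_⟩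
  set r := Real.exp (Real.log q / 8) with hr
  have hr0 : 0 < r := Real.exp_pos _
  have hr1 : r < 1 := by rw [hr, Real.exp_lt_one_iff]; linarith
  have hr8 : r ^ 8 = q := by
    rw [hr, ← Real.exp_nat_mul]
    push_cast
    rw [mul_div_cancel₀ _ (by norm_num), Real.exp_log hq0]
  have ht := tendsto_pow_const_mul_const_pow_of_abs_lt_one 3
    (show |r| < 1 by rw [abs_of_pos hr0]; exact hr1)
  have he := ht.eventually (ge_mem_nhds hq0)
  obtain ⟨n₀, hn₀⟩ := eventually_atTop.1 he
  refine ⟨n₀, fun n hn => ?_⟩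
  have h1 := hn₀ n hn
  have h2 : Real.exp (-(-Real.log q / 8) * n) = r ^ n := by
    rw [hr, ← Real.exp_nat_mul]; congr 1; ring
  rw [h2]
  have h3 : q * q ^ (n / 4) ≤ r ^ n * r ^ n := by
    rw [← pow_succ', ← hr8, ← pow_mul, ← pow_add]
    exact pow_le_pow_of_le_one hr0.le hr1.le (by omega)
  have h4 : (0 : ℝ) < r ^ n := by positivity
  have h5 : (n : ℝ) ^ 3 * (q * q ^ (n / 4)) ≤ q * r ^ n := by
    calc (n : ℝ) ^ 3 * (q * q ^ (n / 4)) ≤ (n : ℝ) ^ 3 * (r ^ n * r ^ n) := by gcongr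
      _ = ((n : ℝ) ^ 3 * r ^ n) * r ^ n := by ring
      _ ≤ q * r ^ n := by gcongr
  have h6 : q * ((n : ℝ) * ((n : ℝ) ^ 2 * q ^ (n / 4))) ≤ q * r ^ n := by
    calc _ = (n : ℝ) ^ 3 * (q * q ^ (n / 4)) := by ring
      _ ≤ _ := h5
  exact le_of_mul_le_mul_left h6 hq0

/-- For fixed `p ∈ (0,1)` and a fixed positive integer `C`,
there are `c₀ > 0` and `n₀` such that for all `n ≥ n₀` and every set
`ℰ ⊆ [n]×[n]` in which every index occurs at most `C` times as a first
coordinate and at most `C` times as a second coordinate, with probability at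
least `1 − e^{−c₀n}` the graph `G(n,n,p)` has a perfect matching avoiding `ℰ`. -/
theorem bipartite_matching_avoiding (p : ℝ) (hp0 : 0 < p) (hp1 : p < 1)
    (C : ℕ) (hC : 0 < C) :
    ∃ c₀ > (0 : ℝ), ∃ n₀ : ℕ, ∀ n ≥ n₀, ∀ E : Set (Fin n × Fin n),
      (∀ i : Fin n, {j : Fin n | (i, j) ∈ E}.ncard ≤ C ∧
                    {j : Fin n | (j, i) ∈ E}.ncard ≤ C) →
      1 - ENNReal.ofReal (Real.exp (-c₀ * n)) ≤
        bipMeasure n p {ω | ∃ σ : Equiv.Perm (Fin n),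
          ∀ i : Fin n, ω (i, σ i) = true ∧ (i, σ i) ∉ E} := by
  classical
  have hq0 : 0 < 1 - p := by linarith
  have hq1 : 1 - p < 1 := by linarith
  obtain ⟨c₀, hc₀, n₀, hn₀⟩ := asymp (1 - p) hq0 hq1
  refine ⟨c₀, hc₀, max n₀ (4 * C), fun n hn E hE => ?_⟩
  have hn1 := hn₀ n (le_trans (le_max_left _ _) hn)
  have hn2 : 4 * C ≤ n := le_trans (le_max_right _ _) hn
  set G := {ω : Fin n × Fin n → Bool | ∃ σ : Equiv.Perm (Fin n),
          ∀ i : Fin n, ω (i, σ i) = true ∧ (i, σ i) ∉ E} with hG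
  have hx : (n : ℝ) ^ 2 * (1 - p) ^ (n / 4) ≤ 1 := by
    have h1 : (1 : ℝ) ≤ n := by exact_mod_cast (by omega : 1 ≤ n)
    have h2 : 0 ≤ (n : ℝ) ^ 2 * (1 - p) ^ (n / 4) := by positivity
    have h3 : Real.exp (-c₀ * n) ≤ 1 := by
      rw [Real.exp_le_one_iff]
      have := mul_nonneg hc₀.le (Nat.cast_nonneg (α := ℝ) n)
      linarith
    nlinarith
  have huniv : bipMeasure n p Set.univ = 1 := by
    rw [bipMeasure]; exact measure_univ
  have hsub : Gᶜ ⊆ ⋃ a ∈ Finset.Icc 1 n,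
      ⋃ S ∈ Finset.powersetCard a (Finset.univ : Finset (Fin n)),
      ⋃ T ∈ Finset.powersetCard (n + 1 - a) (Finset.univ : Finset (Fin n)),
        {ω : Fin n × Fin n → Bool | ∀ e ∈ (S ×ˢ T).filter (fun e => e ∉ E), ω e = false} := by
    intro ω hω
    obtain ⟨a, ha, S, hS, T, hT, hST⟩ := hall_fail n
      (fun i => Finset.univ.filter (fun j => ω (i, j) = true ∧ (i, j) ∉ E)) (by
        simpa [hG] using hω)
    simp only [Set.mem_iUnion, exists_prop]
    refine ⟨a, ha, S, hS, T, hT, ?_⟩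
    rintro ⟨i, j⟩ he
    rw [Finset.mem_filter, Finset.mem_product] at he
    have := hST i he.1.1 j he.1.2
    simp only [Finset.mem_filter, Finset.mem_univ, true_and, not_and] at this
    by_contra hne
    exact this (by simpa using hne) he.2
  have hbad : bipMeasure n p Gᶜ ≤ ENNReal.ofReal (Real.exp (-c₀ * n)) := by
    refine (measure_mono hsub).trans ?_
    refine (measure_biUnion_finset_le _ _).trans ?_
    have hterm : ∀ a ∈ Finset.Icc 1 n, bipMeasure n p
        (⋃ S ∈ Finset.powersetCard a (Finset.univ : Finset (Fin n)),
        ⋃ T ∈ Finset.powersetCard (n + 1 - a) (Finset.univ : Finset (Fin n)),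
        {ω : Fin n × Fin n → Bool | ∀ e ∈ (S ×ˢ T).filter (fun e => e ∉ E), ω e = false})
        ≤ ENNReal.ofReal ((n : ℝ) ^ 2 * (1 - p) ^ (n / 4)) := by
      intro a ha
      rw [Finset.mem_Icc] at ha
      have hST : ∀ S ∈ Finset.powersetCard a (Finset.univ : Finset (Fin n)),
          ∀ T ∈ Finset.powersetCard (n + 1 - a) (Finset.univ : Finset (Fin n)),
          bipMeasure n p {ω : Fin n × Fin n → Bool |
            ∀ e ∈ (S ×ˢ T).filter (fun e => e ∉ E), ω e = false} ≤
          ENNReal.ofReal ((1 - p) ^ (min a (n + 1 - a) * (n / 4))) := by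
        intro S hS T hT
        rw [bip_prob n p hp0 hp1]
        apply ENNReal.ofReal_le_ofReal
        apply pow_le_pow_of_le_one hq0.le hq1.le
        have hSc := (Finset.mem_powersetCard.1 hS).2
        have hTc := (Finset.mem_powersetCard.1 hT).2
        obtain ⟨h1, h2⟩ := card_avoid n C E hE S T
        rw [hSc, hTc] at h1 h2
        rcases le_total a (n + 1 - a) with h | h
        · rw [min_eq_left h]
          exact (Nat.mul_le_mul_left _ (by omega)).trans h1
        · rw [min_eq_right h]
          exact (Nat.mul_le_mul_left _ (by omega)).trans h2
      calc _ ≤ ∑ S ∈ Finset.powersetCard a (Finset.univ : Finset (Fin n)),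
            ∑ T ∈ Finset.powersetCard (n + 1 - a) (Finset.univ : Finset (Fin n)),
            ENNReal.ofReal ((1 - p) ^ (min a (n + 1 - a) * (n / 4))) := by
              refine (measure_biUnion_finset_le _ _).trans (Finset.sum_le_sum fun S hS => ?_)
              exact (measure_biUnion_finset_le _ _).trans
                (Finset.sum_le_sum fun T hT => hST S hS T hT)
        _ = ENNReal.ofReal ((n.choose a : ℝ) * (n.choose (n + 1 - a)) *
              (1 - p) ^ (min a (n + 1 - a) * (n / 4))) := by
              simp only [Finset.sum_const, Finset.card_powersetCard, Finset.card_univ,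
                Fintype.card_fin, nsmul_eq_mul]
              rw [ENNReal.ofReal_mul (by positivity), ENNReal.ofReal_mul (by positivity),
                ENNReal.ofReal_natCast, ENNReal.ofReal_natCast, mul_assoc]
        _ ≤ _ := ENNReal.ofReal_le_ofReal (term_bound_s15 n a ha.1 ha.2 _ hq0 hx)
    refine (Finset.sum_le_sum hterm).trans ?_
    rw [Finset.sum_const, Nat.card_Icc, nsmul_eq_mul, Nat.add_sub_cancel,
      ← ENNReal.ofReal_natCast, ← ENNReal.ofReal_mul (by positivity)]
    exact ENNReal.ofReal_le_ofReal hn1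
  rw [tsub_le_iff_right, ← huniv, ← Set.union_compl_self G]
  exact (measure_union_le _ _).trans (by gcongr)
end

section
/- Let p ∈ (0,1) be fixed. With high probability, for every set V ⊆ [n] with |V| ≥ (3/p)·ln n, the number of vertices of G(n,p) outside V having at most (1/2)·ln n neighbors in V is less than ln³ n. -/
open MeasureTheory Filter Real

theorem bern_integral (p : ℝ) (hp0 : 0 < p) (hp1 : p < 1) (f : Bool → ℝ) :
    ∫ b, f b ∂((PMF.bernoulli (min (Real.toNNReal p) 1) (min_le_right _ _)).toMeasure)
      = p * f true + (1 - p) * f false := by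
  rw [PMF.integral_eq_sum]
  have h1 : min (Real.toNNReal p) 1 = Real.toNNReal p := by
    apply min_eq_left
    rw [Real.toNNReal_le_one]; exact hp1.le
  have h2 : ((min (Real.toNNReal p) 1 : NNReal) : ℝ) = p := by
    rw [h1, Real.coe_toNNReal _ hp0.le]
  have h3 : ((1 - min (Real.toNNReal p) 1 : NNReal) : ℝ) = 1 - p := by
    rw [NNReal.coe_sub (min_le_right _ _), h2]; simp
  simp only [Fintype.sum_bool, PMF.bernoulli_apply, smul_eq_mul]
  simp only [cond_true, cond_false, ENNReal.coe_toReal]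
  rw [h2, h3]

instance erProb (n : ℕ) (p : ℝ) : IsProbabilityMeasure (erMeasure n p) := by
  unfold erMeasure; infer_instance

theorem edge_tail (n : ℕ) (p : ℝ) (hp0 : 0 < p) (hp1 : p < 1) (E : Finset (EdgeType n)) (a : ℝ) :
    (erMeasure n p).real {ω | (((E.filter (fun e => ω e = true)).card : ℕ) : ℝ) ≤ a}
      ≤ Real.exp (Real.log 4 * a - (3 / 4) * p * E.card) := by
  classical
  set F : (EdgeType n → Bool) → ℝ := fun ω =>
    ∏ e, (if e ∈ E then (if ω e = true then (1 / 4 : ℝ) else 1) else 1) with hF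
  have hint : ∫ ω, F ω ∂(erMeasure n p) = (1 - 3 / 4 * p) ^ E.card := by
    rw [hF]; unfold erMeasure
    rw [integral_fintype_prod_eq_prod
      (f := fun (e : EdgeType n) (b : Bool) =>
        (if e ∈ E then (if b = true then (1 / 4 : ℝ) else 1) else 1))]
    have : ∀ e : EdgeType n, (∫ b, (if e ∈ E then (if b = true then (1 / 4 : ℝ) else 1) else 1)
        ∂((PMF.bernoulli (min (Real.toNNReal p) 1) (min_le_right _ _)).toMeasure))
        = if e ∈ E then (1 - 3 / 4 * p) else 1 := by
      intro e
      rw [bern_integral p hp0 hp1]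
      by_cases h : e ∈ E
      · simp [h]; ring
      · simp [h]
    rw [Finset.prod_congr rfl (fun e _ => this e)]
    simp [Finset.prod_ite]
  have hFv : ∀ ω, F ω = Real.exp (-(Real.log 4 * (E.filter (fun e => ω e = true)).card)) := by
    intro ω
    have : F ω = (1 / 4 : ℝ) ^ (E.filter (fun e => ω e = true)).card := by
      rw [hF]
      simp [Finset.prod_ite, Finset.filter_filter, Finset.filter_mem_eq_inter]
      try (congr 2; ext e; simp)
    rw [this, Real.exp_neg, mul_comm, Real.exp_nat_mul, Real.exp_log (by norm_num)]
    simp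
  have hnn : ∀ ω, 0 ≤ F ω := fun ω => by rw [hFv]; positivity
  have hm := mul_meas_ge_le_integral_of_nonneg (μ := erMeasure n p) (f := F)
    (Filter.Eventually.of_forall hnn) (Integrable.of_finite) (Real.exp (-(Real.log 4 * a)))
  rw [hint] at hm
  have hsub : (erMeasure n p).real {ω | (((E.filter (fun e => ω e = true)).card : ℕ) : ℝ) ≤ a}
      ≤ (erMeasure n p).real {ω | Real.exp (-(Real.log 4 * a)) ≤ F ω} := by
    apply measureReal_mono
    · intro ω hω
      simp only [Set.mem_setOf_eq] at hω ⊢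
      rw [hFv]
      apply Real.exp_le_exp.2
      have : 0 ≤ Real.log 4 := Real.log_nonneg (by norm_num)
      nlinarith
    · exact measure_ne_top _ _
  have hb : (1 - 3 / 4 * p) ^ E.card ≤ Real.exp (-((3 / 4) * p * E.card)) := by
    have : (1 - 3 / 4 * p) ≤ Real.exp (-(3 / 4 * p)) := by
      have := Real.add_one_le_exp (-(3 / 4 * p)); linarith
    calc _ ≤ (Real.exp (-(3 / 4 * p))) ^ E.card := by
          apply pow_le_pow_left₀ _ this; linarith
      _ = _ := by rw [← Real.exp_nat_mul]; congr 1; ring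
  have hkey : (erMeasure n p).real {ω | Real.exp (-(Real.log 4 * a)) ≤ F ω}
      ≤ Real.exp (Real.log 4 * a) * Real.exp (-((3 / 4) * p * E.card)) := by
    have h := hm.trans hb
    have h2 := mul_le_mul_of_nonneg_left h (Real.exp_pos (Real.log 4 * a)).le
    rwa [← mul_assoc, ← Real.exp_add, add_neg_cancel, Real.exp_zero, one_mul] at h2
  calc _ ≤ _ := hsub
    _ ≤ _ := hkey
    _ = _ := by rw [← Real.exp_add]; congr 1

/-- Probability that all of `W` have low degree into a disjoint `V`. -/
theorem pair_tail (n : ℕ) (p : ℝ) (hp0 : 0 < p) (hp1 : p < 1) (V W : Finset (Fin n))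
    (hd : Disjoint V W) (b : ℝ) :
    (erMeasure n p).real {ω | ∀ v ∈ W, (({u ∈ (V : Set (Fin n)) | (graphOf ω).Adj v u}).ncard : ℝ) ≤ b}
      ≤ Real.exp (Real.log 4 * (W.card * b) - (3 / 4) * p * (W.card * V.card)) := by
  classical
  set E : Finset (EdgeType n) :=
    Finset.univ.filter (fun e => ∃ v ∈ W, ∃ u ∈ V, e.1 = s(v, u)) with hE
  have hne : ∀ v ∈ W, ∀ u ∈ V, v ≠ u := by
    intro v hv u hu h
    exact Finset.disjoint_left.1 hd hu (h ▸ hv)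
  have hcard : W.card * V.card ≤ E.card := by
    rw [← Finset.card_product]
    have h1 : ((W ×ˢ V).image (fun q => s(q.1, q.2))).card = (W ×ˢ V).card := by
      apply Finset.card_image_of_injOn
      rintro ⟨a, b⟩ hab ⟨c, d⟩ hcd h
      simp only [Finset.coe_product, Set.mem_prod, Finset.mem_coe] at hab hcd
      simp only [Sym2.eq_iff] at h
      rcases h with h | h
      · simp [h.1, h.2]
      · exact absurd h.1 (hne a hab.1 d hcd.2)
    rw [← h1]
    refine le_trans (Finset.card_le_card ?_) (Finset.card_image_le (s := E) (f := Subtype.val))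
    intro e he
    simp only [Finset.mem_image, Finset.mem_product] at he ⊢
    obtain ⟨⟨a, b⟩, ⟨ha, hb⟩, rfl⟩ := he
    refine ⟨⟨s(a, b), by simpa using hne a ha b hb⟩, ?_, rfl⟩
    rw [hE]; simp only [Finset.mem_filter, Finset.mem_univ, true_and]
    exact ⟨a, ha, b, hb, rfl⟩
  have hsub : (erMeasure n p).real {ω | ∀ v ∈ W,
        (({u ∈ (V : Set (Fin n)) | (graphOf ω).Adj v u}).ncard : ℝ) ≤ b}
      ≤ (erMeasure n p).real
        {ω | (((E.filter (fun e => ω e = true)).card : ℕ) : ℝ) ≤ W.card * b} := by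
    apply measureReal_mono _ (measure_ne_top _ _)
    intro ω hω
    simp only [Set.mem_setOf_eq] at hω ⊢
    have h1 : (E.filter (fun e => ω e = true)).card ≤
        ∑ v ∈ W, (V.filter (fun u => (graphOf ω).Adj v u)).card := by
      rw [← Finset.card_sigma,
        ← Finset.card_image_of_injective (E.filter (fun e => ω e = true)) Subtype.val_injective]
      refine le_trans (Finset.card_le_card ?_)
        (Finset.card_image_le (f := fun q : (_ : Fin n) × Fin n => s(q.1, q.2)))
      intro e he
      simp only [hE, Finset.mem_image, Finset.mem_filter, Finset.mem_univ, true_and] at he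
      obtain ⟨⟨e', hd'⟩, ⟨⟨v, hv, u, hu, h⟩, ht⟩, rfl⟩ := he
      simp only at h
      subst h
      simp only [Finset.mem_image, Finset.mem_sigma, Finset.mem_filter]
      refine ⟨⟨v, u⟩, ⟨hv, hu, ?_⟩, rfl⟩
      unfold graphOf
      rw [SimpleGraph.fromEdgeSet_adj]
      exact ⟨⟨hd', ht⟩, hne v hv u hu⟩
    calc ((E.filter (fun e => ω e = true)).card : ℝ)
        ≤ ((∑ v ∈ W, (V.filter (fun u => (graphOf ω).Adj v u)).card : ℕ) : ℝ) := by
          exact_mod_cast h1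
      _ = ∑ v ∈ W, ((V.filter (fun u => (graphOf ω).Adj v u)).card : ℝ) := by push_cast; rfl
      _ ≤ ∑ v ∈ W, b := by
          apply Finset.sum_le_sum
          intro v hv
          have := hω v hv
          rwa [show {u ∈ (V : Set (Fin n)) | (graphOf ω).Adj v u}
            = ((V.filter (fun u => (graphOf ω).Adj v u) : Finset (Fin n)) : Set (Fin n)) by
              ext u; simp, Set.ncard_coe_finset] at this
      _ = W.card * b := by simp
  refine hsub.trans ((edge_tail n p hp0 hp1 E _).trans ?_)
  apply Real.exp_le_exp.2
  have : ((W.card : ℝ) * V.card) ≤ E.card := by exact_mod_cast hcard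
  have := mul_le_mul_of_nonneg_left this (show 0 ≤ 3 / 4 * p by positivity)
  linarith

/-- Union bound over all pairs. -/
theorem union_tail (n : ℕ) (p : ℝ) (hp0 : 0 < p) (hp1 : p < 1) (hn : 1 ≤ n) (m k : ℕ)
    (hm : (3 / p) * Real.log n ≤ m) (hmV : m = ⌈(3 / p) * Real.log n⌉₊)
    (hk : k = ⌈(Real.log n) ^ 3⌉₊) :
    (erMeasure n p).real {ω |
        ∀ V : Set (Fin n), (3 / p) * Real.log n ≤ (V.ncard : ℝ) →
          ({v : Fin n | v ∉ V ∧
              (({u ∈ V | (graphOf ω).Adj v u}).ncard : ℝ)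
                ≤ (1 / 2) * Real.log n}.ncard : ℝ)
            < (Real.log n) ^ 3}ᶜ ≤ Real.exp (Real.log n * (m - k / 2)) := by
  classical
  set L := Real.log n with hL
  have hL0 : 0 ≤ L := Real.log_nonneg (by exact_mod_cast hn)
  set B : Finset (Fin n) × Finset (Fin n) → Set (EdgeType n → Bool) := fun q =>
    {ω | ∀ v ∈ q.2, (({u ∈ (q.1 : Set (Fin n)) | (graphOf ω).Adj v u}).ncard : ℝ) ≤ 1 / 2 * L}
    with hB
  set P := ((Finset.powersetCard m (Finset.univ : Finset (Fin n))) ×ˢ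
    (Finset.powersetCard k (Finset.univ : Finset (Fin n)))).filter (fun q => Disjoint q.1 q.2)
    with hP
  have hsub : {ω : EdgeType n → Bool |
        ∀ V : Set (Fin n), (3 / p) * L ≤ (V.ncard : ℝ) →
          ({v : Fin n | v ∉ V ∧
              (({u ∈ V | (graphOf ω).Adj v u}).ncard : ℝ)
                ≤ (1 / 2) * L}.ncard : ℝ)
            < L ^ 3}ᶜ ⊆ ⋃ q ∈ P, B q := by
    intro ω hω
    simp only [Set.mem_compl_iff, Set.mem_setOf_eq, not_forall, not_lt] at hω
    obtain ⟨V, hV, hbad⟩ := hω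
    have hV' : m ≤ V.toFinset.card := by
      rw [hmV, ← Set.ncard_eq_toFinset_card']; exact Nat.ceil_le.2 hV
    obtain ⟨V', hV's, hV'c⟩ := Finset.exists_subset_card_eq hV'
    have hW' := (hk.le.trans (Nat.ceil_le.2 hbad))
    rw [Set.ncard_eq_toFinset_card'] at hW'
    obtain ⟨W, hWs, hWc⟩ := Finset.exists_subset_card_eq hW'
    have hWmem : ∀ v ∈ W, v ∉ V ∧ (({u ∈ V | (graphOf ω).Adj v u}).ncard : ℝ) ≤ (1 / 2) * L := by
      intro v hv; simpa using hWs hv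
    have hVmem : ∀ v ∈ V', v ∈ V := by
      intro v hv; simpa using hV's hv
    simp only [Set.mem_iUnion]
    refine ⟨(V', W), ?_, ?_⟩
    · simp only [hP, Finset.mem_filter, Finset.mem_product, Finset.mem_powersetCard,
        Finset.subset_univ, true_and]
      refine ⟨⟨hV'c, hWc⟩, Finset.disjoint_left.2 fun v hv hw => (hWmem v hw).1 (hVmem v hv)⟩
    · simp only [hB, Set.mem_setOf_eq]
      intro v hv
      refine le_trans ?_ (hWmem v hv).2
      have : {u ∈ (V' : Set (Fin n)) | (graphOf ω).Adj v u}.ncard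
          ≤ {u ∈ V | (graphOf ω).Adj v u}.ncard := by
        apply Set.ncard_le_ncard _ (Set.toFinite _)
        rintro u ⟨hu, ha⟩
        exact ⟨hVmem u hu, ha⟩
      exact_mod_cast this
  have hbound : ∀ q ∈ P, (erMeasure n p).real (B q) ≤ Real.exp (-(3 / 2 * k * L)) := by
    rintro ⟨V, W⟩ hq
    simp only [hP, Finset.mem_filter, Finset.mem_product, Finset.mem_powersetCard,
        Finset.subset_univ, true_and] at hq
    obtain ⟨⟨hVc, hWc⟩, hd⟩ := hq
    refine (pair_tail n p hp0 hp1 V W hd (1 / 2 * L)).trans (Real.exp_le_exp.2 ?_)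
    rw [hVc, hWc]
    have h4 : Real.log 4 = 2 * Real.log 2 := by
      rw [show (4 : ℝ) = 2 ^ 2 by norm_num, Real.log_pow]; norm_num
    have h2 := Real.log_two_lt_d9
    have hpm : 3 * L ≤ p * m := by
      have := mul_le_mul_of_nonneg_left hm hp0.le
      rwa [← mul_assoc, mul_div_cancel₀ _ hp0.ne'] at this
    have hk0 : (0 : ℝ) ≤ k := Nat.cast_nonneg k
    have a1 := mul_le_mul_of_nonneg_left hpm hk0
    have a2 : Real.log 2 * (k * L) ≤ 3 / 4 * (k * L) :=
      mul_le_mul_of_nonneg_right (by linarith) (by positivity)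
    rw [h4]
    linarith
  have hPc : (P.card : ℝ) ≤ Real.exp (L * (m + k)) := by
    have h1 : P.card ≤ n ^ m * n ^ k := by
      refine (Finset.card_filter_le _ _).trans ?_
      rw [Finset.card_product, Finset.card_powersetCard, Finset.card_powersetCard]
      simp only [Finset.card_univ, Fintype.card_fin]
      exact Nat.mul_le_mul (Nat.choose_le_pow n m) (Nat.choose_le_pow n k)
    have hn0 : (0 : ℝ) < n := by exact_mod_cast hn
    calc (P.card : ℝ) ≤ (n : ℝ) ^ m * (n : ℝ) ^ k := by exact_mod_cast h1
      _ = Real.exp (L * (m + k)) := by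
        rw [mul_add, Real.exp_add, mul_comm L, mul_comm L, Real.exp_nat_mul, Real.exp_nat_mul,
          hL, Real.exp_log hn0]
  calc _ ≤ (erMeasure n p).real (⋃ q ∈ P, B q) := measureReal_mono hsub (measure_ne_top _ _)
    _ ≤ ∑ q ∈ P, (erMeasure n p).real (B q) := measureReal_biUnion_finset_le _ _
    _ ≤ ∑ q ∈ P, Real.exp (-(3 / 2 * k * L)) := Finset.sum_le_sum hbound
    _ = P.card * Real.exp (-(3 / 2 * k * L)) := by simp
    _ ≤ Real.exp (L * (m + k)) * Real.exp (-(3 / 2 * k * L)) := by gcongr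
    _ = _ := by rw [← Real.exp_add]; congr 1; ring

/-- For fixed `p ∈ (0,1)`, whp: for every `V ⊆ [n]` with
`|V| ≥ (3/p)·ln n`, fewer than `ln³ n` vertices outside `V` have at most
`(1/2)·ln n` neighbors in `V`. -/
theorem few_low_degree_into_set (p : ℝ) (hp0 : 0 < p) (hp1 : p < 1) :
    Tendsto (fun n : ℕ =>
      erMeasure n p {ω |
        ∀ V : Set (Fin n), (3 / p) * Real.log n ≤ (V.ncard : ℝ) →
          ({v : Fin n | v ∉ V ∧
              (({u ∈ V | (graphOf ω).Adj v u}).ncard : ℝ)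
                ≤ (1 / 2) * Real.log n}.ncard : ℝ)
            < (Real.log n) ^ 3})
      atTop (nhds 1) := by
  have hlog : Tendsto (fun n : ℕ => Real.log (n : ℝ)) atTop atTop :=
    Real.tendsto_log_atTop.comp tendsto_natCast_atTop_atTop
  have hexp : Tendsto (fun n : ℕ => 1 - Real.exp (-Real.log (n : ℝ))) atTop (nhds 1) := by
    have := (Real.tendsto_exp_neg_atTop_nhds_zero.comp hlog).const_sub 1
    simpa using this
  have hlow := ENNReal.tendsto_ofReal hexp
  rw [ENNReal.ofReal_one] at hlow
  refine tendsto_of_tendsto_of_tendsto_of_le_of_le' hlow tendsto_const_nhds ?_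
    (Eventually.of_forall fun n => prob_le_one)
  have hbig : ∀ᶠ n : ℕ in atTop, 3 / p + 4 ≤ Real.log (n : ℝ) := hlog.eventually_ge_atTop _
  filter_upwards [hbig, eventually_ge_atTop 1] with n hL hn
  have hu := union_tail n p hp0 hp1 hn _ _ (Nat.le_ceil _) rfl rfl
  rw [probReal_compl_eq_one_sub (Set.toFinite _).measurableSet] at hu
  rw [← ofReal_measureReal]
  apply ENNReal.ofReal_le_ofReal
  have hL4 : 4 ≤ Real.log (n : ℝ) := by
    have : 0 < 3 / p := by positivity
    linarith
  have hmle : (⌈(3 / p) * Real.log n⌉₊ : ℝ) ≤ (3 / p) * Real.log n + 1 :=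
    (Nat.ceil_lt_add_one (by positivity)).le
  have hkge : (Real.log n) ^ 3 ≤ (⌈(Real.log n) ^ 3⌉₊ : ℝ) := Nat.le_ceil _
  have hfin : Real.log n * ((⌈(3 / p) * Real.log n⌉₊ : ℝ) - (⌈(Real.log n) ^ 3⌉₊ : ℝ) / 2)
      ≤ -Real.log n := by
    set L := Real.log (n : ℝ)
    have h1 : 3 / p * L ≤ (L - 4) * L := by
      apply mul_le_mul_of_nonneg_right <;> linarith
    have h2 : 4 * L ^ 2 ≤ L ^ 3 := by nlinarith [sq_nonneg L]
    have h3 : (⌈(3 / p) * L⌉₊ : ℝ) - (⌈L ^ 3⌉₊ : ℝ) / 2 ≤ -1 := by nlinarith [sq_nonneg L]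
    nlinarith
  have := Real.exp_le_exp.2 hfin
  linarith
end

section
/- Let p ∈ (0,1), c > 0 and ε > 0 be fixed constants. There exists a constant K = K(p,c,ε) such that with high probability the following holds for G(n,p): for every induced subgraph H of G(n,p) on at least εn vertices and every spanning subgraph F of H for which there exists a spanning subgraph H' of H obtained from H by removing at most cn edges such that F is C_4-saturated in H', one has (1) F has at most ⌊(3/p)·ln n⌋ isolated vertices, and (2) the number of vertices of degree exactly 1 in F is at most K·(√(|E(F)|)·ln n + n/ln n). -/
open MeasureTheory Filter Real

instance erMeasure_prob (n : ℕ) (p : ℝ) : IsProbabilityMeasure (erMeasure n p) := by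
  unfold erMeasure; infer_instance

lemma chernoff_low (n : ℕ) (p : ℝ) (hp0 : 0 < p) (hp1 : p < 1) (T : Finset (EdgeType n)) (t : ℝ) :
    (erMeasure n p).real {ω | ((T.filter (fun e => ω e = true)).card : ℝ) ≤ t}
      ≤ Real.exp (t - p / 2 * T.card) := by
  classical
  set μ := erMeasure n p with hμ
  let g : EdgeType n → Bool → ℝ := fun e b => if e ∈ T ∧ b = true then Real.exp (-1) else 1
  have hprod : ∀ ω : EdgeType n → Bool,
      ∏ e, g e (ω e) = Real.exp (-((T.filter (fun e => ω e = true)).card : ℝ)) := by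
    intro ω
    simp only [g]
    rw [Finset.prod_ite]
    simp only [Finset.prod_const, Finset.prod_const_one, mul_one]
    rw [← Real.exp_nat_mul]
    congr 1
    have : (Finset.univ.filter (fun e => e ∈ T ∧ ω e = true)) = T.filter (fun e => ω e = true) := by
      ext e; simp
    rw [this]; ring_nf
  have hint : ∫ ω, ∏ e, g e (ω e) ∂μ ≤ Real.exp (- (p / 2 * T.card)) := by
    rw [hμ, erMeasure, integral_fintype_prod_eq_prod]
    have h1 : ∀ e, ∫ b, g e b ∂((PMF.bernoulli (min (Real.toNNReal p) 1)
        (min_le_right _ _)).toMeasure) ≤ if e ∈ T then Real.exp (-(p/2)) else 1 := by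
      intro e
      have hmin : min (Real.toNNReal p) 1 = Real.toNNReal p := by
        apply min_eq_left; exact Real.toNNReal_le_one.2 hp1.le
      rw [PMF.integral_eq_sum]
      simp only [Fintype.sum_bool, PMF.bernoulli_apply, hmin, g]
      have hle : Real.toNNReal p ≤ 1 := Real.toNNReal_le_one.2 hp1.le
      have e1 : (((1 : NNReal) - Real.toNNReal p : NNReal) : ℝ) = 1 - p := by
        rw [NNReal.coe_sub hle]; simp [hp0.le]
      by_cases he : e ∈ T
      · simp [he, e1, hp0.le, -ENNReal.coe_sub]
        have := Real.exp_neg_one_lt_half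
        have h3 := Real.add_one_le_exp (-(p/2))
        nlinarith
      · simp [he, e1, hp0.le, -ENNReal.coe_sub]
    calc _ ≤ ∏ e, (if e ∈ T then Real.exp (-(p/2)) else 1) := by
            apply Finset.prod_le_prod
            · intro e _
              apply integral_nonneg
              intro b; simp only [g]; split_ifs <;> positivity
            · intro e _; exact h1 e
      _ = _ := by
            rw [Finset.prod_ite]
            simp only [Finset.prod_const, Finset.prod_const_one, mul_one]
            rw [← Real.exp_nat_mul]
            congr 1
            simp; ring
  have hmk := mul_meas_ge_le_integral_of_nonneg (μ := μ) (f := fun ω => ∏ e, g e (ω e))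
    (ae_of_all _ fun ω => by simp only [hprod]; positivity) (Integrable.of_finite) (Real.exp (-t))
  have hset : {ω : EdgeType n → Bool | ((T.filter (fun e => ω e = true)).card : ℝ) ≤ t}
      = {ω | Real.exp (-t) ≤ ∏ e, g e (ω e)} := by
    ext ω; simp [hprod]
  rw [hset]
  have h2 := hmk.trans hint
  rw [sub_eq_add_neg, Real.exp_add]
  have ht := Real.exp_pos t
  have hm : Real.exp t * Real.exp (-t) = 1 := by rw [← Real.exp_add]; simp
  calc _ = Real.exp t * (Real.exp (-t) * μ.real {ω | Real.exp (-t) ≤ ∏ e, g e (ω e)}) := by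
        rw [← mul_assoc, hm, one_mul]
    _ ≤ _ := mul_le_mul_of_nonneg_left h2 ht.le

lemma c4_path {V : Type*} {H' F : SimpleGraph V} (h : IsSaturatedIn H' F (cycGraph 4)) {u v : V}
    (huv : H'.Adj u v) (hF : ¬ F.Adj u v) : ∃ x y, F.Adj u x ∧ F.Adj x y ∧ F.Adj y v := by
  obtain ⟨hle, hfree, hsat⟩ := h
  obtain ⟨g, hg, hadj⟩ := hsat u v huv hF
  have hc : ∀ i : ZMod 4, (cycGraph 4).Adj i (i+1) := by
    intro i; simp only [cycGraph, SimpleGraph.fromRel_adj]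
    refine ⟨?_, by simp⟩
    revert i; decide
  have hA : ∀ a b, (F ⊔ SimpleGraph.fromEdgeSet {s(u, v)}).Adj a b ↔
      F.Adj a b ∨ (((a = u ∧ b = v) ∨ (a = v ∧ b = u)) ∧ a ≠ b) := by
    intro a b; simp [SimpleGraph.sup_adj, SimpleGraph.fromEdgeSet_adj]
  have hs : ∀ i, F.Adj (g i) (g (i+1)) ∨ ((g i = u ∧ g (i+1) = v) ∨ (g i = v ∧ g (i+1) = u)) := by
    intro i
    rcases (hA _ _).1 (hadj (hc i)) with h | h
    · exact Or.inl h
    · exact Or.inr h.1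
  have hne : ∀ i : ZMod 4, g i ≠ g (i+1) ∧ g i ≠ g (i+2) ∧ g i ≠ g (i+3) ∧ g (i+1) ≠ g (i+2) ∧
      g (i+1) ≠ g (i+3) ∧ g (i+2) ≠ g (i+3) := by
    intro i
    simp only [ne_eq, hg.eq_iff]
    revert i; decide
  have h4 : ∀ i : ZMod 4, i + 1 + 1 = i + 2 ∧ i + 2 + 1 = i + 3 ∧ i + 3 + 1 = i := by decide
  have hex : ∃ i, ¬ F.Adj (g i) (g (i+1)) := by
    by_contra hcon
    push Not at hcon
    apply hfree
    refine ⟨g, hg, ?_⟩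
    intro a b hab
    simp only [cycGraph, SimpleGraph.fromRel_adj] at hab
    rcases hab.2 with h | h
    · rw [h]; exact (hcon b).symm
    · rw [h]; exact hcon a
  obtain ⟨i, hi⟩ := hex
  obtain ⟨n1, n2, n3, n4, n5, n6⟩ := hne i
  obtain ⟨q1, q2, q3⟩ := h4 i
  have s1 := hs (i+1); have s2 := hs (i+2); have s3 := hs (i+3)
  rw [q1] at s1; rw [q2] at s2; rw [q3] at s3
  rcases (hs i).resolve_left hi with ⟨rfl, rfl⟩ | ⟨rfl, rfl⟩
  · exact ⟨g (i+3), g (i+2), by grind [SimpleGraph.adj_comm], by grind [SimpleGraph.adj_comm],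
      by grind [SimpleGraph.adj_comm]⟩
  · exact ⟨g (i+2), g (i+3), by grind [SimpleGraph.adj_comm], by grind [SimpleGraph.adj_comm],
      by grind [SimpleGraph.adj_comm]⟩

def inEdges {V : Type*} (G : SimpleGraph V) (A : Finset V) : Set (Sym2 V) :=
  {e | e ∈ G.edgeSet ∧ ∀ x ∈ e, x ∈ A}

def crEdges {V : Type*} (G : SimpleGraph V) (I T : Finset V) : Set (Sym2 V) :=
  {e | e ∈ G.edgeSet ∧ ∃ u ∈ I, ∃ v ∈ T, e = s(u, v)}

lemma inEdges_prob (n : ℕ) (p : ℝ) (hp0 : 0 < p) (hp1 : p < 1) (A : Finset (Fin n)) (t : ℝ) :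
    (erMeasure n p).real {ω | ((inEdges (graphOf ω) A).ncard : ℝ) ≤ t}
      ≤ Real.exp (t - p / 2 * (A.card * (A.card - 1) / 2)) := by
  classical
  let T : Finset (EdgeType n) := Finset.univ.filter (fun e => ∀ x ∈ e.1, x ∈ A)
  have hT : (A.card * (A.card - 1) / 2 : ℝ) ≤ T.card := by
    have h1 := Sym2.card_image_offDiag A
    have h2 : (A.offDiag.image Sym2.mk.uncurry) ⊆ T.image Subtype.val := by
      intro e he
      rw [Finset.mem_image] at he
      obtain ⟨⟨a, b⟩, hab, rfl⟩ := he
      rw [Finset.mem_offDiag] at hab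
      rw [Finset.mem_image]
      refine ⟨⟨s(a,b), by simpa using hab.2.2⟩, ?_, rfl⟩
      simp [T, hab.1, hab.2.1]
    have h3 := (Finset.card_le_card h2).trans Finset.card_image_le
    rw [h1] at h3
    rw [← Nat.cast_choose_two]
    exact_mod_cast h3
  refine le_trans ?_ ((chernoff_low n p hp0 hp1 T t).trans ?_)
  · apply measureReal_mono _ (measure_ne_top _ _)
    intro ω hω
    refine le_trans ?_ (show ((inEdges (graphOf ω) A).ncard : ℝ) ≤ t from hω)
    norm_cast
    rw [← Finset.card_image_of_injective _ Subtype.val_injective, ← Set.ncard_coe_finset]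
    apply Set.ncard_le_ncard _ (Set.toFinite _)
    intro e he
    rw [Finset.mem_coe, Finset.mem_image] at he
    obtain ⟨⟨e, hd⟩, he, rfl⟩ := he
    simp only [T, Finset.mem_filter, Finset.mem_univ, true_and] at he
    refine ⟨?_, he.1⟩
    rw [graphOf, SimpleGraph.edgeSet_fromEdgeSet]
    exact ⟨⟨hd, he.2⟩, by simpa using hd⟩
  · apply Real.exp_le_exp.2
    nlinarith

lemma crEdges_prob (n : ℕ) (p : ℝ) (hp0 : 0 < p) (hp1 : p < 1) (I J : Finset (Fin n))
    (hd : Disjoint I J) (t : ℝ) :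
    (erMeasure n p).real {ω | ((crEdges (graphOf ω) I J).ncard : ℝ) ≤ t}
      ≤ Real.exp (t - p / 2 * (I.card * J.card)) := by
  classical
  let T : Finset (EdgeType n) := Finset.univ.filter (fun e => ∃ u ∈ I, ∃ v ∈ J, e.1 = s(u, v))
  have hT : (I.card * J.card : ℝ) ≤ T.card := by
    have h1 : ((I ×ˢ J).image Sym2.mk.uncurry).card = I.card * J.card := by
      rw [← Finset.card_product]
      apply Finset.card_image_of_injOn
      rintro ⟨a, b⟩ hab ⟨c, d⟩ hcd h
      simp at hab hcd h
      rcases h with h | h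
      · simpa using h
      · exfalso
        exact Finset.disjoint_left.1 hd hab.1 (h.1 ▸ hcd.2)
    have h2 : ((I ×ˢ J).image Sym2.mk.uncurry) ⊆ T.image Subtype.val := by
      intro e he
      rw [Finset.mem_image] at he
      obtain ⟨⟨a, b⟩, hab, rfl⟩ := he
      rw [Finset.mem_product] at hab
      rw [Finset.mem_image]
      refine ⟨⟨s(a,b), ?_⟩, ?_, rfl⟩
      · simp only [Sym2.isDiag_iff_proj_eq]
        rintro rfl
        exact Finset.disjoint_left.1 hd hab.1 hab.2
      · simp only [T, Finset.mem_filter, Finset.mem_univ, true_and]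
        exact ⟨a, hab.1, b, hab.2, rfl⟩
    have h3 := (Finset.card_le_card h2).trans Finset.card_image_le
    rw [h1] at h3
    exact_mod_cast h3
  refine le_trans ?_ ((chernoff_low n p hp0 hp1 T t).trans ?_)
  · apply measureReal_mono _ (measure_ne_top _ _)
    intro ω hω
    refine le_trans ?_ (show ((crEdges (graphOf ω) I J).ncard : ℝ) ≤ t from hω)
    norm_cast
    rw [← Finset.card_image_of_injective _ Subtype.val_injective, ← Set.ncard_coe_finset]
    apply Set.ncard_le_ncard _ (Set.toFinite _)
    intro e he
    rw [Finset.mem_coe, Finset.mem_image] at he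
    obtain ⟨⟨e, hd⟩, he, rfl⟩ := he
    simp only [T, Finset.mem_filter, Finset.mem_univ, true_and] at he
    refine ⟨?_, he.1⟩
    rw [graphOf, SimpleGraph.edgeSet_fromEdgeSet]
    exact ⟨⟨hd, he.2⟩, by simpa using hd⟩
  · apply Real.exp_le_exp.2
    nlinarith

lemma inEdges_induce {V : Type*} [Finite V] (G : SimpleGraph V) (S : Set V) (A : Finset S) :
    (inEdges G (A.map (Function.Embedding.subtype _))).ncard ≤ (inEdges (G.induce S) A).ncard := by
  classical
  refine le_trans (Set.ncard_le_ncard (t := Sym2.map Subtype.val '' (inEdges (G.induce S) A)) ?_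
    (Set.toFinite _)) (Set.ncard_image_le (Set.toFinite _))
  intro e he
  induction e using Sym2.ind with
  | _ a b =>
    obtain ⟨h1, h2⟩ := he
    have ha := h2 a (by simp)
    have hb := h2 b (by simp)
    rw [Finset.mem_map] at ha hb
    obtain ⟨a, ha, rfl⟩ := ha
    obtain ⟨b, hb, rfl⟩ := hb
    refine ⟨s(a, b), ⟨h1, ?_⟩, rfl⟩
    intro x hx
    rcases Sym2.mem_iff.1 hx with rfl | rfl <;> assumption

lemma crEdges_induce {V : Type*} [Finite V] (G : SimpleGraph V) (S : Set V) (I T : Finset S) :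
    (crEdges G (I.map (Function.Embedding.subtype _)) (T.map (Function.Embedding.subtype _))).ncard
      ≤ (crEdges (G.induce S) I T).ncard := by
  classical
  refine le_trans (Set.ncard_le_ncard (t := Sym2.map Subtype.val '' (crEdges (G.induce S) I T)) ?_
    (Set.toFinite _)) (Set.ncard_image_le (Set.toFinite _))
  rintro e ⟨h1, u, hu, v, hv, rfl⟩
  rw [Finset.mem_map] at hu hv
  obtain ⟨a, ha, rfl⟩ := hu
  obtain ⟨b, hb, rfl⟩ := hv
  exact ⟨s(a, b), ⟨h1, a, ha, b, hb, rfl⟩, rfl⟩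

lemma isolated_bound {V : Type*} [Fintype V] (G H' F : SimpleGraph V) (k : ℕ) (m r : ℝ)
    (hr : ((G.edgeSet \ H'.edgeSet).ncard : ℝ) ≤ r)
    (hsat : IsSaturatedIn H' F (cycGraph 4))
    (hm : m + (k + 1) ≤ Fintype.card V)
    (hA : ∀ I T : Finset V, Disjoint I T → I.card = k + 1 → m ≤ T.card →
      r < ((crEdges G I T).ncard : ℝ)) :
    {v : V | ∀ w : V, ¬ F.Adj v w}.ncard ≤ k := by
  classical
  by_contra hcon
  push Not at hcon
  set D := {v : V | ∀ w : V, ¬ F.Adj v w} with hD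
  rw [Set.ncard_eq_toFinset_card' D] at hcon
  obtain ⟨I, hI, hIc⟩ := Finset.exists_subset_card_eq (Nat.succ_le_of_lt hcon)
  have hT : m ≤ ((Iᶜ).card : ℝ) := by
    rw [Finset.card_compl, Nat.cast_sub (Finset.card_le_univ _), hIc]
    push_cast; linarith
  have h1 := hA I Iᶜ disjoint_compl_right hIc hT
  have h2 : (crEdges G I Iᶜ).ncard ≤ (G.edgeSet \ H'.edgeSet).ncard := by
    apply Set.ncard_le_ncard _ (Set.toFinite _)
    rintro e ⟨he, u, hu, v, hv, rfl⟩
    refine ⟨he, ?_⟩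
    intro hH
    have huD : ∀ w : V, ¬ F.Adj u w := by
      have := hI hu
      rw [Set.mem_toFinset] at this
      exact this
    obtain ⟨x, y, hx, -⟩ := c4_path hsat (SimpleGraph.mem_edgeSet _ |>.1 hH) (huD v)
    exact huD x hx
  have h3 : ((crEdges G I Iᶜ).ncard : ℝ) ≤ ((G.edgeSet \ H'.edgeSet).ncard : ℝ) := by
    exact_mod_cast h2
  linarith

lemma leaf_bound {V : Type*} [Fintype V] (G H' F : SimpleGraph V) (L δ r : ℝ) (hL : 0 < L)
    (hδ : 0 < δ) (hr0 : 0 ≤ r)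
    (hr : ((G.edgeSet \ H'.edgeSet).ncard : ℝ) ≤ r)
    (hsat : IsSaturatedIn H' F (cycGraph 4))
    (hB : ∀ A : Finset V, L ≤ A.card → δ * (A.card : ℝ) ^ 2 < ((inEdges G A).ncard : ℝ)) :
    ({v : V | (F.neighborSet v).ncard = 1}.ncard : ℝ)
      ≤ r / (δ * L) + L * (L + (Real.sqrt (r / δ)
          + Real.sqrt (2 / δ) * Real.sqrt (F.edgeSet.ncard))) := by
  classical
  set D : Finset V := {v : V | (F.neighborSet v).ncard = 1}.toFinset with hD
  have hDc : {v : V | (F.neighborSet v).ncard = 1}.ncard = D.card :=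
    Set.ncard_eq_toFinset_card' _
  rw [hDc]
  have hf : ∀ v : V, ∃ x, v ∈ D → F.neighborSet v = {x} := by
    intro v
    by_cases hv : v ∈ D
    · rw [hD, Set.mem_toFinset] at hv
      obtain ⟨x, hx⟩ := Set.ncard_eq_one.1 hv
      exact ⟨x, fun _ => hx⟩
    · exact ⟨v, fun h => absurd h hv⟩
  choose f hf using hf
  have hfa : ∀ v ∈ D, ∀ w, F.Adj v w ↔ w = f v := by
    intro v hv w
    have := hf v hv
    rw [← SimpleGraph.mem_neighborSet, this, Set.mem_singleton_iff]
  have key : ∀ u ∈ D, ∀ v ∈ D, H'.Adj u v → F.Adj u v ∨ F.Adj (f u) (f v) := by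
    intro u hu v hv huv
    by_cases h : F.Adj u v
    · exact Or.inl h
    · right
      obtain ⟨x, y, h1, h2, h3⟩ := c4_path hsat huv h
      rw [hfa u hu] at h1
      have h3 := (hfa v hv y).1 h3.symm
      rwa [h1, h3] at h2
  set R : Finset (Sym2 V) := (G.edgeSet \ H'.edgeSet).toFinset with hR
  have hRc : (R.card : ℝ) ≤ r := by rwa [Set.ncard_eq_toFinset_card'] at hr
  let A : V → Finset V := fun x => D.filter (fun v => f v = x)
  have hAin : ∀ x, (inEdges G (A x)).toFinset ⊆ R := by
    intro x e he
    rw [Set.mem_toFinset] at he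
    obtain ⟨h1, h2⟩ := he
    rw [hR, Set.mem_toFinset]
    refine ⟨h1, fun hH => ?_⟩
    induction e using Sym2.ind with
    | _ a b =>
      have ha := h2 a (by simp)
      have hb := h2 b (by simp)
      simp only [A, Finset.mem_filter] at ha hb
      have hH : H'.Adj a b := hH
      rcases key a ha.1 b hb.1 hH with h | h
      · have e1 := (hfa a ha.1 b).1 h
        have e2 := (hfa b hb.1 a).1 h.symm
        apply hH.ne
        exact (e2.trans hb.2).trans (e1.trans ha.2).symm
      · rw [ha.2, hb.2] at h; exact h.ne rfl
  set X := D.image f with hX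
  have hDsum : (D.card : ℝ) = ∑ x ∈ X, ((A x).card : ℝ) := by
    rw [Finset.card_eq_sum_card_image f D]; push_cast; rfl
  set Bg := X.filter (fun x => L ≤ (A x).card) with hBg
  have hbig : ∑ x ∈ Bg, ((A x).card : ℝ) ≤ r / (δ * L) := by
    have h1 : ∑ x ∈ Bg, (inEdges G (A x)).toFinset.card ≤ R.card := by
      rw [← Finset.card_biUnion]
      · apply Finset.card_le_card
        intro e he
        rw [Finset.mem_biUnion] at he
        obtain ⟨x, -, hx⟩ := he
        exact hAin x hx
      · intro x _ y _ hxy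
        rw [Function.onFun, Finset.disjoint_left]
        intro e he1 he2
        rw [Set.mem_toFinset] at he1 he2
        induction e using Sym2.ind with
        | _ a b =>
          have ha := he1.2 a (by simp)
          have hb := he2.2 a (by simp)
          simp only [A, Finset.mem_filter] at ha hb
          exact hxy (ha.2.symm.trans hb.2)
    rw [le_div_iff₀ (by positivity), Finset.sum_mul]
    calc ∑ x ∈ Bg, ((A x).card : ℝ) * (δ * L)
        ≤ ∑ x ∈ Bg, ((inEdges G (A x)).toFinset.card : ℝ) := by
          apply Finset.sum_le_sum
          intro x hx
          have hx2 : L ≤ (A x).card := (Finset.mem_filter.1 hx).2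
          have := hB (A x) hx2
          rw [Set.ncard_eq_toFinset_card'] at this
          nlinarith [mul_le_mul_of_nonneg_left hx2 (mul_nonneg hδ.le (Nat.cast_nonneg (α := ℝ) (A x).card))]
      _ ≤ R.card := by exact_mod_cast h1
      _ ≤ r := hRc
  have hsmall : ∑ x ∈ X.filter (fun x => ¬ L ≤ (A x).card), ((A x).card : ℝ) ≤ X.card * L := by
    calc _ ≤ ∑ x ∈ X.filter (fun x => ¬ L ≤ (A x).card), L := by
          apply Finset.sum_le_sum
          intro x hx
          exact (not_le.1 (Finset.mem_filter.1 hx).2).le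
      _ = (X.filter (fun x => ¬ L ≤ (A x).card)).card * L := by simp
      _ ≤ _ := by
          gcongr
          exact Finset.filter_subset _ _
  have hm : (X.card : ℝ) ≤ L + (Real.sqrt (r / δ) + Real.sqrt (2 / δ) * Real.sqrt (F.edgeSet.ncard)) := by
    by_cases hLm : L ≤ X.card
    swap
    · have := Real.sqrt_nonneg (r / δ)
      have := mul_nonneg (Real.sqrt_nonneg (2 / δ)) (Real.sqrt_nonneg (F.edgeSet.ncard))
      linarith
    obtain ⟨B, hBD, hinj, hBX⟩ := Finset.exists_subset_injOn_image_eq_of_surjOn (f := f) (D : Set V) X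
      (by intro x hx; rw [hX, Finset.mem_coe, Finset.mem_image] at hx
          obtain ⟨v, hv, rfl⟩ := hx
          exact ⟨v, hv, rfl⟩)
    have hBc : B.card = X.card := by rw [← hBX, Finset.card_image_of_injOn hinj]
    have h1 := hB B (by rw [hBc]; exact hLm)
    have hBD' : ∀ v ∈ B, v ∈ D := fun v hv => hBD hv
    rw [hBc, Set.ncard_eq_toFinset_card'] at h1
    set EF := F.edgeSet.toFinset with hEF
    have h2 : (inEdges G B).toFinset ⊆
        R ∪ (EF ∪ ((inEdges G B).toFinset.filter (fun e => Sym2.map f e ∈ EF))) := by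
      intro e he
      have he0 := he
      rw [Set.mem_toFinset] at he
      obtain ⟨g1, g2⟩ := he
      induction e using Sym2.ind with
      | _ a b =>
        have ha := hBD' a (g2 a (by simp))
        have hb := hBD' b (g2 b (by simp))
        by_cases hH : H'.Adj a b
        · rcases key a ha b hb hH with h | h
          · apply Finset.mem_union_right; apply Finset.mem_union_left
            rw [hEF, Set.mem_toFinset]; exact h
          · apply Finset.mem_union_right; apply Finset.mem_union_right
            exact Finset.mem_filter.2 ⟨he0, Set.mem_toFinset.2 h⟩
        · apply Finset.mem_union_left
          rw [hR, Set.mem_toFinset]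
          exact ⟨g1, hH⟩
    have h3 : ((inEdges G B).toFinset.filter (fun e => Sym2.map f e ∈ EF)).card ≤ EF.card := by
      apply Finset.card_le_card_of_injOn (Sym2.map f)
      · intro e he
        exact (Finset.mem_filter.1 he).2
      · intro e he e' he' hee
        have q1 := (Set.mem_toFinset.1 (Finset.mem_filter.1 he).1).2
        have q2 := (Set.mem_toFinset.1 (Finset.mem_filter.1 he').1).2
        induction e using Sym2.ind with
        | _ a b =>
        induction e' using Sym2.ind with
        | _ a' b' =>
          have ha : a ∈ B := q1 a (by simp)
          have hb : b ∈ B := q1 b (by simp)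
          have ha' : a' ∈ B := q2 a' (by simp)
          have hb' : b' ∈ B := q2 b' (by simp)
          simp only [Sym2.map_mk, Sym2.eq_iff] at hee
          rw [Sym2.eq_iff]
          rcases hee with h | h
          · exact Or.inl ⟨hinj ha ha' h.1, hinj hb hb' h.2⟩
          · exact Or.inr ⟨hinj ha hb' h.1, hinj hb ha' h.2⟩
    have h4 : ((inEdges G B).toFinset.card) ≤ R.card + (EF.card + EF.card) :=
      (Finset.card_le_card h2).trans ((Finset.card_union_le _ _).trans
        (Nat.add_le_add_left ((Finset.card_union_le _ _).trans (Nat.add_le_add_left h3 _)) _))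
    have h5 : ((inEdges G B).toFinset.card : ℝ) ≤ R.card + (EF.card + EF.card) := by
      exact_mod_cast h4
    have hE : (F.edgeSet.ncard : ℝ) = EF.card := by
      rw [Set.ncard_eq_toFinset_card']
    rw [hE]
    have h6 : (X.card : ℝ)^2 ≤ r / δ + 2 / δ * EF.card := by
      have : r / δ + 2 / δ * EF.card = (r + 2 * EF.card) / δ := by ring
      rw [this, le_div_iff₀ hδ]
      linarith
    have h7 : (X.card : ℝ) ≤ Real.sqrt (r / δ + 2 / δ * EF.card) := Real.le_sqrt_of_sq_le h6
    have h8 : Real.sqrt (r / δ + 2 / δ * EF.card) ≤ Real.sqrt (r / δ) + Real.sqrt (2 / δ) * Real.sqrt (EF.card) := by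
      rw [← Real.sqrt_mul (by positivity)]
      apply Real.sqrt_le_iff.2
      refine ⟨by positivity, ?_⟩
      have e1 := Real.sq_sqrt (show 0 ≤ r / δ by positivity)
      have e2 := Real.sq_sqrt (show 0 ≤ 2 / δ * (EF.card : ℝ) by positivity)
      have e3 := mul_nonneg (Real.sqrt_nonneg (r / δ)) (Real.sqrt_nonneg (2 / δ * (EF.card : ℝ)))
      nlinarith
    linarith
  rw [hDsum, ← Finset.sum_filter_add_sum_filter_not X (fun x => L ≤ (A x).card)]
  have := mul_le_mul_of_nonneg_right hm hL.le
  linarith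

def badA (n : ℕ) (p c ε : ℝ) : Set (EdgeType n → Bool) :=
  {ω | ∃ I T : Finset (Fin n), Disjoint I T ∧ 3 / p * Real.log n ≤ I.card ∧
    ε / 2 * n ≤ T.card ∧ ((crEdges (graphOf ω) I T).ncard : ℝ) ≤ c * n}

def badB (n : ℕ) (p : ℝ) : Set (EdgeType n → Bool) :=
  {ω | ∃ A : Finset (Fin n), 48 / p * Real.log n ≤ A.card ∧
    ((inEdges (graphOf ω) A).ncard : ℝ) ≤ p / 16 * (A.card : ℝ) ^ 2}

lemma badA_bound (n : ℕ) (p c ε : ℝ) (hp0 : 0 < p) (hp1 : p < 1) (hε : 0 < ε)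
    (hl : c + 3 ≤ 3 / 4 * ε * Real.log n) :
    (erMeasure n p).real (badA n p c ε) ≤ Real.exp (-(n : ℝ)) := by
  classical
  let P : Finset (Finset (Fin n) × Finset (Fin n)) := Finset.univ.filter (fun q =>
    Disjoint q.1 q.2 ∧ 3 / p * Real.log n ≤ q.1.card ∧ ε / 2 * n ≤ q.2.card)
  have hsub : badA n p c ε ⊆ ⋃ q ∈ P, {ω | ((crEdges (graphOf ω) q.1 q.2).ncard : ℝ) ≤ c * n} := by
    rintro ω ⟨I, T, h1, h2, h3, h4⟩
    rw [Set.mem_iUnion₂]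
    exact ⟨(I, T), Finset.mem_filter.2 ⟨Finset.mem_univ _, h1, h2, h3⟩, h4⟩
  have hPc : (P.card : ℝ) ≤ 4 ^ n := by
    have : P.card ≤ 4 ^ n := by
      refine (Finset.card_le_univ _).trans ?_
      rw [Fintype.card_prod, Fintype.card_finset, Fintype.card_fin, ← mul_pow]; norm_num
    exact_mod_cast this
  have h4e : (4 : ℝ) ^ n ≤ Real.exp (2 * n) := by
    rw [mul_comm, Real.exp_nat_mul]
    apply pow_le_pow_left₀ (by norm_num)
    have := Real.exp_one_gt_d9
    have h2 : Real.exp 2 = Real.exp 1 * Real.exp 1 := by rw [← Real.exp_add]; norm_num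
    rw [h2]; nlinarith
  calc _ ≤ _ := measureReal_mono hsub (measure_ne_top _ _)
    _ ≤ ∑ q ∈ P, (erMeasure n p).real {ω | ((crEdges (graphOf ω) q.1 q.2).ncard : ℝ) ≤ c * n} :=
        measureReal_biUnion_finset_le _ _
    _ ≤ ∑ q ∈ P, Real.exp (-(3 * n)) := by
        apply Finset.sum_le_sum
        intro q hq
        obtain ⟨-, h1, h2, h3⟩ := Finset.mem_filter.1 hq
        refine (crEdges_prob n p hp0 hp1 q.1 q.2 h1 (c * n)).trans ?_
        apply Real.exp_le_exp.2
        have hnn : (0:ℝ) ≤ n := Nat.cast_nonneg n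
        have e1 : 3 / p * Real.log n * (ε / 2 * n) ≤ q.1.card * q.2.card :=
          mul_le_mul h2 h3 (by positivity) (by positivity)
        have e2 := mul_le_mul_of_nonneg_left e1 (show 0 ≤ p / 2 by positivity)
        have e3 : p / 2 * (3 / p * Real.log n * (ε / 2 * n)) = 3 / 4 * ε * Real.log n * n := by
          field_simp; ring
        have e4 := mul_le_mul_of_nonneg_right hl hnn
        linarith
    _ = P.card * Real.exp (-(3 * n)) := by simp
    _ ≤ Real.exp (2 * n) * Real.exp (-(3 * n)) := by
        gcongr
        exact hPc.trans h4e
    _ = _ := by rw [← Real.exp_add]; congr 1; ring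

lemma badB_bound (n : ℕ) (p : ℝ) (hp0 : 0 < p) (hp1 : p < 1) (hn : 1 ≤ n)
    (hl : 1 ≤ Real.log n) (hL : 2 ≤ 48 / p * Real.log n) :
    (erMeasure n p).real (badB n p) ≤ Real.exp 1 / n := by
  classical
  let P : Finset (Finset (Fin n)) := Finset.univ.filter (fun A => 48 / p * Real.log n ≤ A.card)
  have hn0 : (0 : ℝ) < n := by exact_mod_cast hn
  have hsub : badB n p ⊆ ⋃ A ∈ P,
      {ω | ((inEdges (graphOf ω) A).ncard : ℝ) ≤ p / 16 * (A.card : ℝ) ^ 2} := by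
    rintro ω ⟨A, h1, h4⟩
    rw [Set.mem_iUnion₂]
    exact ⟨A, Finset.mem_filter.2 ⟨Finset.mem_univ _, h1⟩, h4⟩
  calc _ ≤ _ := measureReal_mono hsub (measure_ne_top _ _)
    _ ≤ ∑ A ∈ P, (erMeasure n p).real
          {ω | ((inEdges (graphOf ω) A).ncard : ℝ) ≤ p / 16 * (A.card : ℝ) ^ 2} :=
        measureReal_biUnion_finset_le _ _
    _ ≤ ∑ A ∈ P, (n : ℝ)⁻¹ * ((n : ℝ)⁻¹) ^ A.card := by
        apply Finset.sum_le_sum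
        intro A hA
        have h1 := (Finset.mem_filter.1 hA).2
        refine (inEdges_prob n p hp0 hp1 A _).trans ?_
        rw [← pow_succ', inv_pow, ← Real.exp_log (pow_pos hn0 (A.card + 1)), ← Real.exp_neg,
          Real.log_pow]
        apply Real.exp_le_exp.2
        push_cast
        set a : ℝ := (A.card : ℝ) with ha
        have ha2 : 2 ≤ a := hL.trans h1
        have e1 : 48 * Real.log n ≤ p * a := by
          have := mul_le_mul_of_nonneg_left h1 hp0.le
          have e : p * (48 / p * Real.log n) = 48 * Real.log n := by field_simp
          linarith
        have e2 : p * a * a ≥ 48 * Real.log n * a :=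
          mul_le_mul_of_nonneg_right e1 (by linarith)
        have e3 : p * a * 2 ≤ p * a * a := mul_le_mul_of_nonneg_left ha2 (by positivity)
        have e4 : Real.log n * 2 ≤ Real.log n * a := mul_le_mul_of_nonneg_left ha2 (by linarith)
        nlinarith
    _ ≤ ∑ A : Finset (Fin n), (n : ℝ)⁻¹ * ((n : ℝ)⁻¹) ^ A.card := by
        apply Finset.sum_le_sum_of_subset_of_nonneg (Finset.subset_univ _)
        intros; positivity
    _ = (n : ℝ)⁻¹ * ((n : ℝ)⁻¹ + 1) ^ n := by
        rw [← Finset.mul_sum]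
        congr 1
        have := Fin.sum_pow_mul_eq_add_pow (n := n) ((n : ℝ)⁻¹) 1
        simpa using this
    _ ≤ (n : ℝ)⁻¹ * Real.exp 1 := by
        gcongr
        calc ((n : ℝ)⁻¹ + 1) ^ n ≤ (Real.exp ((n : ℝ)⁻¹)) ^ n :=
              pow_le_pow_left₀ (by positivity) (Real.add_one_le_exp _) _
          _ = Real.exp 1 := by rw [← Real.exp_nat_mul, mul_inv_cancel₀ hn0.ne']
    _ = _ := by ring

/-- For fixed `p ∈ (0,1)`, `c > 0`, `ε > 0`, there is a constant
`K` such that whp: for every induced subgraph `H = G(n,p)[S]` with `|S| ≥ εn`, and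
every spanning `F ≤ H` which is `C₄`-saturated in some spanning `H' ≤ H` obtained
by removing at most `cn` edges from `H`, (1) `F` has at most `⌊(3/p)·ln n⌋`
isolated vertices, and (2) the number of degree-1 vertices of `F` is at most
`K·(√|E(F)|·ln n + n/ln n)`. -/
theorem saturated_few_low_degree (p c ε : ℝ) (hp0 : 0 < p) (hp1 : p < 1)
    (hc : 0 < c) (hε : 0 < ε) :
    ∃ K : ℝ,
      Tendsto (fun n : ℕ =>
        erMeasure n p {ω |
          ∀ S : Set (Fin n), ε * n ≤ (S.ncard : ℝ) →
            ∀ F H' : SimpleGraph S,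
              H' ≤ (graphOf ω).induce S →
              (((((graphOf ω).induce S).edgeSet \ H'.edgeSet).ncard : ℝ) ≤ c * n) →
              IsSaturatedIn H' F (cycGraph 4) →
              ({v : S | ∀ w : S, ¬ F.Adj v w}.ncard ≤ ⌊(3 / p) * Real.log n⌋₊ ∧
               ({v : S | (F.neighborSet v).ncard = 1}.ncard : ℝ)
                 ≤ K * (Real.sqrt (F.edgeSet.ncard) * Real.log n
                          + n / Real.log n))})
        atTop (nhds 1) := by
  classical
  set δ : ℝ := p / 16 with hδ
  set C : ℝ := 48 / p with hC
  have hδ0 : 0 < δ := by positivity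
  have hC0 : 0 < C := by positivity
  refine ⟨c / (δ * C) + C * C + C * Real.sqrt (c / δ) + C * Real.sqrt (2 / δ), ?_⟩
  set good : (n : ℕ) → Set (EdgeType n → Bool) := fun n => {ω | _} with hgood
  change Tendsto (fun n : ℕ => erMeasure n p (good n)) atTop (nhds 1)
  have hlog : Tendsto (fun n : ℕ => Real.log n) atTop atTop :=
    Real.tendsto_log_atTop.comp tendsto_natCast_atTop_atTop
  have hlog4 : ∀ᶠ n : ℕ in atTop, Real.log n ^ 4 ≤ n := by
    have h := (isLittleO_pow_log_id_atTop (n := 4)).bound (c := 1) one_pos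
    filter_upwards [tendsto_natCast_atTop_atTop.eventually h] with n hn
    simp at hn
    rwa [abs_of_nonneg (by positivity)] at hn
  have hlog1 : ∀ᶠ n : ℕ in atTop, (3 / p) * Real.log n + 1 ≤ ε / 2 * n := by
    have h := (isLittleO_pow_log_id_atTop (n := 1)).bound (c := ε / 4 * (p / 3)) (by positivity)
    have h1 : ∀ᶠ n : ℕ in atTop, 4 / ε ≤ (n : ℝ) :=
      tendsto_natCast_atTop_atTop.eventually_ge_atTop _
    filter_upwards [tendsto_natCast_atTop_atTop.eventually h, h1] with n hn hn1
    simp only [pow_one, Real.norm_eq_abs, id] at hn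
    have hn := (le_abs_self _).trans hn
    rw [abs_of_nonneg (by positivity)] at hn
    have h2 : 3 / p * Real.log n ≤ 3 / p * (ε / 4 * (p / 3) * n) :=
      mul_le_mul_of_nonneg_left hn (by positivity)
    have h3 : 3 / p * (ε / 4 * (p / 3) * n) = ε / 4 * n := by field_simp
    have h4 : 1 ≤ ε / 4 * n := by
      rw [div_le_iff₀ hε] at hn1; linarith
    linarith
  have hev : ∀ᶠ n : ℕ in atTop,
      1 - (Real.exp (-(n : ℝ)) + Real.exp 1 / n) ≤ (erMeasure n p).real (good n) := by
    filter_upwards [hlog4, hlog1, hlog.eventually_ge_atTop 1, hlog.eventually_ge_atTop (2 / C),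
      hlog.eventually_ge_atTop ((c + 3) / (3 / 4 * ε)), eventually_ge_atTop 1]
      with n h4 h1 hl1 hlC hlc hn
    have hL2 : 2 ≤ C * Real.log n := by rw [div_le_iff₀ hC0] at hlC; linarith
    have hbA := badA_bound n p c ε hp0 hp1 hε (by
      rw [div_le_iff₀ (by positivity)] at hlc; linarith)
    have hbB := badB_bound n p hp0 hp1 hn hl1 hL2
    have hsub : (badA n p c ε ∪ badB n p)ᶜ ⊆ good n := by
      intro ω hω
      rw [Set.compl_union] at hω
      obtain ⟨hωA, hωB⟩ := hω
      have hA : ∀ I T : Finset (Fin n), Disjoint I T → 3 / p * Real.log n ≤ I.card →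
          ε / 2 * n ≤ T.card → c * n < ((crEdges (graphOf ω) I T).ncard : ℝ) := by
        intro I T q1 q2 q3
        by_contra q4
        exact hωA ⟨I, T, q1, q2, q3, not_lt.1 q4⟩
      have hB : ∀ A : Finset (Fin n), C * Real.log n ≤ A.card →
          δ * (A.card : ℝ) ^ 2 < ((inEdges (graphOf ω) A).ncard : ℝ) := by
        intro A q1
        by_contra q4
        exact hωB ⟨A, q1, not_lt.1 q4⟩
      intro S hS F H' hle hrem hsat
      haveI : Fintype S := Fintype.ofFinite S
      have hSc : (S.ncard : ℝ) = Fintype.card S := by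
        rw [← Nat.card_coe_set_eq, Nat.card_eq_fintype_card]
      constructor
      · have hfl := Nat.floor_le (show 0 ≤ 3 / p * Real.log n by positivity)
        apply isolated_bound ((graphOf ω).induce S) H' F _ (ε / 2 * n) (c * n) hrem hsat
        · rw [hSc] at hS; linarith
        · intro I T hd hI hT
          refine lt_of_lt_of_le (hA (I.map (Function.Embedding.subtype _))
            (T.map (Function.Embedding.subtype _)) ((Finset.disjoint_map _).2 hd) ?_ ?_)
            (Nat.cast_le.2 (crEdges_induce _ _ _ _))
          · rw [Finset.card_map, hI]; push_cast; exact (Nat.lt_floor_add_one _).le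
          · rw [Finset.card_map]; exact hT
      · have hb := leaf_bound ((graphOf ω).induce S) H' F (C * Real.log n) δ (c * n)
          (by positivity) hδ0 (by positivity) hrem hsat (by
            intro A hAc
            have := hB (A.map (Function.Embedding.subtype _)) (by rw [Finset.card_map]; exact hAc)
            rw [Finset.card_map] at this
            exact lt_of_lt_of_le this (Nat.cast_le.2 (inEdges_induce _ _ _)))
        refine hb.trans ?_
        have hnn : (0:ℝ) ≤ n := Nat.cast_nonneg n
        set l := Real.log n with hl
        have hl0 : 0 < l := by linarith
        have hs0 := Real.sqrt_nonneg (n : ℝ)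
        have hss := Real.sq_sqrt hnn
        have e1 : l * l ≤ n / l := by
          rw [le_div_iff₀ hl0]
          nlinarith [pow_le_pow_right₀ hl1 (show 3 ≤ 4 by norm_num)]
        have e2 : l * Real.sqrt n ≤ n / l := by
          rw [le_div_iff₀ hl0]
          have : l ^ 2 ≤ Real.sqrt n := Real.le_sqrt_of_sq_le (by rw [← pow_mul]; exact h4)
          nlinarith
        have e3 : Real.sqrt (c * n / δ) = Real.sqrt (c / δ) * Real.sqrt n := by
          rw [← Real.sqrt_mul (by positivity)]; congr 1; ring
        have e4 : c * n / (δ * (C * l)) = c / (δ * C) * (n / l) := by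
          field_simp
        rw [e3, e4]
        set E := Real.sqrt (F.edgeSet.ncard) with hE
        have hE0 : 0 ≤ E := Real.sqrt_nonneg _
        set s1 := Real.sqrt (c / δ) with hs1
        have hs10 : 0 ≤ s1 := Real.sqrt_nonneg _
        set s2 := Real.sqrt (2 / δ) with hs2
        have hs20 : 0 ≤ s2 := Real.sqrt_nonneg _
        have hq : 0 ≤ c / (δ * C) := by positivity
        have hnl : 0 ≤ n / l := by positivity
        have hEl : 0 ≤ E * l := by positivity
        have f1 := mul_le_mul_of_nonneg_left e1 (show 0 ≤ C * C by positivity)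
        have f2 := mul_le_mul_of_nonneg_left e2 (show 0 ≤ C * s1 by positivity)
        have f3 := mul_nonneg hq hEl
        have f4 := mul_nonneg (show 0 ≤ C * C by positivity) hEl
        have f5 := mul_nonneg (show 0 ≤ C * s1 by positivity) hEl
        have f6 := mul_nonneg (show 0 ≤ C * s2 by positivity) hnl
        linarith
    have hmeas : MeasurableSet (badA n p c ε ∪ badB n p) := (Set.toFinite _).measurableSet
    have h5 := measureReal_mono hsub (measure_ne_top (erMeasure n p) _)
    rw [probReal_compl_eq_one_sub hmeas] at h5
    have h6 := measureReal_union_le (μ := erMeasure n p) (badA n p c ε) (badB n p)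
    linarith
  have hreal : Tendsto (fun n : ℕ => (erMeasure n p).real (good n)) atTop (nhds 1) := by
    refine tendsto_of_tendsto_of_tendsto_of_le_of_le' ?_ tendsto_const_nhds hev
      (Eventually.of_forall fun n => measureReal_le_one)
    have t1 : Tendsto (fun n : ℕ => Real.exp (-(n : ℝ))) atTop (nhds 0) :=
      Real.tendsto_exp_neg_atTop_nhds_zero.comp tendsto_natCast_atTop_atTop
    have t2 : Tendsto (fun n : ℕ => Real.exp 1 / (n : ℝ)) atTop (nhds 0) :=
      tendsto_const_div_atTop_nhds_zero_nat _
    simpa using (tendsto_const_nhds (x := (1 : ℝ))).sub (t1.add t2)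
  have h := ENNReal.tendsto_ofReal hreal
  rw [ENNReal.ofReal_one] at h
  refine h.congr fun n => ?_
  rw [measureReal_def, ENNReal.ofReal_toReal (measure_ne_top _ _)]
end
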